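/- There exists a family of total Boolean functions f (one for each input size, with input size growing to infinity) such that R(f) = Ω̃(Q(f)^{2.5}), i.e., the bounded-error randomized query complexity of f is at least the 2.5-th power of its bounded-error quantum query complexity, up to factors polylogarithmic in the input size. -/

import Mathlib

open scoped BigOperators ENNReal

namespace QC

/-! ### Inputs and partial functions -/

/-- An input assigns to each index `i` a symbol from the alphabet `Fin (α i)`. -/
abbrev Input (ι : Type) (α : ι → ℕ) := ∀ i : ι, Fin (α i)

/-- A (possibly partial) Boolean-valued query function; `none` means the input
is outside the promise/domain. -/
abbrev PartialFn (ι : Type) (α : ι → ℕ) := Input ι α → Option Bool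

/-- A total function has every input in its domain. -/
def TotalFn {ι : Type} {α : ι → ℕ} (f : PartialFn ι α) : Prop := ∀ x, f x ≠ none

/-- Classical truth value of a proposition, as a `Bool`. -/
noncomputable def ofProp (P : Prop) : Bool := @decide P (Classical.propDecidable P)

/-! ### Decision trees and classical query complexity -/

/-- Decision trees over index set `ι` with alphabets `α` and leaf labels `L`. -/
inductive DTree (ι : Type) (α : ι → ℕ) (L : Type) : Type
  | leaf : L → DTree ι α L
  | node : (i : ι) → (Fin (α i) → DTree ι α L) → DTree ι α L

namespace DTree

variable {ι : Type} {α : ι → ℕ} {L : Type}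

/-- Evaluate a decision tree on an input. -/
def eval : DTree ι α L → Input ι α → L
  | leaf b, _ => b
  | node i child, x => eval (child (x i)) x

/-- The number of queries the tree makes on a given input. -/
def cost : DTree ι α L → Input ι α → ℕ
  | leaf _, _ => 0
  | node i child, x => cost (child (x i)) x + 1

/-- The depth (worst-case number of queries) of a decision tree. -/
def depth : DTree ι α L → ℕ
  | leaf _ => 0
  | node _ child => (Finset.univ.sup fun a => depth (child a)) + 1

end DTree

variable {ι : Type} {α : ι → ℕ}

/-- Deterministic query complexity `D(f)`. -/
noncomputable def Dq (f : PartialFn ι α) : ℕ :=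
  sInf {d | ∃ T : DTree ι α (Option Bool), T.depth ≤ d ∧
    ∀ x b, f x = some b → T.eval x = some b}

/-- Bounded-error randomized query complexity `R(f)` (worst-case queries,
success probability at least 2/3 on every domain input). -/
noncomputable def Rq (f : PartialFn ι α) : ℕ :=
  sInf {d | ∃ μ : PMF (DTree ι α (Option Bool)),
    (∀ T ∈ μ.support, T.depth ≤ d) ∧
    ∀ x b, f x = some b → 2/3 ≤ μ.toOuterMeasure {T | T.eval x = some b}}

/-- Zero-error randomized query complexity `R₀(f)` (worst-case queries): the
algorithm never errs, and outputs `none` ("don't know") with probability at most 1/2. -/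
noncomputable def R0q (f : PartialFn ι α) : ℕ :=
  sInf {d | ∃ μ : PMF (DTree ι α (Option Bool)),
    (∀ T ∈ μ.support, T.depth ≤ d) ∧
    (∀ T ∈ μ.support, ∀ x b, f x = some b → T.eval x = some b ∨ T.eval x = none) ∧
    ∀ x b, f x = some b → μ.toOuterMeasure {T | T.eval x = none} ≤ 1/2}

/-- Zero-error randomized query complexity, measured by the worst-case *expected*
number of queries over domain inputs (value in `ℝ≥0∞`). -/
noncomputable def R0expq (f : PartialFn ι α) : ℝ≥0∞ :=
  sInf {c | ∃ μ : PMF (DTree ι α (Option Bool)),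
    (∀ T ∈ μ.support, ∀ x b, f x = some b → T.eval x = some b ∨ T.eval x = none) ∧
    (∀ x b, f x = some b → μ.toOuterMeasure {T | T.eval x = none} ≤ 1/2) ∧
    (∀ x b, f x = some b → ∑' T, μ T * (T.cost x : ℝ≥0∞) ≤ c)}

/-- One-sided-error randomized query complexity `R₁(f)`: accept every 1-input with
probability at least 2/3, and never accept a 0-input. -/
noncomputable def R1q (f : PartialFn ι α) : ℕ :=
  sInf {d | ∃ μ : PMF (DTree ι α (Option Bool)),
    (∀ T ∈ μ.support, T.depth ≤ d) ∧
    (∀ x, f x = some true → 2/3 ≤ μ.toOuterMeasure {T | T.eval x = some true}) ∧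
    (∀ x, f x = some false → ∀ T ∈ μ.support, T.eval x ≠ some true)}

/-! ### Quantum query complexity -/

/-- The index set of the state space of a quantum query algorithm:
a query register `Σ i, Fin (α i)` together with a workspace register `Fin W`. -/
abbrev QIdx (ι : Type) (α : ι → ℕ) (W : ℕ) := (Σ i : ι, Fin (α i)) × Fin W

variable [Fintype ι] [DecidableEq ι]

/-- The standard query oracle for input `x`: the permutation matrix sending the basis
vector `|i,a⟩|w⟩` to `|i, a + x i⟩|w⟩` (addition modulo `α i`). -/
noncomputable def oracleMatrix (W : ℕ) (x : Input ι α) :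
    Matrix (QIdx ι α W) (QIdx ι α W) ℂ :=
  Matrix.of fun j j' =>
    if j.2 = j'.2 ∧ j.1 = ⟨j'.1.1, j'.1.2 + x j'.1.1⟩ then 1 else 0

/-- The product `U_T · O · U_{T-1} · O ⋯ O · U_0` of unitaries interleaved with oracle
calls, defining a `T`-query quantum algorithm. -/
noncomputable def qProd {τ : Type} [Fintype τ] (U : ℕ → Matrix τ τ ℂ) (Ox : Matrix τ τ ℂ) :
    ℕ → Matrix τ τ ℂ
  | 0 => U 0
  | t + 1 => U (t + 1) * Ox * qProd U Ox t

/-- A quantum query algorithm: a number `T` of queries, a workspace size `W`,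
unitaries `U 0, …, U T`, a unit initial state, and a measurement assigning to each
basis state an output in `Option Bool` (`none` = "don't know"). -/
structure QAlg (ι : Type) [Fintype ι] [DecidableEq ι] (α : ι → ℕ) where
  T : ℕ
  W : ℕ
  U : ℕ → Matrix (QIdx ι α W) (QIdx ι α W) ℂ
  unitary : ∀ t, U t ∈ Matrix.unitaryGroup (QIdx ι α W) ℂ
  init : QIdx ι α W → ℂ
  init_norm : ∑ j, ‖init j‖ ^ 2 = 1
  out : QIdx ι α W → Option Bool

/-- The final state of a quantum algorithm on input `x`. -/
noncomputable def QAlg.finalState (A : QAlg ι α) (x : Input ι α) : QIdx ι α A.W → ℂ :=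
  (qProd A.U (oracleMatrix A.W x) A.T).mulVec A.init

/-- The probability that the algorithm outputs `v` on input `x`. -/
noncomputable def QAlg.outProb (A : QAlg ι α) (x : Input ι α) (v : Option Bool) : ℝ :=
  ∑ j, if A.out j = v then ‖A.finalState x j‖ ^ 2 else 0

/-- Bounded-error quantum query complexity `Q(f)`. -/
noncomputable def Qq (f : PartialFn ι α) : ℕ :=
  sInf {d | ∃ A : QAlg ι α, A.T ≤ d ∧
    ∀ x b, f x = some b → (2 : ℝ)/3 ≤ A.outProb x (some b)}

/-- Exact quantum query complexity `Q_E(f)`. -/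
noncomputable def QEq (f : PartialFn ι α) : ℕ :=
  sInf {d | ∃ A : QAlg ι α, A.T ≤ d ∧
    ∀ x b, f x = some b → A.outProb x (some b) = 1}

/-- One-sided-error quantum query complexity `Q₁(f)`. -/
noncomputable def Q1q (f : PartialFn ι α) : ℕ :=
  sInf {d | ∃ A : QAlg ι α, A.T ≤ d ∧
    (∀ x, f x = some true → (2 : ℝ)/3 ≤ A.outProb x (some true)) ∧
    (∀ x, f x = some false → A.outProb x (some true) = 0)}

/-- Zero-error quantum query complexity `Q₀(f)`: never wrong, outputs `none`
with probability at most 1/2. -/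
noncomputable def Q0q (f : PartialFn ι α) : ℕ :=
  sInf {d | ∃ A : QAlg ι α, A.T ≤ d ∧
    ∀ x b, f x = some b → A.outProb x (some !b) = 0 ∧ A.outProb x none ≤ 1/2}

/-! ### Certificate complexity -/

/-- A partial assignment `ρ` is consistent with an input `x`. -/
def Consistent (ρ : ∀ i : ι, Option (Fin (α i))) (x : Input ι α) : Prop :=
  ∀ i v, ρ i = some v → x i = v

/-- The number of fixed positions of a partial assignment. -/
noncomputable def certSize (ρ : ∀ i : ι, Option (Fin (α i))) : ℕ :=
  Nat.card {i // (ρ i).isSome}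

/-- The certificate complexity of `f` at input `x`: the least size of a partial
assignment consistent with `x` forcing the value `f x` on all domain inputs. -/
noncomputable def CxAt (f : PartialFn ι α) (x : Input ι α) : ℕ :=
  sInf {s | ∃ ρ, Consistent ρ x ∧ (∀ y, Consistent ρ y → f y = none ∨ f y = f x) ∧
    certSize ρ ≤ s}

/-- Certificate complexity `C(f)`. -/
noncomputable def Cq (f : PartialFn ι α) : ℕ :=
  sSup {s | ∃ x, f x ≠ none ∧ s = CxAt f x}

/-- One-certificate complexity `C¹(f)`. -/
noncomputable def C1q (f : PartialFn ι α) : ℕ :=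
  sSup {s | ∃ x, f x = some true ∧ s = CxAt f x}

/-! ### Polynomial degree -/

/-- Exact polynomial degree `deg(f)`: least degree of a real polynomial agreeing
with `f` (as a 0/1 function of the numerical values of the input symbols) on its domain. -/
noncomputable def degq (f : PartialFn ι α) : ℕ :=
  sInf {d | ∃ p : MvPolynomial ι ℝ, p.totalDegree ≤ d ∧
    ∀ x b, f x = some b →
      MvPolynomial.eval (fun i => ((x i : ℕ) : ℝ)) p = if b then 1 else 0}

/-- Approximate polynomial degree `adeg(f)`: least degree of a real polynomial
approximating `f` pointwise to error 1/3 on its domain. -/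
noncomputable def adegq (f : PartialFn ι α) : ℕ :=
  sInf {d | ∃ p : MvPolynomial ι ℝ, p.totalDegree ≤ d ∧
    ∀ x b, f x = some b →
      |MvPolynomial.eval (fun i => ((x i : ℕ) : ℝ)) p - if b then 1 else 0| ≤ 1/3}

end QC
/-! ### Certifying functions and cheat sheets -/

namespace QC

variable {ι : Type} {α : ι → ℕ}

/-- `φ` is a certifying function for the partial function `f`: it accepts `(x, y)`
only when `x` is in the domain of `f` and the first bit of `y` equals `f x`; every
domain input has some accepted certificate `y`; and the all-zeros `y` is never accepted. -/
def IsCertifying {k : ℕ} (hk : 0 < k) (f : PartialFn ι α)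
    (φ : Input ι α → (Fin k → Fin 2) → Bool) : Prop :=
  (∀ x y, f x = none → φ x y = false) ∧
  (∀ x y b, f x = some b → y ⟨0, hk⟩ ≠ (if b then 1 else 0) → φ x y = false) ∧
  (∀ x b, f x = some b → ∃ y, φ x y = true) ∧
  (∀ x, φ x (fun _ => 0) = false)

/-- The index set of the input to a certifying function, viewed as a query function:
the original input together with `k` certificate bits. -/
abbrev CertIdx (ι : Type) (k : ℕ) := ι ⊕ Fin k

/-- Alphabets for `CertIdx`. -/
def certAlphabet (α : ι → ℕ) (k : ℕ) : CertIdx ι k → ℕ := Sum.elim α fun _ => 2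

/-- A certifying function viewed as a total query function on input ⊕ certificate bits. -/
def certFn {k : ℕ} (φ : Input ι α → (Fin k → Fin 2) → Bool) :
    PartialFn (CertIdx ι k) (certAlphabet α k) :=
  fun z => some (φ (fun i => z (Sum.inl i)) (fun q => z (Sum.inr q)))

/-- The index set of the input to the cheat sheet version of a function: `c` copies of
the original input, followed by `2^c` cells each holding `c` certificate strings of `k` bits. -/
abbrev CSIdx (ι : Type) (c k : ℕ) := (Fin c × ι) ⊕ (Fin (2 ^ c) × Fin c × Fin k)

/-- Alphabets for `CSIdx`. -/
def csAlphabet (α : ι → ℕ) (c k : ℕ) : CSIdx ι c k → ℕ :=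
  Sum.elim (fun p => α p.2) fun _ => 2

/-- The `i`-th copy of the original input inside a cheat sheet input. -/
def csX {c k : ℕ} (z : Input (CSIdx ι c k) (csAlphabet α c k)) (i : Fin c) : Input ι α :=
  fun p => z (Sum.inl (i, p))

/-- The `i`-th certificate string in the `ℓ`-th cheat sheet cell. -/
def csY {c k : ℕ} (z : Input (CSIdx ι c k) (csAlphabet α c k)) (ℓ : Fin (2 ^ c))
    (i : Fin c) : Fin k → Fin 2 :=
  fun q => z (Sum.inr (ℓ, i, q))

/-- The number in `[2^c]` whose binary representation is the bit string `b`. -/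
def binToFin (c : ℕ) (b : Fin c → Bool) : Fin (2 ^ c) :=
  ⟨(∑ i, if b i then 2 ^ (i : ℕ) else 0) % 2 ^ c, Nat.mod_lt _ (by positivity)⟩

/-- The defining condition of the cheat sheet function: all `c` copies lie in the
domain of `f`, and the cell addressed by their `f`-values holds certificates
accepted by `φ` for each copy. -/
def CSCond {c k : ℕ} (f : PartialFn ι α) (φ : Input ι α → (Fin k → Fin 2) → Bool)
    (z : Input (CSIdx ι c k) (csAlphabet α c k)) : Prop :=
  ∃ bvec : Fin c → Bool, (∀ i, f (csX z i) = some (bvec i)) ∧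
    ∀ i, φ (csX z i) (csY z (binToFin c bvec) i) = true

/-- The cheat sheet version of `f` with respect to the certifying function `φ`,
with `c` copies of `f`. It is a total function. -/
noncomputable def cheatSheet (c : ℕ) {k : ℕ} (f : PartialFn ι α)
    (φ : Input ι α → (Fin k → Fin 2) → Bool) :
    PartialFn (CSIdx ι c k) (csAlphabet α c k) :=
  fun z => some (ofProp (CSCond f φ z))

/-! ### OR / AND compositions -/

/-- The `OR` function on `m` bits (alphabet `Fin 2`). -/
def orFn (m : ℕ) (z : Fin m → Fin 2) : Fin 2 := if ∃ j, z j = 1 then 1 else 0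

/-- The `AND` function on `m` bits (alphabet `Fin 2`). -/
def andFn (m : ℕ) (z : Fin m → Fin 2) : Fin 2 := if ∀ j, z j = 1 then 1 else 0

/-- The composition `f ∘ OR_m`. -/
def composeOr {n : ℕ} (f : PartialFn (Fin n) fun _ => 2) (m : ℕ) :
    PartialFn (Fin n × Fin m) (fun _ => 2) :=
  fun z => f fun i => orFn m fun j => z (i, j)

/-- The composition `f ∘ AND_m ∘ OR_m`. -/
def composeAndOr {n : ℕ} (f : PartialFn (Fin n) fun _ => 2) (m : ℕ) :
    PartialFn (Fin n × Fin m × Fin m) (fun _ => 2) :=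
  fun z => f fun i => andFn m fun j => orFn m fun l => z (i, j, l)

/-! ### k-SUM, Block k-sum, BKK and its recursive composition -/

/-- The `k`-SUM function on `n` numbers from `[q]`: is there a set of `k` of the
input numbers summing to `0` modulo `q`? -/
noncomputable def kSUMfn (n q k : ℕ) : PartialFn (Fin n) (fun _ => q) :=
  fun x => some (ofProp (∃ S : Finset (Fin n), S.card = k ∧
    (∑ i ∈ S, (x i : ℕ)) % q = 0))

/-- Number of ones in a block of bits. -/
def onesCount {B : ℕ} (z : Fin B → Fin 2) : ℕ := (Finset.univ.filter fun j => z j = 1).card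

/-- The number encoded in binary by a block of bits. -/
def blockVal {B : ℕ} (z : Fin B → Fin 2) : ℕ := ∑ j, if z j = 1 then 2 ^ (j : ℕ) else 0

/-- A block is balanced if it has an equal number of 0s and 1s. -/
def isBalanced {B : ℕ} (z : Fin B → Fin 2) : Prop := 2 * onesCount z = B

/-- Block `k`-sum on `nb` blocks of `B` bits each: value 1 iff there are `k` balanced
blocks whose encoded numbers sum to 0 (mod `2^B`) and every other block has at least
as many 1s as 0s. -/
noncomputable def blockKSumBool (nb B k : ℕ) (z : Fin nb × Fin B → Fin 2) : Bool :=
  ofProp (∃ S : Finset (Fin nb), S.card = k ∧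
    (∀ i ∈ S, isBalanced fun j => z (i, j)) ∧
    (∑ i ∈ S, blockVal fun j => z (i, j)) % 2 ^ B = 0 ∧
    ∀ i ∉ S, B ≤ 2 * onesCount fun j => z (i, j))

/-- The Boolean version of `k`-SUM on `m` numbers of `w` bits each (mod `2^w`). -/
noncomputable def kSumBool (m w k : ℕ) (z : Fin m × Fin w → Fin 2) : Bool :=
  ofProp (∃ S : Finset (Fin m), S.card = k ∧
    (∑ i ∈ S, blockVal fun j => z (i, j)) % 2 ^ w = 0)

/-- Block size of the outer Block `k`-sum in `BKK` on (roughly) `n` outer bits. -/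
def bkkB (n k : ℕ) : ℕ := 10 * k * Nat.log 2 n
/-- Number of blocks of the outer Block `k`-sum in `BKK`. -/
def bkkNB (n k : ℕ) : ℕ := n / bkkB n k
/-- Bits per number of the inner Boolean `k`-SUM in `BKK`. -/
def bkkW (n k : ℕ) : ℕ := k * Nat.log 2 n
/-- Number of numbers of the inner Boolean `k`-SUM in `BKK`. -/
def bkkM (n k : ℕ) : ℕ := n / bkkW n k

/-- The index set of the inputs of `BKK_{n²,k}` (one inner `k`-SUM input bit for
each outer Block `k`-sum input bit; roughly `n²` bits in total). -/
abbrev BKKIdx (n k : ℕ) := (Fin (bkkNB n k) × Fin (bkkB n k)) × (Fin (bkkM n k) × Fin (bkkW n k))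

/-- `BKK_{n²,k}`: Block `k`-sum composed with the Boolean version of `k`-SUM. -/
noncomputable def bkkBool (n k : ℕ) (z : BKKIdx n k → Fin 2) : Bool :=
  blockKSumBool (bkkNB n k) (bkkB n k) k fun ob =>
    if kSumBool (bkkM n k) (bkkW n k) k (fun p => z (ob, p)) then 1 else 0

/-- `BKK_{n²,k}` as a total query function. -/
noncomputable def BKKfn (n k : ℕ) : PartialFn (BKKIdx n k) (fun _ => 2) :=
  fun z => some (bkkBool n k z)

/-- The `d`-fold self-composition of a total Boolean function `g`: a depth-`d` tree
each of whose internal nodes is a copy of `g`; input bits are indexed by root-to-leaf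
paths `Fin d → I`. -/
noncomputable def iterFn {I : Type} (g : (I → Fin 2) → Bool) :
    (d : ℕ) → ((Fin d → I) → Fin 2) → Bool
  | 0, z => decide (z (fun i => i.elim0) = 1)
  | d + 1, z => g fun a => if iterFn g d (fun v => z (Fin.cons a v)) then 1 else 0

/-- The recursion depth used for `RecBKK`: `d = (4/25)·log n / log log n`. -/
def recD (n : ℕ) : ℕ := 4 * Nat.log 2 n / (25 * Nat.log 2 (Nat.log 2 n))

/-- The index set of the inputs of `RecBKK`. -/
abbrev RecIdx (n : ℕ) := Fin (recD n) → BKKIdx n (Nat.log 2 n)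

/-- `RecBKK`: the `recD n`-fold self-composition of `BKK` with `k = log n`. -/
noncomputable def RecBKKfn (n : ℕ) : PartialFn (RecIdx n) (fun _ => 2) :=
  fun z => some (iterFn (bkkBool n (Nat.log 2 n)) (recD n) z)

/-- The nominal input size `N = n^{2d}` of `RecBKK`. -/
def recN (n : ℕ) : ℕ := n ^ (2 * recD n)

end QC

namespace QC
open Matrix

section Conversion

set_option linter.unusedSectionVars false

variable {n : ℕ} {S : Type} [Fintype S] [DecidableEq S]

/-- The Hadamard transform of the answer register. -/
noncomputable def hadamardAnswer (n : ℕ) (S : Type) [DecidableEq S] :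
    Matrix ((Fin n × Fin 2) × S) ((Fin n × Fin 2) × S) ℝ :=
  Matrix.of fun j j' => if j.1.1 = j'.1.1 ∧ j.2 = j'.2 then
    (if j.1.2 = 1 ∧ j'.1.2 = 1 then -1 else 1) * (√2)⁻¹ else 0

/-- The sign picked up by a basis state under the phase oracle. -/
def phaseSign (x : Fin n → Fin 2) (q : Fin n × Fin 2) : ℝ :=
  if q.2 = 1 ∧ x q.1 = 1 then -1 else 1

/-- The phase oracle. -/
noncomputable def phaseOracle (S : Type) [DecidableEq S] (x : Fin n → Fin 2) :
    Matrix ((Fin n × Fin 2) × S) ((Fin n × Fin 2) × S) ℝ :=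
  Matrix.diagonal fun j => phaseSign x j.1

/-- The bit-flip oracle over the reals. -/
noncomputable def flipOracle (S : Type) [DecidableEq S] (x : Fin n → Fin 2) :
    Matrix ((Fin n × Fin 2) × S) ((Fin n × Fin 2) × S) ℝ :=
  Matrix.of fun j j' => if j.2 = j'.2 ∧ j.1 = (j'.1.1, j'.1.2 + x j'.1.1) then 1 else 0

lemma hadamardAnswer_mulVec (ψ : (Fin n × Fin 2) × S → ℝ) (i : Fin n) (a : Fin 2) (s : S) :
    (hadamardAnswer n S *ᵥ ψ) ((i, a), s) =
      (√2)⁻¹ * (ψ ((i, 0), s) + (if a = 1 then -1 else 1) * ψ ((i, 1), s)) := by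
  simp only [hadamardAnswer, mulVec, dotProduct, Matrix.of_apply, Fintype.sum_prod_type,
    Fin.sum_univ_two, ite_and, ite_mul, zero_mul]
  simp [Finset.sum_add_distrib]
  split_ifs <;> ring

lemma phaseOracle_mulVec (x : Fin n → Fin 2) (ψ : (Fin n × Fin 2) × S → ℝ)
    (j : (Fin n × Fin 2) × S) : (phaseOracle S x *ᵥ ψ) j = phaseSign x j.1 * ψ j := by
  simp [phaseOracle, Matrix.mulVec_diagonal]

lemma flipOracle_mulVec (x : Fin n → Fin 2) (ψ : (Fin n × Fin 2) × S → ℝ)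
    (i : Fin n) (a : Fin 2) (s : S) :
    (flipOracle S x *ᵥ ψ) ((i, a), s) = ψ ((i, a + x i), s) := by
  have key : ∀ j' : (Fin n × Fin 2) × S, (s = j'.2 ∧ (i, a) = (j'.1.1, j'.1.2 + x j'.1.1)) ↔
      j' = ((i, a + x i), s) := by
    rintro ⟨⟨i', a'⟩, s'⟩
    simp only [Prod.mk.injEq]
    constructor
    · rintro ⟨rfl, rfl, rfl⟩
      refine ⟨⟨rfl, ?_⟩, rfl⟩
      generalize x i = b
      revert a' b; decide
    · rintro ⟨⟨rfl, rfl⟩, rfl⟩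
      refine ⟨rfl, rfl, ?_⟩
      generalize x i' = b
      revert a b; decide
  simp only [flipOracle, mulVec, dotProduct, Matrix.of_apply, key]
  simp

lemma sqrt_two_inv_mul_self : (√2 : ℝ)⁻¹ * (√2)⁻¹ = 1 / 2 := by
  rw [← mul_inv, Real.mul_self_sqrt (by norm_num)]; norm_num

lemma hadamardAnswer_mul_self : hadamardAnswer n S * hadamardAnswer n S = 1 := by
  apply Matrix.toLin'.injective
  ext1 ψ0
  ext1
  ext ⟨⟨i, a⟩, s⟩
  simp only [LinearMap.comp_apply, Matrix.toLin'_apply, ← Matrix.mulVec_mulVec, one_mulVec]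
  generalize LinearMap.single ℝ (fun _ => ℝ) ψ0 1 = ψ
  simp only [hadamardAnswer_mulVec]
  fin_cases a
  · simp
    linear_combination (2 * ψ ((i, 0), s)) * sqrt_two_inv_mul_self
  · simp
    linear_combination (2 * ψ ((i, 1), s)) * sqrt_two_inv_mul_self

lemma flipOracle_mul_hadamardAnswer (x : Fin n → Fin 2) :
    flipOracle S x * hadamardAnswer n S = hadamardAnswer n S * phaseOracle S x := by
  apply Matrix.toLin'.injective
  ext1 ψ0
  ext1
  ext ⟨⟨i, a⟩, s⟩
  simp only [LinearMap.comp_apply, Matrix.toLin'_apply, ← Matrix.mulVec_mulVec]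
  generalize LinearMap.single ℝ (fun _ => ℝ) ψ0 1 = ψ
  simp only [hadamardAnswer_mulVec, flipOracle_mulVec, phaseOracle_mulVec, phaseSign]
  generalize x i = b
  fin_cases a <;> fin_cases b <;> simp

lemma hadamardAnswer_transpose : (hadamardAnswer n S)ᵀ = hadamardAnswer n S := by
  ext j j'
  simp only [hadamardAnswer, transpose_apply, Matrix.of_apply, eq_comm (a := j.1.1),
    eq_comm (a := j.2), and_comm (a := j.1.2 = 1)]

/-- The basis of the query model as query register times workspace. -/
noncomputable def qIdxEquiv (n : ℕ) (S : Type) [Fintype S] :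
    QIdx (Fin n) (fun _ => 2) (Fintype.card S) ≃ (Fin n × Fin 2) × S :=
  (Equiv.sigmaEquivProd (Fin n) (Fin 2)).prodCongr (Fintype.equivFin S).symm

/-- Transport of a real matrix to a complex matrix on the basis of the query model. -/
noncomputable def toQ (M : Matrix ((Fin n × Fin 2) × S) ((Fin n × Fin 2) × S) ℝ) :
    Matrix (QIdx (Fin n) (fun _ => 2) (Fintype.card S))
      (QIdx (Fin n) (fun _ => 2) (Fintype.card S)) ℂ :=
  (M.submatrix (qIdxEquiv n S) (qIdxEquiv n S)).map Complex.ofReal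

lemma toQ_mulVec (M : Matrix ((Fin n × Fin 2) × S) ((Fin n × Fin 2) × S) ℝ)
    (ψ : (Fin n × Fin 2) × S → ℝ) :
    toQ M *ᵥ (fun j => (ψ (qIdxEquiv n S j) : ℂ)) =
      fun j => (((M *ᵥ ψ) (qIdxEquiv n S j) : ℝ) : ℂ) := by
  ext j
  simp only [toQ, mulVec, dotProduct, Matrix.map_apply, submatrix_apply, Complex.ofReal_sum,
    Complex.ofReal_mul]
  exact (qIdxEquiv n S).sum_comp fun j' => (M (qIdxEquiv n S j) j' : ℂ) * (ψ j' : ℂ)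

lemma toQ_mem_unitaryGroup {M : Matrix ((Fin n × Fin 2) × S) ((Fin n × Fin 2) × S) ℝ}
    (hM : M * Mᵀ = 1) : toQ M ∈ Matrix.unitaryGroup _ ℂ := by
  rw [Matrix.mem_unitaryGroup_iff]
  ext j j'
  have h := congrFun (congrFun hM (qIdxEquiv n S j)) (qIdxEquiv n S j')
  simp only [Matrix.mul_apply, transpose_apply] at h
  simp only [Matrix.mul_apply, star_apply, toQ, Matrix.map_apply, submatrix_apply]
  simp only [RCLike.star_def, Complex.conj_ofReal]
  rw [(qIdxEquiv n S).sum_comp fun i => (M (qIdxEquiv n S j) i : ℂ) * (M (qIdxEquiv n S j') i : ℂ)]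
  have h2 := congrArg (fun r : ℝ => (r : ℂ)) h
  simp only [Complex.ofReal_sum, Complex.ofReal_mul] at h2
  rw [h2]
  by_cases hj : j = j'
  · subst hj; simp
  · rw [Matrix.one_apply_ne hj, Matrix.one_apply_ne (fun h => hj ((qIdxEquiv n S).injective h))]
    simp

lemma oracleMatrix_eq_toQ (x : Input (Fin n) fun _ => 2) :
    oracleMatrix (Fintype.card S) x = toQ (flipOracle S x) := by
  ext ⟨⟨i, a⟩, w⟩ ⟨⟨i', a'⟩, w'⟩
  simp only [oracleMatrix, toQ, flipOracle, Matrix.of_apply, Matrix.map_apply, submatrix_apply,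
    qIdxEquiv, Equiv.prodCongr_apply, Prod.map, Equiv.sigmaEquivProd_apply,
    EmbeddingLike.apply_eq_iff_eq]
  by_cases h : i = i'
  · subst h
    simp only [Sigma.mk.injEq, heq_eq_eq, true_and, Prod.mk.injEq]
    split_ifs <;> simp
  · simp [h]

/-- The state of a phase-oracle algorithm after `t` steps. -/
noncomputable def phaseState (M : ℕ → Matrix ((Fin n × Fin 2) × S) ((Fin n × Fin 2) × S) ℝ)
    (ψ : (Fin n × Fin 2) × S → ℝ) (x : Fin n → Fin 2) : ℕ → (Fin n × Fin 2) × S → ℝ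
  | 0 => ψ
  | t + 1 => M t *ᵥ (phaseOracle S x *ᵥ phaseState M ψ x t)

lemma sum_sq_hadamardAnswer (ψ : (Fin n × Fin 2) × S → ℝ) (s : S) :
    ∑ q, (hadamardAnswer n S *ᵥ ψ) (q, s) ^ 2 = ∑ q, ψ (q, s) ^ 2 := by
  simp only [Fintype.sum_prod_type, Fin.sum_univ_two, hadamardAnswer_mulVec]
  refine Finset.sum_congr rfl fun i _ => ?_
  simp
  linear_combination (2 * ψ ((i, 0), s) ^ 2 + 2 * ψ ((i, 1), s) ^ 2) * sqrt_two_inv_mul_self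

/-- A phase-oracle algorithm with real orthogonal steps is a quantum query algorithm. -/
theorem exists_qAlg_of_phaseState (f : PartialFn (Fin n) fun _ => 2) (T : ℕ)
    (M : ℕ → Matrix ((Fin n × Fin 2) × S) ((Fin n × Fin 2) × S) ℝ)
    (hM : ∀ t, M t * (M t)ᵀ = 1) (ψ : (Fin n × Fin 2) × S → ℝ) (hψ : ∑ j, ψ j ^ 2 = 1)
    (out : S → Bool)
    (hf : ∀ x b, f x = some b → 2 / 3 ≤
      ∑ s, if out s = b then ∑ q, phaseState M ψ x T (q, s) ^ 2 else 0) :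
    ∃ A : QAlg (Fin n) (fun _ => 2), A.T ≤ T ∧
      ∀ x b, f x = some b → (2 : ℝ) / 3 ≤ A.outProb x (some b) := by
  have hH := hadamardAnswer_mul_self (n := n) (S := S)
  let U : ℕ → Matrix ((Fin n × Fin 2) × S) ((Fin n × Fin 2) × S) ℝ := fun t =>
    match t with
    | 0 => hadamardAnswer n S
    | t + 1 => hadamardAnswer n S * M t * hadamardAnswer n S
  have hU : ∀ t, U t * (U t)ᵀ = 1 := by
    rintro (_ | t)
    · simp only [U, hadamardAnswer_transpose, hH]
    · simp only [U, Matrix.transpose_mul, hadamardAnswer_transpose]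
      calc hadamardAnswer n S * M t * hadamardAnswer n S *
            (hadamardAnswer n S * ((M t)ᵀ * hadamardAnswer n S))
          = hadamardAnswer n S * (M t * (hadamardAnswer n S * hadamardAnswer n S) * (M t)ᵀ) *
            hadamardAnswer n S := by simp only [Matrix.mul_assoc]
        _ = 1 := by rw [hH, Matrix.mul_one, hM, Matrix.mul_one, hH]
  let A : QAlg (Fin n) (fun _ => 2) :=
    { T := T
      W := Fintype.card S
      U := fun t => toQ (U t)
      unitary := fun t => toQ_mem_unitaryGroup (hU t)
      init := fun j => (ψ (qIdxEquiv n S j) : ℂ)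
      init_norm := by
        simp only [Complex.norm_real, Real.norm_eq_abs, sq_abs]
        rw [← hψ]
        exact (qIdxEquiv n S).sum_comp fun j => ψ j ^ 2
      out := fun j => some (out (qIdxEquiv n S j).2) }
  have hstate : ∀ x t, (qProd (fun t => toQ (U t)) (oracleMatrix (Fintype.card S) x) t).mulVec
      (fun j => (ψ (qIdxEquiv n S j) : ℂ)) =
      fun j => (((hadamardAnswer n S *ᵥ phaseState M ψ x t) (qIdxEquiv n S j) : ℝ) : ℂ) := by
    intro x t
    induction t with
    | zero => simp only [qProd, U, toQ_mulVec, phaseState]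
    | succ t ih =>
      rw [qProd, ← Matrix.mulVec_mulVec, ← Matrix.mulVec_mulVec, ih, oracleMatrix_eq_toQ,
        toQ_mulVec, toQ_mulVec]
      have h : U (t + 1) *ᵥ (flipOracle S x *ᵥ (hadamardAnswer n S *ᵥ phaseState M ψ x t)) =
          hadamardAnswer n S *ᵥ phaseState M ψ x (t + 1) := by
        rw [Matrix.mulVec_mulVec _ (flipOracle S x), flipOracle_mul_hadamardAnswer, phaseState,
          Matrix.mulVec_mulVec, Matrix.mulVec_mulVec, Matrix.mulVec_mulVec]
        congr 1
        calc hadamardAnswer n S * M t * hadamardAnswer n S * (hadamardAnswer n S * phaseOracle S x)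
            = hadamardAnswer n S * M t * (hadamardAnswer n S * hadamardAnswer n S) *
              phaseOracle S x := by simp only [Matrix.mul_assoc]
          _ = hadamardAnswer n S * M t * phaseOracle S x := by rw [hH, Matrix.mul_one]
      rw [h]
  refine ⟨A, le_rfl, fun x b hb => ?_⟩
  refine (hf x b hb).trans (le_of_eq ?_)
  simp only [QAlg.outProb, QAlg.finalState, A]
  rw [hstate]
  simp only [Complex.norm_real, Real.norm_eq_abs, sq_abs, Option.some.injEq]
  rw [(qIdxEquiv n S).sum_comp fun j => if out j.2 = b then
    ((hadamardAnswer n S *ᵥ phaseState M ψ x T) j) ^ 2 else 0]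
  rw [Fintype.sum_prod_type_right]
  refine Finset.sum_congr rfl fun s _ => ?_
  split_ifs
  · exact (sum_sq_hadamardAnswer _ _).symm
  · simp

end Conversion
end QC

namespace QC
open Matrix

section Orthogonal

variable {E : Type} [Fintype E] [DecidableEq E]

/-- A linear isometry of Euclidean space is given by an orthogonal matrix. -/
lemma exists_orthogonal_matrix (L : EuclideanSpace ℝ E ≃ₗᵢ[ℝ] EuclideanSpace ℝ E) :
    ∃ M : Matrix E E ℝ, M * Mᵀ = 1 ∧ ∀ v, M *ᵥ v = (L (WithLp.toLp 2 v)).ofLp := by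
  let g : (E → ℝ) →ₗ[ℝ] (E → ℝ) :=
    (WithLp.linearEquiv 2 ℝ (E → ℝ)).toLinearMap ∘ₗ L.toLinearEquiv.toLinearMap ∘ₗ
      (WithLp.linearEquiv 2 ℝ (E → ℝ)).symm.toLinearMap
  have hg : ∀ v, LinearMap.toMatrix' g *ᵥ v = (L (WithLp.toLp 2 v)).ofLp := by
    intro v
    rw [← Matrix.toLin'_apply, Matrix.toLin'_toMatrix']
    rfl
  refine ⟨LinearMap.toMatrix' g, ?_, hg⟩
  rw [mul_eq_one_comm]
  ext i j
  have h := L.inner_map_map (WithLp.toLp 2 (Pi.single i 1)) (WithLp.toLp 2 (Pi.single j 1))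
  simp only [PiLp.inner_apply, RCLike.inner_apply, conj_trivial, ← hg] at h
  simp only [Matrix.mul_apply, transpose_apply]
  simp only [Matrix.mulVec_single_one, Matrix.col_apply] at h
  rw [Finset.sum_congr rfl fun k _ => mul_comm _ _, h]
  simp [Matrix.one_apply, Pi.single_apply, eq_comm]

/-- The reflection through the span of a family of vectors. -/
lemma exists_reflection_matrix {A : Type} (P : A → Prop) (φ : A → E → ℝ) :
    ∃ R : Matrix E E ℝ, R * Rᵀ = 1 ∧ (∀ y, P y → R *ᵥ φ y = φ y) ∧
      ∀ w, (∀ y, P y → w ⬝ᵥ φ y = 0) → R *ᵥ w = -w := by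
  let K : Submodule ℝ (EuclideanSpace ℝ E) :=
    Submodule.span ℝ {v | ∃ y, P y ∧ v = WithLp.toLp 2 (φ y)}
  obtain ⟨R, hR, hR'⟩ := exists_orthogonal_matrix K.reflection
  refine ⟨R, hR, fun y hy => ?_, fun w hw => ?_⟩
  · rw [hR', Submodule.reflection_mem_subspace_eq_self]
    exact Submodule.subset_span ⟨y, hy, rfl⟩
  · rw [hR', Submodule.reflection_mem_subspace_orthogonalComplement_eq_neg]
    · rfl
    · rw [Submodule.mem_orthogonal]
      intro u hu
      induction hu using Submodule.span_induction with
      | mem u hu =>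
        obtain ⟨y, hy, rfl⟩ := hu
        have := hw y hy
        simpa [PiLp.inner_apply, dotProduct] using this
      | zero => simp
      | add u v _ _ hu hv => rw [inner_add_left, hu, hv, add_zero]
      | smul c u _ hu => rw [inner_smul_left, hu, mul_zero]

/-- Some orthogonal matrix has a prescribed unit vector as a row. -/
lemma exists_orthogonal_matrix_row (e : E) (u : E → ℝ) (hu : ∑ i, u i ^ 2 = 1) :
    ∃ M : Matrix E E ℝ, M * Mᵀ = 1 ∧ ∀ i, M e i = u i := by
  have hn : ‖(WithLp.toLp 2 u : EuclideanSpace ℝ E)‖ =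
      ‖(WithLp.toLp 2 (Pi.single e 1) : EuclideanSpace ℝ E)‖ := by
    rw [EuclideanSpace.norm_eq, EuclideanSpace.norm_eq]
    simp [hu, Pi.single_apply]
  obtain ⟨M, hM, hM'⟩ := exists_orthogonal_matrix
    (ℝ ∙ ((WithLp.toLp 2 u : EuclideanSpace ℝ E) - WithLp.toLp 2 (Pi.single e 1)))ᗮ.reflection
  refine ⟨M, hM, fun i => ?_⟩
  have h := hM' u
  rw [Submodule.reflection_sub hn] at h
  have h2 : Mᵀ *ᵥ (M *ᵥ u) = u := by
    rw [Matrix.mulVec_mulVec, mul_eq_one_comm.mp hM, one_mulVec]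
  rw [h] at h2
  simp only at h2
  rw [← h2]
  simp

lemma dotProduct_mulVec_mulVec {U : Matrix E E ℝ} (hU : U * Uᵀ = 1) (v w : E → ℝ) :
    (U *ᵥ v) ⬝ᵥ (U *ᵥ w) = v ⬝ᵥ w := by
  rw [Matrix.dotProduct_mulVec, Matrix.vecMul_mulVec, ← Matrix.mulVec_transpose,
    Matrix.transpose_mul, Matrix.transpose_transpose, mul_eq_one_comm.mp hU, one_mulVec]

lemma pow_mul_transpose {U : Matrix E E ℝ} (hU : U * Uᵀ = 1) (t : ℕ) :
    U ^ t * (U ^ t)ᵀ = 1 := by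
  rw [Matrix.transpose_pow, ← Commute.mul_pow, hU, one_pow]
  rw [Commute, SemiconjBy, hU, mul_eq_one_comm.mp hU]

/-- The average of the first `T` iterates of a vector. -/
noncomputable def iterAvg (U : Matrix E E ℝ) (T : ℕ) (e : E → ℝ) : E → ℝ :=
  (T : ℝ)⁻¹ • ∑ t ∈ Finset.range T, (U ^ t) *ᵥ e

lemma two_thirds_le_iterAvg {U : Matrix E E ℝ} (hU : U * Uᵀ = 1) {T : ℕ} (hT : 0 < T)
    {e φ : E → ℝ} (hφ : U *ᵥ φ = φ) (he : e ⬝ᵥ φ = 1) (hn : φ ⬝ᵥ φ ≤ 3 / 2) :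
    2 / 3 ≤ iterAvg U T e ⬝ᵥ iterAvg U T e := by
  have hφt : ∀ t, (U ^ t) *ᵥ φ = φ := by
    intro t
    induction t with
    | zero => simp
    | succ t ih => rw [pow_succ, ← Matrix.mulVec_mulVec, hφ, ih]
  have h1 : iterAvg U T e ⬝ᵥ φ = 1 := by
    rw [iterAvg, smul_dotProduct, sum_dotProduct]
    have : ∀ t ∈ Finset.range T, ((U ^ t) *ᵥ e) ⬝ᵥ φ = 1 := by
      intro t _
      conv_lhs => rw [← hφt t]
      rw [dotProduct_mulVec_mulVec (pow_mul_transpose hU t), he]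
    rw [Finset.sum_congr rfl this]
    have : (T : ℝ) ≠ 0 := by positivity
    simp [this]
  have h2 : (iterAvg U T e ⬝ᵥ φ) ^ 2 ≤ (iterAvg U T e ⬝ᵥ iterAvg U T e) * (φ ⬝ᵥ φ) := by
    simp only [dotProduct, ← pow_two]
    exact Finset.sum_mul_sq_le_sq_mul_sq _ _ _
  rw [h1] at h2
  have h3 : 0 ≤ iterAvg U T e ⬝ᵥ iterAvg U T e := by
    simp only [dotProduct]
    exact Finset.sum_nonneg fun i _ => mul_self_nonneg _
  nlinarith

lemma iterAvg_le {U : Matrix E E ℝ} (hU : U * Uᵀ = 1) {T : ℕ} (hT : 0 < T)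
    {e w a : E → ℝ} (he : e = (1 / 2 : ℝ) • (U *ᵥ w - w) + a)
    (hw : w ⬝ᵥ w ≤ (T : ℝ) ^ 2 / 100) (ha : a ⬝ᵥ a ≤ 1 / 100) :
    iterAvg U T e ⬝ᵥ iterAvg U T e ≤ 1 / 3 := by
  have hT' : (0 : ℝ) < T := by positivity
  have h1 : iterAvg U T e = (1 / (2 * T) : ℝ) • ((U ^ T) *ᵥ w) - (1 / (2 * T) : ℝ) • w +
      iterAvg U T a := by
    have hs : ∀ t, (U ^ t) *ᵥ e = (1 / 2 : ℝ) • ((U ^ (t + 1)) *ᵥ w - (U ^ t) *ᵥ w) +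
        (U ^ t) *ᵥ a := by
      intro t
      rw [he, Matrix.mulVec_add, Matrix.mulVec_smul, Matrix.mulVec_sub, Matrix.mulVec_mulVec,
        ← pow_succ]
    simp only [iterAvg, hs, Finset.sum_add_distrib, ← Finset.smul_sum]
    rw [Finset.sum_range_sub (fun t => (U ^ t) *ᵥ w)]
    rw [smul_add, smul_smul, pow_zero, one_mulVec, ← smul_sub]
    congr 2
    field_simp
  have h2 : ∀ v : E → ℝ, ((U ^ T) *ᵥ v) ⬝ᵥ ((U ^ T) *ᵥ v) = v ⬝ᵥ v := fun v =>
    dotProduct_mulVec_mulVec (pow_mul_transpose hU T) v v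
  have h3 : iterAvg U T a ⬝ᵥ iterAvg U T a ≤ 1 / 100 := by
    have h4 : ∀ i, iterAvg U T a i * iterAvg U T a i ≤
        (T : ℝ)⁻¹ * ∑ t ∈ Finset.range T, ((U ^ t) *ᵥ a) i * ((U ^ t) *ᵥ a) i := by
      intro i
      simp only [iterAvg, Pi.smul_apply, Finset.sum_apply, smul_eq_mul, ← pow_two]
      have h5 := sq_sum_le_card_mul_sum_sq (s := Finset.range T)
        (f := fun t => ((U ^ t) *ᵥ a) i)
      rw [Finset.card_range] at h5
      rw [mul_pow]
      calc (T : ℝ)⁻¹ ^ 2 * (∑ t ∈ Finset.range T, ((U ^ t) *ᵥ a) i) ^ 2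
          ≤ (T : ℝ)⁻¹ ^ 2 * (T * ∑ t ∈ Finset.range T, ((U ^ t) *ᵥ a) i ^ 2) := by gcongr
        _ = _ := by field_simp
    calc iterAvg U T a ⬝ᵥ iterAvg U T a
        ≤ ∑ i, (T : ℝ)⁻¹ * ∑ t ∈ Finset.range T, ((U ^ t) *ᵥ a) i * ((U ^ t) *ᵥ a) i :=
          Finset.sum_le_sum fun i _ => h4 i
      _ = (T : ℝ)⁻¹ * ∑ t ∈ Finset.range T, ((U ^ t) *ᵥ a) ⬝ᵥ ((U ^ t) *ᵥ a) := by
          rw [← Finset.mul_sum, Finset.sum_comm]; rfl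
      _ = a ⬝ᵥ a := by
          rw [Finset.sum_congr rfl fun t _ =>
            dotProduct_mulVec_mulVec (pow_mul_transpose hU t) a a]
          simp; field_simp
      _ ≤ 1 / 100 := ha
  have h4 : iterAvg U T e ⬝ᵥ iterAvg U T e ≤
      3 * ((1 / (2 * T) : ℝ) ^ 2 * (((U ^ T) *ᵥ w) ⬝ᵥ ((U ^ T) *ᵥ w)) +
        (1 / (2 * T) : ℝ) ^ 2 * (w ⬝ᵥ w) + iterAvg U T a ⬝ᵥ iterAvg U T a) := by
    rw [h1]
    simp only [dotProduct, Finset.mul_sum, ← Finset.sum_add_distrib]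
    refine Finset.sum_le_sum fun i _ => ?_
    simp only [Pi.add_apply, Pi.sub_apply, Pi.smul_apply, smul_eq_mul]
    set p := (1 / (2 * T) : ℝ) * ((U ^ T) *ᵥ w) i with hp
    set q := (1 / (2 * T) : ℝ) * w i with hq
    have e1 : (1 / (2 * T) : ℝ) ^ 2 * (((U ^ T) *ᵥ w) i * ((U ^ T) *ᵥ w) i) = p ^ 2 := by
      rw [hp]; ring
    have e2 : (1 / (2 * T) : ℝ) ^ 2 * (w i * w i) = q ^ 2 := by rw [hq]; ring
    rw [e1, e2]
    nlinarith [sq_nonneg (p + q), sq_nonneg (q + iterAvg U T a i), sq_nonneg (p - iterAvg U T a i)]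
  rw [h2] at h4
  have h5 : (1 / (2 * T) : ℝ) ^ 2 * (w ⬝ᵥ w) ≤ 1 / 400 := by
    calc (1 / (2 * T) : ℝ) ^ 2 * (w ⬝ᵥ w) ≤ (1 / (2 * T) : ℝ) ^ 2 * ((T : ℝ) ^ 2 / 100) := by gcongr
      _ = 1 / 400 := by field_simp; norm_num
  linarith

end Orthogonal
end QC

namespace QC
open Matrix

section Averaging

set_option linter.unusedSectionVars false

variable {n : ℕ} {Y : Type} [Fintype Y] [DecidableEq Y]

/-- Control on a clock register: block `t` acts on the other registers. -/
def controlled {n T : ℕ} {Y : Type}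
    (A : Fin T → Matrix ((Fin n × Fin 2) × Y) ((Fin n × Fin 2) × Y) ℝ) :
    Matrix ((Fin n × Fin 2) × (Y × Fin T)) ((Fin n × Fin 2) × (Y × Fin T)) ℝ :=
  (Matrix.blockDiagonal A).submatrix (Equiv.prodAssoc _ _ _).symm (Equiv.prodAssoc _ _ _).symm

/-- A matrix acting on the clock register only. -/
def onClock {n T : ℕ} (Y : Type) [DecidableEq Y] (S : Matrix (Fin T) (Fin T) ℝ) :
    Matrix ((Fin n × Fin 2) × (Y × Fin T)) ((Fin n × Fin 2) × (Y × Fin T)) ℝ :=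
  (Matrix.kroneckerMap (· * ·) (1 : Matrix ((Fin n × Fin 2) × Y) ((Fin n × Fin 2) × Y) ℝ)
    S).submatrix (Equiv.prodAssoc _ _ _).symm (Equiv.prodAssoc _ _ _).symm

lemma controlled_mul_transpose {T : ℕ}
    {A : Fin T → Matrix ((Fin n × Fin 2) × Y) ((Fin n × Fin 2) × Y) ℝ}
    (hA : ∀ t, A t * (A t)ᵀ = 1) : controlled A * (controlled A)ᵀ = 1 := by
  rw [controlled, Matrix.transpose_submatrix, Matrix.submatrix_mul_equiv,
    Matrix.blockDiagonal_transpose, ← Matrix.blockDiagonal_mul]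
  simp only [hA]
  rw [show (fun _ : Fin T => (1 : Matrix ((Fin n × Fin 2) × Y) ((Fin n × Fin 2) × Y) ℝ)) = 1
    from rfl, Matrix.blockDiagonal_one, Matrix.submatrix_one_equiv]

lemma onClock_mul_transpose {T : ℕ} {S : Matrix (Fin T) (Fin T) ℝ} (hS : S * Sᵀ = 1) :
    onClock (n := n) Y S * (onClock (n := n) Y S)ᵀ = 1 := by
  rw [onClock, Matrix.transpose_submatrix, Matrix.submatrix_mul_equiv,
    ← Matrix.kroneckerMap_transpose, ← Matrix.mul_kronecker_mul, hS]
  simp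

lemma controlled_mulVec {T : ℕ}
    (A : Fin T → Matrix ((Fin n × Fin 2) × Y) ((Fin n × Fin 2) × Y) ℝ)
    (ψ : (Fin n × Fin 2) × (Y × Fin T) → ℝ) (q : Fin n × Fin 2) (y : Y) (t : Fin T) :
    (controlled A *ᵥ ψ) (q, (y, t)) = (A t *ᵥ fun p => ψ (p.1, (p.2, t))) (q, y) := by
  simp only [controlled, mulVec, dotProduct, submatrix_apply, Equiv.prodAssoc_symm_apply,
    Matrix.blockDiagonal_apply, Fintype.sum_prod_type, ite_mul, zero_mul]
  simp

lemma onClock_mulVec {T : ℕ} (S : Matrix (Fin T) (Fin T) ℝ)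
    (ψ : (Fin n × Fin 2) × (Y × Fin T) → ℝ) (q : Fin n × Fin 2) (y : Y) (t : Fin T) :
    (onClock Y S *ᵥ ψ) (q, (y, t)) = ∑ t', S t t' * ψ (q, (y, t')) := by
  have h : (onClock Y S *ᵥ ψ) (q, (y, t)) = ∑ p : (Fin n × Fin 2) × Y,
      ∑ t', (1 : Matrix ((Fin n × Fin 2) × Y) ((Fin n × Fin 2) × Y) ℝ) (q, y) p * S t t' *
        ψ (p.1, (p.2, t')) := by
    simp only [onClock, mulVec, dotProduct, submatrix_apply, Equiv.prodAssoc_symm_apply,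
      Matrix.kroneckerMap_apply, Fintype.sum_prod_type]
  rw [h, Finset.sum_eq_single (q, y)]
  · simp
  · intro p _ hp
    simp [Matrix.one_apply_ne hp.symm]
  · simp

lemma phaseOracle_mul_transpose (x : Fin n → Fin 2) :
    phaseOracle Y x * (phaseOracle Y x)ᵀ = 1 := by
  simp only [phaseOracle, Matrix.diagonal_transpose, Matrix.diagonal_mul_diagonal]
  rw [← Matrix.diagonal_one]
  congr 1
  ext j
  simp only [phaseSign]
  split_ifs <;> simp

lemma sum_sq_phaseState (M : ℕ → Matrix ((Fin n × Fin 2) × Y) ((Fin n × Fin 2) × Y) ℝ)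
    (hM : ∀ t, M t * (M t)ᵀ = 1) (ψ : (Fin n × Fin 2) × Y → ℝ) (hψ : ∑ j, ψ j ^ 2 = 1)
    (x : Fin n → Fin 2) (t : ℕ) : ∑ j, phaseState M ψ x t j ^ 2 = 1 := by
  induction t with
  | zero => exact hψ
  | succ t ih =>
    have h := dotProduct_mulVec_mulVec (hM t) (phaseOracle Y x *ᵥ phaseState M ψ x t)
      (phaseOracle Y x *ᵥ phaseState M ψ x t)
    rw [dotProduct_mulVec_mulVec (phaseOracle_mul_transpose x)] at h
    simp only [dotProduct, ← pow_two] at h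
    rw [ih] at h
    exact h

/-- Detecting a phase-oracle walk by the norm of the time average of its iterates. -/
theorem exists_qAlg_of_iterAvg (f : PartialFn (Fin n) fun _ => 2) (T : ℕ) (hT : 0 < T)
    (B : Matrix ((Fin n × Fin 2) × Y) ((Fin n × Fin 2) × Y) ℝ) (hB : B * Bᵀ = 1)
    (e : (Fin n × Fin 2) × Y → ℝ) (he : ∑ j, e j ^ 2 = 1)
    (hfix : ∀ x, phaseOracle Y x *ᵥ e = e)
    (htrue : ∀ x, f x = some true →
      2 / 3 ≤ iterAvg (B * phaseOracle Y x) T e ⬝ᵥ iterAvg (B * phaseOracle Y x) T e)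
    (hfalse : ∀ x, f x = some false →
      iterAvg (B * phaseOracle Y x) T e ⬝ᵥ iterAvg (B * phaseOracle Y x) T e ≤ 1 / 3) :
    ∃ A : QAlg (Fin n) (fun _ => 2), A.T ≤ T + 1 ∧
      ∀ x b, f x = some b → (2 : ℝ) / 3 ≤ A.outProb x (some b) := by
  have hT' : (0 : ℝ) < T := by positivity
  have hs : (√(T : ℝ))⁻¹ * (√(T : ℝ))⁻¹ = (T : ℝ)⁻¹ := by
    rw [← mul_inv, Real.mul_self_sqrt hT'.le]
  let t0 : Fin T := ⟨0, hT⟩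
  obtain ⟨S, hS, hrow⟩ := exists_orthogonal_matrix_row t0 (fun _ => (√(T : ℝ))⁻¹) (by
    simp only [pow_two, hs, Finset.sum_const, Finset.card_univ, Fintype.card_fin, nsmul_eq_mul]
    field_simp)
  let M : ℕ → Matrix ((Fin n × Fin 2) × (Y × Fin T)) ((Fin n × Fin 2) × (Y × Fin T)) ℝ := fun r =>
    if r = T then onClock Y S else controlled fun t : Fin T => if T ≤ r + t then B else 1
  have hM : ∀ r, M r * (M r)ᵀ = 1 := by
    intro r
    by_cases hr : r = T
    · simp only [M, hr, if_true]
      exact onClock_mul_transpose hS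
    · simp only [M, hr, if_false]
      refine controlled_mul_transpose fun t => ?_
      split_ifs
      · exact hB
      · simp
  let ψ : (Fin n × Fin 2) × (Y × Fin T) → ℝ := fun j => (√(T : ℝ))⁻¹ * e (j.1, j.2.1)
  have hψ : ∑ j, ψ j ^ 2 = 1 := by
    simp only [ψ, Fintype.sum_prod_type] at he ⊢
    simp only [Finset.sum_const, Finset.card_univ, Fintype.card_fin, nsmul_eq_mul, mul_pow,
      pow_two ((√(T : ℝ))⁻¹), hs, ← mul_assoc, mul_inv_cancel₀ hT'.ne', one_mul]
    exact he
  have hstate : ∀ x r, r ≤ T → ∀ q y (t : Fin T), phaseState M ψ x r (q, (y, t)) =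
      (√(T : ℝ))⁻¹ * (((B * phaseOracle Y x) ^ (r + t - T)) *ᵥ e) (q, y) := by
    intro x r
    induction r with
    | zero =>
      intro _ q y t
      rw [Nat.sub_eq_zero_of_le (by omega)]
      simp [phaseState, ψ]
    | succ r ih =>
      intro hr q y t
      have hD : (fun p : (Fin n × Fin 2) × Y =>
          (phaseOracle (Y × Fin T) x *ᵥ phaseState M ψ x r) (p.1, (p.2, t))) =
          phaseOracle Y x *ᵥ fun p => phaseState M ψ x r (p.1, (p.2, t)) := by
        ext p
        rw [phaseOracle_mulVec, phaseOracle_mulVec]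
      have hv : (fun p : (Fin n × Fin 2) × Y => phaseState M ψ x r (p.1, (p.2, t))) =
          (√(T : ℝ))⁻¹ • (((B * phaseOracle Y x) ^ (r + t - T)) *ᵥ e) := by
        ext p
        rw [ih (by omega), Pi.smul_apply, smul_eq_mul]
      have hrT : r ≠ T := by omega
      simp only [phaseState, M, hrT, if_false]
      rw [controlled_mulVec, hD, hv, Matrix.mulVec_smul, Matrix.mulVec_smul, Pi.smul_apply,
        smul_eq_mul]
      congr 1
      refine congrFun ?_ (q, y)
      split_ifs with h
      · rw [Matrix.mulVec_mulVec, Matrix.mulVec_mulVec, ← pow_succ',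
          show r + t - T + 1 = r + 1 + t - T by omega]
      · rw [Nat.sub_eq_zero_of_le (by omega), Nat.sub_eq_zero_of_le (by omega)]
        simp [hfix]
  have hfinal : ∀ x, ∑ s : Y × Fin T, (if decide (s.2 = t0) = true then
      ∑ q, phaseState M ψ x (T + 1) (q, s) ^ 2 else 0) =
      iterAvg (B * phaseOracle Y x) T e ⬝ᵥ iterAvg (B * phaseOracle Y x) T e := by
    intro x
    have h1 : ∀ q y, phaseState M ψ x (T + 1) (q, (y, t0)) =
        phaseSign x q * iterAvg (B * phaseOracle Y x) T e (q, y) := by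
      intro q y
      rw [phaseState, show M T = onClock Y S from if_pos rfl, onClock_mulVec]
      simp only [hrow, phaseOracle_mulVec, hstate x T le_rfl, iterAvg, Pi.smul_apply,
        Finset.sum_apply, smul_eq_mul, Finset.mul_sum]
      rw [Finset.sum_range]
      refine Finset.sum_congr rfl fun t _ => ?_
      rw [Nat.add_sub_cancel_left, ← hs]
      ring
    have h2 : ∀ q, phaseSign x q * phaseSign x q = 1 := by
      intro q
      simp only [phaseSign]
      split_ifs <;> simp
    rw [Fintype.sum_prod_type]
    simp only [decide_eq_true_eq, Finset.sum_ite_eq', Finset.mem_univ, if_true, h1, mul_pow,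
      pow_two (phaseSign x _), h2, one_mul, dotProduct, ← pow_two]
    rw [Fintype.sum_prod_type (α₁ := Fin n × Fin 2) (α₂ := Y), Finset.sum_comm]
  refine exists_qAlg_of_phaseState f (T + 1) M hM ψ hψ (fun s => decide (s.2 = t0)) ?_
  intro x b hb
  cases b with
  | true =>
    rw [hfinal]
    exact htrue x hb
  | false =>
    have htot := sum_sq_phaseState M hM ψ hψ x (T + 1)
    have hf := hfalse x hb
    rw [← hfinal] at hf
    rw [Fintype.sum_prod_type_right] at htot
    have hsplit : ∑ s : Y × Fin T, ∑ q, phaseState M ψ x (T + 1) (q, s) ^ 2 =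
        (∑ s : Y × Fin T, if decide (s.2 = t0) = true then
          ∑ q, phaseState M ψ x (T + 1) (q, s) ^ 2 else 0) +
        ∑ s : Y × Fin T, if decide (s.2 = t0) = false then
          ∑ q, phaseState M ψ x (T + 1) (q, s) ^ 2 else 0 := by
      rw [← Finset.sum_add_distrib]
      refine Finset.sum_congr rfl fun s _ => ?_
      by_cases h : s.2 = t0 <;> simp [h]
    rw [htot] at hsplit
    linarith

end Averaging
end QC

namespace QC
open Matrix

/-- The kernel `K` has filtered factorization norm at most `W`: it is a Gram-type kernel whose
vectors are split over the input coordinates, where coordinate `i` only contributes to pairs of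
inputs differing at `i`. -/
def GammaLe {ι : Type} [Fintype ι] (K : (ι → Fin 2) → (ι → Fin 2) → ℝ) (W : ℝ) : Prop :=
  ∃ (D : Type) (_ : Fintype D) (u v : (ι → Fin 2) → ι → D → ℝ),
    (∀ z z', K z z' = ∑ i, ∑ d, if z i = z' i then 0 else u z i d * v z' i d) ∧
    (∀ z, ∑ i, ∑ d, u z i d ^ 2 ≤ W) ∧ ∀ z, ∑ i, ∑ d, v z i d ^ 2 ≤ W

section Witness

variable {D D' : Type} {n : ℕ}

/-- The witness vector of a `1`-input. -/
noncomputable def posWitness (i₀ : Fin n) (κ : ℝ) (v : (Fin n → Fin 2) → Fin n → D → ℝ)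
    (b : (Fin n → Fin 2) → D' → ℝ) (y : Fin n → Fin 2) :
    (Fin n × Fin 2) × ((Fin 2 × D) ⊕ Option D') → ℝ
  | (q, Sum.inl (c, d)) => if q.2 = 1 ∧ c = y q.1 then κ * v y q.1 d else 0
  | (q, Sum.inr none) => if q = (i₀, 0) then 1 else 0
  | (q, Sum.inr (some e)) => if q = (i₀, 0) then b y e else 0

/-- The query part of the witness vector of a `0`-input. -/
noncomputable def negQuery (κ : ℝ) (u : (Fin n → Fin 2) → Fin n → D → ℝ) (x : Fin n → Fin 2) :
    (Fin n × Fin 2) × ((Fin 2 × D) ⊕ Option D') → ℝ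
  | (q, Sum.inl (c, d)) => if q.2 = 1 ∧ c ≠ x q.1 then -(κ⁻¹ * u x q.1 d) else 0
  | (_, Sum.inr _) => 0

/-- The start state. -/
noncomputable def startState (D D' : Type) (i₀ : Fin n) :
    (Fin n × Fin 2) × ((Fin 2 × D) ⊕ Option D') → ℝ
  | (_, Sum.inl _) => 0
  | (q, Sum.inr none) => if q = (i₀, 0) then 1 else 0
  | (_, Sum.inr (some _)) => 0

/-- The error part of the witness vector of a `0`-input. -/
noncomputable def errState (D : Type) (i₀ : Fin n) (a : (Fin n → Fin 2) → D' → ℝ)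
    (x : Fin n → Fin 2) : (Fin n × Fin 2) × ((Fin 2 × D) ⊕ Option D') → ℝ
  | (_, Sum.inl _) => 0
  | (_, Sum.inr none) => 0
  | (q, Sum.inr (some e)) => if q = (i₀, 0) then a x e else 0

/-- The constant sign that turns the phase oracle into the check of the stored answer. -/
noncomputable def storedSign (n : ℕ) (D D' : Type) :
    (Fin n × Fin 2) × ((Fin 2 × D) ⊕ Option D') → ℝ
  | (q, Sum.inl (c, _)) => if q.2 = 1 ∧ c = 1 then -1 else 1
  | (_, Sum.inr _) => 1

variable [Fintype D] [Fintype D']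

lemma sum_witness (g : (Fin n × Fin 2) × ((Fin 2 × D) ⊕ Option D') → ℝ) :
    ∑ j, g j = ∑ i, ∑ d, ∑ c, ∑ a, g ((i, a), Sum.inl (c, d)) +
      (∑ q, g (q, Sum.inr none) + ∑ e, ∑ q, g (q, Sum.inr (some e))) := by
  rw [Fintype.sum_prod_type_right, Fintype.sum_sum_type, Fintype.sum_option,
    Fintype.sum_prod_type_right]
  congr 1
  simp only [Fintype.sum_prod_type (α₁ := Fin n) (α₂ := Fin 2)]
  rw [Finset.sum_comm]
  conv_rhs => rw [Finset.sum_comm]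
  rw [Finset.sum_comm]
  refine Finset.sum_congr rfl fun d _ => ?_
  rw [Finset.sum_comm]

lemma posWitness_dotProduct_self (i₀ : Fin n) (κ : ℝ) (v : (Fin n → Fin 2) → Fin n → D → ℝ)
    (b : (Fin n → Fin 2) → D' → ℝ) (y : Fin n → Fin 2) :
    posWitness i₀ κ v b y ⬝ᵥ posWitness i₀ κ v b y =
      κ ^ 2 * ∑ i, ∑ d, v y i d ^ 2 + (1 + ∑ e, b y e ^ 2) := by
  rw [dotProduct, sum_witness]
  simp only [posWitness, ite_mul, mul_ite, mul_zero, zero_mul,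
    Fin.sum_univ_two (f := fun a => ite _ _ _)]
  simp [Finset.mul_sum]
  ring_nf

lemma negQuery_dotProduct_self (κ : ℝ) (u : (Fin n → Fin 2) → Fin n → D → ℝ)
    (x : Fin n → Fin 2) :
    negQuery (D' := D') κ u x ⬝ᵥ negQuery κ u x = κ⁻¹ ^ 2 * ∑ i, ∑ d, u x i d ^ 2 := by
  rw [dotProduct, sum_witness]
  have key : ∀ (z : Fin 2) (r : ℝ), (∑ c, ∑ a : Fin 2, if a = 1 ∧ c ≠ z then r else 0) = r := by
    intro z r
    fin_cases z <;> simp [Fin.sum_univ_two]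
  have hsq : ∀ (p : Prop) [Decidable p] (r : ℝ), (if p then r else 0) * (if p then r else 0) =
      if p then r * r else 0 := by
    intro p _ r
    split_ifs <;> simp
  simp only [negQuery, hsq, key, mul_zero, Finset.sum_const_zero, add_zero, Finset.mul_sum]
  refine Finset.sum_congr rfl fun i _ => Finset.sum_congr rfl fun d _ => ?_
  ring

lemma negQuery_dotProduct_posWitness (i₀ : Fin n) {κ : ℝ} (hκ : κ ≠ 0)
    (u v : (Fin n → Fin 2) → Fin n → D → ℝ) (b : (Fin n → Fin 2) → D' → ℝ)
    (x y : Fin n → Fin 2) :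
    negQuery κ u x ⬝ᵥ posWitness i₀ κ v b y =
      -∑ i, ∑ d, if x i = y i then 0 else u x i d * v y i d := by
  rw [dotProduct, sum_witness]
  have key : ∀ (z z' : Fin 2) (r r' : ℝ), (∑ c, ∑ a : Fin 2,
      (if a = 1 ∧ c ≠ z then r else 0) * (if a = 1 ∧ c = z' then r' else 0)) =
      if z = z' then 0 else r * r' := by
    intro z z' r r'
    fin_cases z <;> fin_cases z' <;> simp [Fin.sum_univ_two]
  simp only [negQuery, posWitness, key, zero_mul, Finset.sum_const_zero, add_zero,
    ← Finset.sum_neg_distrib]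
  refine Finset.sum_congr rfl fun i _ => Finset.sum_congr rfl fun d _ => ?_
  split_ifs
  · simp
  · field_simp

lemma startState_dotProduct_posWitness (i₀ : Fin n) (κ : ℝ)
    (v : (Fin n → Fin 2) → Fin n → D → ℝ) (b : (Fin n → Fin 2) → D' → ℝ) (y : Fin n → Fin 2) :
    startState D D' i₀ ⬝ᵥ posWitness i₀ κ v b y = 1 := by
  rw [dotProduct, sum_witness]
  simp [startState, posWitness]

lemma errState_dotProduct_posWitness (i₀ : Fin n) (κ : ℝ)
    (v : (Fin n → Fin 2) → Fin n → D → ℝ) (a b : (Fin n → Fin 2) → D' → ℝ)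
    (x y : Fin n → Fin 2) :
    errState D i₀ a x ⬝ᵥ posWitness i₀ κ v b y = ∑ e, a x e * b y e := by
  rw [dotProduct, sum_witness]
  simp [errState, posWitness]

lemma startState_dotProduct_self (i₀ : Fin n) :
    startState D D' i₀ ⬝ᵥ startState D D' i₀ = 1 := by
  rw [dotProduct, sum_witness]
  simp [startState]

lemma errState_dotProduct_self (i₀ : Fin n) (a : (Fin n → Fin 2) → D' → ℝ) (x : Fin n → Fin 2) :
    errState D i₀ a x ⬝ᵥ errState D i₀ a x = ∑ e, a x e ^ 2 := by
  rw [dotProduct, sum_witness]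
  simp [errState, pow_two]

end Witness

section

variable {n : ℕ} {D D' : Type}

lemma storedSign_mul_phaseSign_posWitness (i₀ : Fin n) (κ : ℝ)
    (v : (Fin n → Fin 2) → Fin n → D → ℝ) (b : (Fin n → Fin 2) → D' → ℝ) (y : Fin n → Fin 2)
    (j : (Fin n × Fin 2) × ((Fin 2 × D) ⊕ Option D')) :
    storedSign n D D' j * (phaseSign y j.1 * posWitness i₀ κ v b y j) =
      posWitness i₀ κ v b y j := by
  obtain ⟨⟨i, a⟩, (⟨c, d⟩ | (_ | e))⟩ := j
  · simp only [storedSign, phaseSign, posWitness]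
    generalize y i = z
    fin_cases a <;> fin_cases c <;> fin_cases z <;> simp
  all_goals
    simp only [storedSign, phaseSign, posWitness, Prod.mk.injEq]
    fin_cases a <;> simp

lemma storedSign_mul_phaseSign_negQuery (κ : ℝ)
    (u : (Fin n → Fin 2) → Fin n → D → ℝ) (x : Fin n → Fin 2)
    (j : (Fin n × Fin 2) × ((Fin 2 × D) ⊕ Option D')) :
    storedSign n D D' j * (phaseSign x j.1 * negQuery κ u x j) = -negQuery κ u x j := by
  obtain ⟨⟨i, a⟩, (⟨c, d⟩ | o)⟩ := j
  · simp only [storedSign, phaseSign, negQuery]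
    generalize x i = z
    fin_cases a <;> fin_cases c <;> fin_cases z <;> simp
  · simp [negQuery]

lemma phaseSign_mul_startState (i₀ : Fin n) (x : Fin n → Fin 2)
    (j : (Fin n × Fin 2) × ((Fin 2 × D) ⊕ Option D')) :
    phaseSign x j.1 * startState D D' i₀ j = startState D D' i₀ j := by
  obtain ⟨⟨i, a⟩, (⟨c, d⟩ | (_ | e))⟩ := j <;> simp only [phaseSign, startState, Prod.mk.injEq]
  all_goals fin_cases a <;> simp

lemma phaseSign_mul_errState (i₀ : Fin n) (a : (Fin n → Fin 2) → D' → ℝ) (x : Fin n → Fin 2)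
    (j : (Fin n × Fin 2) × ((Fin 2 × D) ⊕ Option D')) :
    phaseSign x j.1 * errState D i₀ a x j = errState D i₀ a x j := by
  obtain ⟨⟨i, a⟩, (⟨c, d⟩ | (_ | e))⟩ := j <;> simp only [phaseSign, errState, Prod.mk.injEq]
  all_goals fin_cases a <;> simp

lemma storedSign_mul_startState (i₀ : Fin n)
    (j : (Fin n × Fin 2) × ((Fin 2 × D) ⊕ Option D')) :
    storedSign n D D' j * startState D D' i₀ j = startState D D' i₀ j := by
  obtain ⟨q, (⟨c, d⟩ | (_ | e))⟩ := j <;> simp [storedSign, startState]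

lemma storedSign_mul_errState (i₀ : Fin n) (a : (Fin n → Fin 2) → D' → ℝ) (x : Fin n → Fin 2)
    (j : (Fin n × Fin 2) × ((Fin 2 × D) ⊕ Option D')) :
    storedSign n D D' j * errState D i₀ a x j = errState D i₀ a x j := by
  obtain ⟨q, (⟨c, d⟩ | (_ | e))⟩ := j <;> simp [storedSign, errState]

lemma storedSign_mul_self (j : (Fin n × Fin 2) × ((Fin 2 × D) ⊕ Option D')) :
    storedSign n D D' j * storedSign n D D' j = 1 := by
  obtain ⟨q, (⟨c, d⟩ | o)⟩ := j <;> simp only [storedSign]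
  · split_ifs <;> simp
  · simp

end

/-- A kernel that is close to the constant `1` on pairs of a `0`-input and a `1`-input gives a
quantum algorithm with about as many queries as its filtered norm. -/
theorem exists_qAlg_of_gammaLe {n : ℕ} (hn : 0 < n) (f : PartialFn (Fin n) fun _ => 2)
    {K : (Fin n → Fin 2) → (Fin n → Fin 2) → ℝ} {W : ℝ} (hW : 1 ≤ W) (hK : GammaLe K W)
    {D' : Type} [Fintype D'] (a b : (Fin n → Fin 2) → D' → ℝ)
    (hab : ∀ x y, f x = some false → f y = some true → K x y + ∑ e, a x e * b y e = 1)
    (ha : ∀ x, ∑ e, a x e ^ 2 ≤ 1 / 100) (hb : ∀ y, ∑ e, b y e ^ 2 ≤ 1 / 10) :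
    ∃ A : QAlg (Fin n) (fun _ => 2), A.T ≤ ⌈100 * W⌉₊ + 1 ∧
      ∀ x b, f x = some b → (2 : ℝ) / 3 ≤ A.outProb x (some b) := by
  classical
  obtain ⟨D, _, u, v, hKuv, hu, hv⟩ := hK
  let i₀ : Fin n := ⟨0, hn⟩
  set κ : ℝ := (√(10 * W))⁻¹ with hκ
  have hκ0 : κ ≠ 0 := by positivity
  have hκ2 : κ ^ 2 = (10 * W)⁻¹ := by rw [hκ, inv_pow, Real.sq_sqrt (by positivity)]
  have hκi : κ⁻¹ ^ 2 = 10 * W := by rw [inv_pow, hκ2, inv_inv]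
  set T := ⌈100 * W⌉₊ with hT
  have hTW : 100 * W ≤ T := Nat.le_ceil _
  have hT0 : 0 < T := by
    have : (0 : ℝ) < T := by linarith
    exact_mod_cast this
  let φ := posWitness (D := D) (D' := D') i₀ κ v b
  obtain ⟨R, hR, hRpos, hRneg⟩ := exists_reflection_matrix (fun y => f y = some true) φ
  let C : Matrix ((Fin n × Fin 2) × ((Fin 2 × D) ⊕ Option D'))
    ((Fin n × Fin 2) × ((Fin 2 × D) ⊕ Option D')) ℝ := Matrix.diagonal (storedSign n D D')
  have hC : C * Cᵀ = 1 := by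
    simp only [C, Matrix.diagonal_transpose, Matrix.diagonal_mul_diagonal, storedSign_mul_self]
    exact Matrix.diagonal_one
  have hB : R * C * (R * C)ᵀ = 1 := by
    rw [Matrix.transpose_mul, Matrix.mul_assoc, ← Matrix.mul_assoc C, hC, Matrix.one_mul, hR]
  have hU : ∀ x, R * C * phaseOracle _ x * (R * C * phaseOracle _ x)ᵀ = 1 := by
    intro x
    rw [Matrix.transpose_mul, Matrix.mul_assoc (R * C), ← Matrix.mul_assoc (phaseOracle _ x),
      phaseOracle_mul_transpose, Matrix.one_mul, hB]
  have hCD : ∀ x ψ, (R * C * phaseOracle _ x) *ᵥ ψ =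
      R *ᵥ fun j => storedSign n D D' j * (phaseSign x j.1 * ψ j) := by
    intro x ψ
    rw [← Matrix.mulVec_mulVec, ← Matrix.mulVec_mulVec]
    congr 1
    ext j
    rw [Matrix.mulVec_diagonal, phaseOracle_mulVec]
  refine exists_qAlg_of_iterAvg f T hT0 (R * C) hB (startState D D' i₀) ?_ ?_ ?_ ?_
  · have h := startState_dotProduct_self (D := D) (D' := D') i₀
    simpa only [dotProduct, ← pow_two] using h
  · intro x
    ext j
    rw [phaseOracle_mulVec, phaseSign_mul_startState]
  · intro y hy
    refine two_thirds_le_iterAvg (hU y) hT0 (φ := φ y) ?_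
      (startState_dotProduct_posWitness i₀ κ v b y) ?_
    · rw [hCD]
      simp only [φ, storedSign_mul_phaseSign_posWitness]
      exact hRpos y hy
    · rw [posWitness_dotProduct_self, hκ2]
      have h1 : (10 * W)⁻¹ * ∑ i, ∑ d, v y i d ^ 2 ≤ (10 * W)⁻¹ * W := by
        gcongr
        exact hv y
      have h2 : (10 * W)⁻¹ * W = 1 / 10 := by field_simp
      linarith [hb y]
  · intro x hx
    let q := negQuery (D' := D') κ u x
    let s := startState D D' i₀
    let r := errState D i₀ a x
    have horth : ∀ y, f y = some true → (s - r + q) ⬝ᵥ φ y = 0 := by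
      intro y hy
      have h1 := hab x y hx hy
      rw [add_dotProduct, sub_dotProduct, startState_dotProduct_posWitness,
        errState_dotProduct_posWitness, negQuery_dotProduct_posWitness i₀ hκ0, ← hKuv]
      linarith
    have hUw : (R * C * phaseOracle _ x) *ᵥ (q - (s - r)) = s - r + q := by
      have h1 : (fun j => storedSign n D D' j * (phaseSign x j.1 * (q - (s - r)) j)) =
          -(s - r + q) := by
        ext j
        simp only [Pi.sub_apply, Pi.neg_apply, Pi.add_apply, mul_sub]
        rw [storedSign_mul_phaseSign_negQuery, phaseSign_mul_startState, phaseSign_mul_errState,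
          storedSign_mul_startState, storedSign_mul_errState]
        ring
      rw [hCD, h1, Matrix.mulVec_neg, hRneg _ horth, neg_neg]
    refine iterAvg_le (hU x) hT0 (w := q - (s - r)) (a := r) ?_ ?_ ?_
    · rw [hUw]
      ext j
      simp only [Pi.add_apply, Pi.sub_apply, Pi.smul_apply, smul_eq_mul]
      ring
    · have h1 : (q - (s - r)) ⬝ᵥ (q - (s - r)) ≤ 3 * (q ⬝ᵥ q + s ⬝ᵥ s + r ⬝ᵥ r) := by
        simp only [dotProduct, Finset.mul_sum, ← Finset.sum_add_distrib]
        refine Finset.sum_le_sum fun j _ => ?_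
        simp only [Pi.sub_apply]
        nlinarith [sq_nonneg (q j + s j), sq_nonneg (q j - r j), sq_nonneg (s j + r j)]
      have h2 : q ⬝ᵥ q ≤ 10 * W * W := by
        rw [negQuery_dotProduct_self, hκi]
        gcongr
        exact hu x
      have h3 : s ⬝ᵥ s = 1 := startState_dotProduct_self i₀
      have h4 : r ⬝ᵥ r ≤ 1 / 100 := (errState_dotProduct_self i₀ a x).le.trans (ha x)
      have h5 : (100 * W) ^ 2 ≤ (T : ℝ) ^ 2 := by gcongr
      nlinarith
    · rw [errState_dotProduct_self]
      exact ha x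

end QC

namespace QC

section Closure

variable {ι : Type}

/-- The kernel `g` is a Gram-type kernel with vectors of squared norm at most `A`. -/
def GramLe (g : (ι → Fin 2) → (ι → Fin 2) → ℝ) (A : ℝ) : Prop :=
  ∃ (D : Type) (_ : Fintype D) (a b : (ι → Fin 2) → D → ℝ),
    (∀ z z', g z z' = ∑ d, a z d * b z' d) ∧
    (∀ z, ∑ d, a z d ^ 2 ≤ A) ∧ ∀ z, ∑ d, b z d ^ 2 ≤ A

open Classical in
/-- The indicator kernel of `h z ≠ h z'`. -/
noncomputable def neK {α : Type} (h : (ι → Fin 2) → α) (z z' : ι → Fin 2) : ℝ :=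
  if h z = h z' then 0 else 1

lemma neK_congr {α β : Type} {h : (ι → Fin 2) → α} {h' : (ι → Fin 2) → β}
    (H : ∀ z z', h z = h z' ↔ h' z = h' z') : neK h = neK h' := by
  ext z z'
  by_cases h1 : h' z = h' z'
  · rw [neK, neK, if_pos h1, if_pos ((H z z').mpr h1)]
  · rw [neK, neK, if_neg h1, if_neg (mt (H z z').mp h1)]

open Classical in
lemma gramLe_eq {α : Type} [Fintype α] (h : (ι → Fin 2) → α) :
    GramLe (fun z z' => 1 - neK h z z') 1 := by
  refine ⟨α, inferInstance, fun z d => if h z = d then 1 else 0,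
    fun z d => if h z = d then 1 else 0, fun z z' => ?_, fun z => ?_, fun z => ?_⟩
  · by_cases h1 : h z = h z'
    · simp [neK, h1]
    · simp [neK, h1]
  · simp
  · simp

variable [Fintype ι]

lemma GammaLe.mono {K : (ι → Fin 2) → (ι → Fin 2) → ℝ} {W W' : ℝ} (h : GammaLe K W)
    (hW : W ≤ W') : GammaLe K W' := by
  obtain ⟨D, hD, u, v, hK, hu, hv⟩ := h
  exact ⟨D, hD, u, v, hK, fun z => (hu z).trans hW, fun z => (hv z).trans hW⟩

lemma GammaLe.nonneg {K : (ι → Fin 2) → (ι → Fin 2) → ℝ} {W : ℝ} (h : GammaLe K W) : 0 ≤ W := by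
  obtain ⟨D, hD, u, v, hK, hu, hv⟩ := h
  exact le_trans (Finset.sum_nonneg fun i _ => Finset.sum_nonneg fun d _ => sq_nonneg _) (hu 0)

lemma gammaLe_zero {W : ℝ} (hW : 0 ≤ W) : GammaLe (fun _ _ : ι → Fin 2 => 0) W :=
  ⟨Empty, inferInstance, fun _ _ _ => 0, fun _ _ _ => 0, by simp, by simpa, by simpa⟩

lemma GammaLe.add {K K' : (ι → Fin 2) → (ι → Fin 2) → ℝ} {W W' : ℝ} (h : GammaLe K W)
    (h' : GammaLe K' W') : GammaLe (fun z z' => K z z' + K' z z') (W + W') := by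
  obtain ⟨D, hD, u, v, hK, hu, hv₁⟩ := h
  obtain ⟨D', hD', u', v', hK', hu', hv₂⟩ := h'
  refine ⟨D ⊕ D', inferInstance, fun z i => Sum.elim (u z i) (u' z i),
    fun z i => Sum.elim (v z i) (v' z i), fun z z' => ?_, fun z => ?_, fun z => ?_⟩
  · simp only [Fintype.sum_sum_type, Sum.elim_inl, Sum.elim_inr, Finset.sum_add_distrib, hK, hK']
  · simp only [Fintype.sum_sum_type, Sum.elim_inl, Sum.elim_inr, Finset.sum_add_distrib]
    exact add_le_add (hu z) (hu' z)
  · simp only [Fintype.sum_sum_type, Sum.elim_inl, Sum.elim_inr, Finset.sum_add_distrib]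
    exact add_le_add (hv₁ z) (hv₂ z)

/-- Combining kernels with coefficients that are blocks of Gram vectors. -/
lemma GammaLe.sum_gram {E D : Type} [Fintype E] [Fintype D]
    {K : E → (ι → Fin 2) → (ι → Fin 2) → ℝ} {W A : ℝ} (hW : 0 ≤ W) (h : ∀ e, GammaLe (K e) W)
    (a b : E → (ι → Fin 2) → D → ℝ) (ha : ∀ z, ∑ e, ∑ d, a e z d ^ 2 ≤ A)
    (hb : ∀ z, ∑ e, ∑ d, b e z d ^ 2 ≤ A) :
    GammaLe (fun z z' => ∑ e, (∑ d, a e z d * b e z' d) * K e z z') (A * W) := by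
  choose D' hD' u v hK hu hv using h
  have key : ∀ (c : E → (ι → Fin 2) → D → ℝ) (w : ∀ e, (ι → Fin 2) → ι → D' e → ℝ),
      (∀ z, ∑ e, ∑ d, c e z d ^ 2 ≤ A) → (∀ e z, ∑ i, ∑ d, w e z i d ^ 2 ≤ W) →
      ∀ z, ∑ i, ∑ p : Σ e, D × D' e, (c p.1 z p.2.1 * w p.1 z i p.2.2) ^ 2 ≤ A * W := by
    intro c w hc hw z
    calc ∑ i, ∑ p : Σ e, D × D' e, (c p.1 z p.2.1 * w p.1 z i p.2.2) ^ 2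
        = ∑ e, ∑ d, c e z d ^ 2 * ∑ i, ∑ d', w e z i d' ^ 2 := by
          simp only [Fintype.sum_sigma, Fintype.sum_prod_type, mul_pow, Finset.mul_sum]
          rw [Finset.sum_comm]
          refine Finset.sum_congr rfl fun e _ => ?_
          rw [Finset.sum_comm]
      _ ≤ ∑ e, ∑ d, c e z d ^ 2 * W := by
          gcongr with e _ d _
          exact hw e z
      _ = (∑ e, ∑ d, c e z d ^ 2) * W := by simp only [Finset.sum_mul]
      _ ≤ A * W := by gcongr; exact hc z
  refine ⟨Σ e, D × D' e, inferInstance, fun z i p => a p.1 z p.2.1 * u p.1 z i p.2.2,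
    fun z i p => b p.1 z p.2.1 * v p.1 z i p.2.2, fun z z' => ?_, key a u ha hu, key b v hb hv⟩
  simp only [Fintype.sum_sigma, Fintype.sum_prod_type, hK, Finset.mul_sum, Finset.sum_mul]
  conv_rhs => rw [Finset.sum_comm]
  refine Finset.sum_congr rfl fun e _ => ?_
  refine Finset.sum_congr rfl fun i _ => ?_
  rw [Finset.sum_comm]
  refine Finset.sum_congr rfl fun d _ => Finset.sum_congr rfl fun d' _ => ?_
  split_ifs
  · simp
  · ring

lemma GammaLe.gram_mul {g K : (ι → Fin 2) → (ι → Fin 2) → ℝ} {A W : ℝ} (hK : GammaLe K W)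
    (hg : GramLe g A) : GammaLe (fun z z' => g z z' * K z z') (A * W) := by
  obtain ⟨D, hD, a, b, h, ha, hb⟩ := hg
  have := GammaLe.sum_gram (E := Unit) (K := fun _ => K) hK.nonneg (fun _ => hK) (fun _ => a)
    (fun _ => b) (by simpa using ha) (by simpa using hb)
  simpa [h] using this

lemma GammaLe.one_sub_prod {E : Type} (s : Finset E)
    {g : E → (ι → Fin 2) → (ι → Fin 2) → ℝ} {W : ℝ}
    (h : ∀ e, GammaLe (fun z z' => 1 - g e z z') W) (hg : ∀ e, GramLe (g e) 1) :
    GammaLe (fun z z' => 1 - ∏ e ∈ s, g e z z') (s.card * W) := by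
  classical
  induction s using Finset.induction_on with
  | empty => simpa using gammaLe_zero le_rfl
  | insert e s he ih =>
    have := (h e).add (ih.gram_mul (hg e))
    rw [Finset.card_insert_of_notMem he]
    convert this using 1
    · ext z z'
      rw [Finset.prod_insert he]
      ring
    · push_cast
      ring

lemma gammaLe_neK_bit (i : ι) : GammaLe (neK fun z : ι → Fin 2 => z i) 1 := by
  classical
  refine ⟨Unit, inferInstance, fun _ j _ => if j = i then 1 else 0,
    fun _ j _ => if j = i then 1 else 0, fun z z' => ?_, fun z => ?_, fun z => ?_⟩
  · simp only [Finset.univ_unique, Finset.sum_singleton, mul_ite, mul_one, mul_zero, neK]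
    rw [Finset.sum_eq_single i]
    · simp
    · intro j _ hj
      simp [hj]
    · simp
  · simp
  · simp

/-- A predicate that depends only on `h` is at most as expensive as `h`. -/
lemma GammaLe.of_determined {α : Type} {h : (ι → Fin 2) → α} {W : ℝ} (hh : GammaLe (neK h) W)
    (P : (ι → Fin 2) → Prop) (hP : ∀ z z', h z = h z' → (P z ↔ P z')) : GammaLe (neK P) W := by
  classical
  have hg : GramLe (neK P) 1 := by
    refine ⟨Bool, inferInstance, fun z d => if decide (P z) = d then 1 else 0,
      fun z d => if decide (P z) = d then 0 else 1, fun z z' => ?_, fun z => ?_, fun z => ?_⟩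
    · simp only [neK, Fintype.sum_bool, eq_iff_iff]
      by_cases h1 : P z <;> by_cases h2 : P z' <;> simp [h1, h2]
    · by_cases h1 : P z <;> simp [h1]
    · by_cases h1 : P z <;> simp [h1]
  have := hh.gram_mul hg
  rw [one_mul] at this
  convert this using 1
  ext z z'
  by_cases h1 : h z = h z'
  · simp [neK, h1, hP z z' h1]
  · simp [neK, h1]

/-- Adaptive composition: the second quantity may depend on the value of the first. -/
lemma GammaLe.neK_dep {α β : Type} [Fintype α] {h : (ι → Fin 2) → α}
    {g : α → (ι → Fin 2) → β} {W W' : ℝ} (hh : GammaLe (neK h) W)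
    (hg : ∀ a, GammaLe (neK (g a)) W') (hW' : 0 ≤ W') :
    GammaLe (neK fun z => (h z, g (h z) z)) (W + W') := by
  classical
  have h1 := GammaLe.sum_gram (D := Unit) (A := 1) hW' hg
    (fun a z _ => if h z = a then 1 else 0) (fun a z _ => if h z = a then 1 else 0)
    (by simp) (by simp)
  have h2 := hh.add h1
  rw [one_mul] at h2
  convert h2 using 1
  ext z z'
  simp only [Finset.univ_unique, Finset.sum_singleton, mul_ite, mul_one, mul_zero, ite_mul,
    one_mul, zero_mul, Finset.sum_ite_eq, Finset.mem_univ, if_true]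
  by_cases h3 : h z = h z'
  · simp [neK, h3]
  · simp [neK, h3]

lemma GammaLe.neK_pi {E α : Type} [Fintype E] [Fintype α] {h : E → (ι → Fin 2) → α} {W : ℝ}
    (hh : ∀ e, GammaLe (neK (h e)) W) :
    GammaLe (neK fun z e => h e z) (Fintype.card E * W) := by
  classical
  have := GammaLe.one_sub_prod (Finset.univ : Finset E) (g := fun e z z' => 1 - neK (h e) z z')
    (W := W) (by simpa using hh) fun e => gramLe_eq (h e)
  rw [Finset.card_univ] at this
  convert this using 1
  ext z z'
  simp only [neK, funext_iff]
  split_ifs with h1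
  · simp [h1]
  · push Not at h1
    obtain ⟨e, he⟩ := h1
    rw [Finset.prod_eq_zero (Finset.mem_univ e)]
    · simp
    · simp [he]

lemma GammaLe.neK_forall {E : Type} [Fintype E] [Nonempty E] {P : E → (ι → Fin 2) → Prop} {W : ℝ}
    (hP : ∀ e, GammaLe (neK (P e)) W) :
    GammaLe (neK fun z => ∀ e, P e z) (√(Fintype.card E) * W) := by
  classical
  have hW : 0 ≤ W := (hP (Classical.arbitrary E)).nonneg
  have hE : (0 : ℝ) < Fintype.card E := by exact_mod_cast Fintype.card_pos
  set β : ℝ := √√(Fintype.card E) with hβ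
  have hβ2 : β ^ 2 = √(Fintype.card E) := Real.sq_sqrt (Real.sqrt_nonneg _)
  have hβ0 : β ≠ 0 := by positivity
  have hβi : Fintype.card E * β⁻¹ ^ 2 = √(Fintype.card E) := by
    rw [inv_pow, hβ2, ← div_eq_mul_inv, Real.div_sqrt]
  have hex : ∀ z, ∃ e, (∀ e, P e z) ∨ ¬ P e z := by
    intro z
    by_cases h : ∀ e, P e z
    · exact ⟨Classical.arbitrary E, Or.inl h⟩
    · push Not at h
      exact h.imp fun e he => Or.inr he
  choose w hw using hex
  let a : E → (ι → Fin 2) → Bool → ℝ := fun e z d =>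
    if d then (if ∀ e, P e z then β⁻¹ else 0)
    else if ∀ e, P e z then 0 else if e = w z then β else 0
  have hnorm : ∀ z, ∑ e, (a e z true ^ 2 + a e z false ^ 2) ≤ √(Fintype.card E) := by
    intro z
    by_cases h : ∀ e, P e z
    · simp only [a, h, implies_true, if_true]
      simp [hβi, -inv_pow]
    · simp only [a, h, if_false]
      simp [hβ2, ite_pow]
  have := GammaLe.sum_gram (D := Bool) (A := √(Fintype.card E)) hW hP a (fun e z d => a e z !d)
    (fun z => by simpa using hnorm z) (fun z => by simpa [add_comm] using hnorm z)
  convert this using 1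
  ext z z'
  have hz := hw z
  have hz' := hw z'
  by_cases h : ∀ e, P e z <;> by_cases h' : ∀ e, P e z'
  · simp [a, neK, h, h']
  · have h'' : ¬ P (w z') z' := hz'.resolve_left h'
    rw [Finset.sum_eq_single (w z')]
    · simp [a, neK, h, h', h'', hβ0]
    · intro e _ he
      simp [a, h, h', he]
    · simp
  · have h'' : ¬ P (w z) z := hz.resolve_left h
    rw [Finset.sum_eq_single (w z)]
    · simp [a, neK, h, h', h'', hβ0]
    · intro e _ he
      simp [a, h, h', he]
    · simp
  · simp [a, neK, h, h']

lemma GammaLe.neK_exists {E : Type} [Fintype E] [Nonempty E] {P : E → (ι → Fin 2) → Prop} {W : ℝ}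
    (hP : ∀ e, GammaLe (neK (P e)) W) :
    GammaLe (neK fun z => ∃ e, P e z) (√(Fintype.card E) * W) := by
  have h := GammaLe.neK_forall (P := fun e z => ¬ P e z) (W := W) fun e => by
    rw [neK_congr (h' := P e)]
    · exact hP e
    · intro z z'
      simp only [eq_iff_iff, not_iff_not]
  rwa [neK_congr (h' := fun z => ∃ e, P e z)] at h
  intro z z'
  simp only [eq_iff_iff, ← not_exists, not_iff_not]

lemma GammaLe.comap {ι' : Type} [Fintype ι'] {K : (ι → Fin 2) → (ι → Fin 2) → ℝ} {W : ℝ}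
    (h : GammaLe K W) (e : ι → ι') : GammaLe (fun z z' : ι' → Fin 2 => K (z ∘ e) (z' ∘ e)) W := by
  classical
  obtain ⟨D, hD, u, v, hK, hu, hv⟩ := h
  have key : ∀ w : (ι → Fin 2) → ι → D → ℝ, (∀ z, ∑ i, ∑ d, w z i d ^ 2 ≤ W) →
      ∀ z : ι' → Fin 2, ∑ j, ∑ p : ι × D, (if j = e p.1 then w (z ∘ e) p.1 p.2 else 0) ^ 2 ≤ W := by
    intro w hw z
    rw [Finset.sum_comm]
    simpa [ite_pow, Fintype.sum_prod_type] using hw (z ∘ e)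
  refine ⟨ι × D, inferInstance, fun z j p => if j = e p.1 then u (z ∘ e) p.1 p.2 else 0,
    fun z j p => if j = e p.1 then v (z ∘ e) p.1 p.2 else 0, fun z z' => ?_, key u hu, key v hv⟩
  beta_reduce
  rw [Finset.sum_comm, hK, Fintype.sum_prod_type]
  refine Finset.sum_congr rfl fun i _ => Finset.sum_congr rfl fun d _ => ?_
  rw [Finset.sum_eq_single (e i)]
  · simp
  · intro j _ hj
    simp [hj]
  · simp

end Closure
end QC

namespace QC

/-! ### Fourier sampling of tables -/

/-- Bit vectors of length `k`. -/
abbrev Vec (k : ℕ) := Fin k → Fin 2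

lemma card_vec (k : ℕ) : Fintype.card (Vec k) = 2 ^ k := by simp [Vec]

lemma vec_add_self {k : ℕ} (y : Vec k) : y + y = 0 := by
  ext h
  simp only [Pi.add_apply, Pi.zero_apply]
  generalize y h = b
  revert b; decide

lemma vec_add_eq_zero_iff {k : ℕ} {y y' : Vec k} : y + y' = 0 ↔ y = y' := by
  constructor
  · intro h
    calc y = y + (y' + y') := by rw [vec_add_self, add_zero]
      _ = y' := by rw [← add_assoc, h, zero_add]
  · rintro rfl
    exact vec_add_self y

section Fourier

variable {k : ℕ}

/-- The characters of the group of bit vectors. -/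
def chi (η y : Vec k) : ℝ := ∏ h, if η h = 1 ∧ y h = 1 then -1 else 1

lemma chi_add (η y y' : Vec k) : chi η (y + y') = chi η y * chi η y' := by
  simp only [chi, ← Finset.prod_mul_distrib, Pi.add_apply]
  have key : ∀ a b c : Fin 2, (if a = 1 ∧ b + c = 1 then (-1 : ℝ) else 1) =
      (if a = 1 ∧ b = 1 then -1 else 1) * if a = 1 ∧ c = 1 then -1 else 1 := by
    intro a b c
    fin_cases a <;> fin_cases b <;> fin_cases c <;> simp
  exact Finset.prod_congr rfl fun h _ => key _ _ _

lemma chi_mul_self (η y : Vec k) : chi η y * chi η y = 1 := by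
  rw [← chi_add, vec_add_self]
  simp [chi]

lemma sum_chi (s : Vec k) : ∑ η : Vec k, chi η s = if s = 0 then 2 ^ k else 0 := by
  have h1 : ∑ η : Vec k, chi η s =
      ∏ h : Fin k, ∑ b : Fin 2, if b = 1 ∧ s h = 1 then (-1 : ℝ) else 1 := by
    rw [Finset.prod_univ_sum]
    simp [chi, Fintype.piFinset_univ]
  rw [h1]
  split_ifs with hs
  · subst hs
    simp
  · obtain ⟨h, hh⟩ := Function.ne_iff.mp hs
    refine Finset.prod_eq_zero (Finset.mem_univ h) ?_
    have : s h = 1 := by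
      revert hh
      simp only [Pi.zero_apply]
      generalize s h = b
      revert b; decide
    simp [this]

lemma sum_chi_mul_chi (y y' : Vec k) :
    ∑ η : Vec k, chi η y * chi η y' = if y = y' then 2 ^ k else 0 := by
  simp only [← chi_add, sum_chi, vec_add_eq_zero_iff]

/-- The amplitude of `(η, a)` after Fourier sampling the table `x`. -/
noncomputable def amp (x : Vec k → Vec k) (p : Vec k × Vec k) : ℝ :=
  (2 ^ k)⁻¹ * ∑ y, if x y = p.2 then chi p.1 y else 0

/-- Parseval: the overlap of two sampled tables is the fraction of agreements. -/
lemma sum_amp_mul_amp (x x' : Vec k → Vec k) :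
    ∑ p, amp x p * amp x' p = (2 ^ k)⁻¹ * ∑ y, if x y = x' y then 1 else 0 := by
  have h1 : ∀ p : Vec k × Vec k, amp x p * amp x' p = (2 ^ k)⁻¹ * (2 ^ k)⁻¹ * ∑ y, ∑ y',
      (chi p.1 y * chi p.1 y') *
        ((if x y = p.2 then 1 else 0) * (if x' y' = p.2 then 1 else 0)) := by
    intro p
    simp only [amp]
    rw [mul_mul_mul_comm, Finset.sum_mul_sum]
    congr 1
    refine Finset.sum_congr rfl fun y _ => Finset.sum_congr rfl fun y' _ => ?_
    split_ifs <;> simp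
  simp only [h1, ← Finset.mul_sum]
  rw [mul_assoc]
  congr 1
  calc (2 ^ k : ℝ)⁻¹ * ∑ p : Vec k × Vec k, ∑ y, ∑ y', (chi p.1 y * chi p.1 y') *
        ((if x y = p.2 then 1 else 0) * (if x' y' = p.2 then 1 else 0))
      = (2 ^ k : ℝ)⁻¹ * ∑ y, ∑ y', (∑ η : Vec k, chi η y * chi η y') *
        ∑ a, ((if x y = a then 1 else 0) * (if x' y' = a then 1 else 0)) := by
        congr 1
        rw [Finset.sum_comm]
        refine Finset.sum_congr rfl fun y _ => ?_
        rw [Finset.sum_comm]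
        refine Finset.sum_congr rfl fun y' _ => ?_
        rw [Fintype.sum_prod_type, Finset.sum_mul_sum]
    _ = ∑ y, if x y = x' y then 1 else 0 := by
        rw [Finset.mul_sum]
        refine Finset.sum_congr rfl fun y _ => ?_
        rw [Finset.sum_eq_single y]
        · simp [sum_chi_mul_chi, eq_comm]
        · intro y' _ hy
          rw [sum_chi_mul_chi, if_neg hy.symm, zero_mul]
        · simp

lemma sum_amp_sq (x : Vec k → Vec k) : ∑ p, amp x p ^ 2 = 1 := by
  simp only [pow_two, sum_amp_mul_amp]
  simp

/-- A table with period `s` is only sampled at frequencies orthogonal to `s`. -/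
lemma chi_eq_one_of_amp_ne_zero {x : Vec k → Vec k} {s : Vec k} (hs : ∀ y, x (y + s) = x y)
    {p : Vec k × Vec k} (hp : amp x p ≠ 0) : chi p.1 s = 1 := by
  have h : amp x p = chi p.1 s * amp x p := by
    have h1 : ∑ y, (if x y = p.2 then chi p.1 y else 0) =
        ∑ y, (if x (y + s) = p.2 then chi p.1 (y + s) else 0) :=
      (Equiv.sum_comp (Equiv.addRight s) fun y => if x y = p.2 then chi p.1 y else 0).symm
    conv_lhs => rw [amp, h1]
    simp only [amp, hs, chi_add, Finset.mul_sum]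
    refine Finset.sum_congr rfl fun y _ => ?_
    split_ifs
    · ring
    · simp
  have h2 : (chi p.1 s - 1) * amp x p = 0 := by linarith
  rcases mul_eq_zero.mp h2 with h3 | h3
  · linarith
  · exact absurd h3 hp

open Classical in
/-- For an injective table, half of the weight lies on frequencies orthogonal to `s ≠ 0`. -/
lemma sum_amp_sq_of_injective {x : Vec k → Vec k} (hx : Function.Injective x) {s : Vec k}
    (hs : s ≠ 0) : (∑ p, if chi p.1 s = 1 then amp x p ^ 2 else 0) = 1 / 2 := by
  have h1 : ∀ η, ∑ a, amp x (η, a) ^ 2 = (2 ^ k : ℝ)⁻¹ := by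
    intro η
    have hb : Function.Bijective x := Finite.injective_iff_bijective.mp hx
    rw [← hb.sum_comp fun a => amp x (η, a) ^ 2]
    have h2 : ∀ y, amp x (η, x y) ^ 2 = (2 ^ k : ℝ)⁻¹ ^ 2 := by
      intro y
      simp only [amp, hx.eq_iff, Finset.sum_ite_eq', Finset.mem_univ, if_true, mul_pow]
      rw [pow_two (chi η y), chi_mul_self, mul_one]
    simp only [h2, Finset.sum_const, Finset.card_univ, card_vec, nsmul_eq_mul]
    push_cast
    field_simp
  have h2 : ∀ η : Vec k, (if chi η s = 1 then (1 : ℝ) else 0) = (1 + chi η s) / 2 := by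
    intro η
    have h3 := chi_mul_self η s
    have h4 : (chi η s - 1) * (chi η s + 1) = 0 := by linarith
    rcases mul_eq_zero.mp h4 with h5 | h5
    · rw [if_pos (by linarith)]; linarith
    · rw [if_neg (by intro h6; linarith)]; linarith
  have h3 : (∑ p : Vec k × Vec k, if chi p.1 s = 1 then amp x p ^ 2 else 0) =
      ∑ η : Vec k, (if chi η s = 1 then (1 : ℝ) else 0) * (2 ^ k : ℝ)⁻¹ := by
    rw [Fintype.sum_prod_type]
    refine Finset.sum_congr rfl fun η _ => ?_
    split_ifs
    · rw [h1, one_mul]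
    · simp
  rw [h3, ← Finset.sum_mul]
  simp only [h2, ← Finset.sum_div, Finset.sum_add_distrib, sum_chi, if_neg hs, Finset.sum_const,
    Finset.card_univ, card_vec, nsmul_eq_mul]
  push_cast
  field_simp
  ring

end Fourier

section Simon

variable {k c m : ℕ}

/-- The tables `t` follow the pattern `ℓ`: table `i` is periodic if `ℓ i`, and injective
otherwise. -/
def TabOK (ℓ : Fin c → Bool) (t : Fin c → Vec k → Vec k) : Prop :=
  ∀ i, if ℓ i then ∃ s, s ≠ 0 ∧ ∀ y, t i (y + s) = t i y else Function.Injective (t i)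

/-- The joint amplitude of sampling each of the `c` tables `m` times. -/
noncomputable def jointAmp (m : ℕ) (t : Fin c → Vec k → Vec k)
    (κ : Fin c × Fin m → Vec k × Vec k) : ℝ := ∏ e, amp (t e.1) (κ e)

open Classical in
/-- The pattern inferred from the samples. -/
noncomputable def pattern (κ : Fin c × Fin m → Vec k × Vec k) (i : Fin c) : Bool :=
  decide (∃ s, s ≠ 0 ∧ ∀ j, chi (κ (i, j)).1 s = 1)

lemma sum_jointAmp_mul (t t' : Fin c → Vec k → Vec k) :
    ∑ κ, jointAmp m t κ * jointAmp m t' κ =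
      ∏ e : Fin c × Fin m, ∑ p, amp (t e.1) p * amp (t' e.1) p := by
  rw [Finset.prod_univ_sum]
  simp [jointAmp, Finset.prod_mul_distrib, Fintype.piFinset_univ]

lemma sum_jointAmp_sq (t : Fin c → Vec k → Vec k) : ∑ κ, jointAmp m t κ ^ 2 = 1 := by
  have h := sum_jointAmp_mul (m := m) t t
  simp only [← pow_two, sum_amp_sq, Finset.prod_const_one] at h
  exact h

open Classical in
lemma sum_jointAmp_sq_orthogonal {t : Fin c → Vec k → Vec k} {i : Fin c}
    (hi : Function.Injective (t i)) {s : Vec k} (hs : s ≠ 0) :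
    (∑ κ : Fin c × Fin m → Vec k × Vec k,
      if ∀ j, chi (κ (i, j)).1 s = 1 then jointAmp m t κ ^ 2 else 0) = (1 / 2) ^ m := by
  have h1 : ∀ κ : Fin c × Fin m → Vec k × Vec k,
      (if ∀ j, chi (κ (i, j)).1 s = 1 then jointAmp m t κ ^ 2 else 0) =
      ∏ e, if e.1 = i ∧ chi (κ e).1 s ≠ 1 then 0 else amp (t e.1) (κ e) ^ 2 := by
    intro κ
    split_ifs with h
    · rw [jointAmp, ← Finset.prod_pow]
      refine Finset.prod_congr rfl fun e _ => ?_
      rw [if_neg]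
      rintro ⟨rfl, h2⟩
      exact h2 (h e.2)
    · push Not at h
      obtain ⟨j, hj⟩ := h
      symm
      exact Finset.prod_eq_zero (Finset.mem_univ (i, j)) (if_pos ⟨rfl, hj⟩)
  simp only [h1]
  have h2 : ∀ e : Fin c × Fin m, (∑ p : Vec k × Vec k,
      if e.1 = i ∧ chi p.1 s ≠ 1 then 0 else amp (t e.1) p ^ 2) = if e.1 = i then 1 / 2 else 1 := by
    intro e
    by_cases he : e.1 = i
    · simp only [he, true_and, if_true, ← sum_amp_sq_of_injective hi hs]
      refine Finset.sum_congr rfl fun p _ => ?_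
      by_cases hc : chi p.1 s = 1 <;> simp [hc]
    · simp [he, sum_amp_sq]
  have h3 := Finset.prod_univ_sum (fun _ : Fin c × Fin m => (Finset.univ : Finset (Vec k × Vec k)))
    (fun e p => if e.1 = i ∧ chi p.1 s ≠ 1 then 0 else amp (t e.1) p ^ 2)
  rw [Fintype.piFinset_univ] at h3
  rw [← h3]
  simp only [h2]
  rw [Fintype.prod_prod_type]
  simp [Finset.prod_ite_eq']

open Classical in
/-- The inferred pattern is correct up to a small error. -/
lemma sum_jointAmp_sq_pattern_ne {t : Fin c → Vec k → Vec k} {ℓ : Fin c → Bool}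
    (ht : TabOK ℓ t) :
    (∑ κ : Fin c × Fin m → Vec k × Vec k, if pattern κ = ℓ then 0 else jointAmp m t κ ^ 2) ≤
      c * (2 ^ k * (1 / 2) ^ m) := by
  have h1 : ∀ κ : Fin c × Fin m → Vec k × Vec k,
      (if pattern κ = ℓ then 0 else jointAmp m t κ ^ 2) ≤
      ∑ i : Fin c, ∑ s : Vec k, if ℓ i = false ∧ s ≠ 0 ∧ ∀ j, chi (κ (i, j)).1 s = 1 then
        jointAmp m t κ ^ 2 else 0 := by
    intro κ
    have hnn : ∀ (i : Fin c) (s : Vec k), 0 ≤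
        if ℓ i = false ∧ s ≠ 0 ∧ ∀ j, chi (κ (i, j)).1 s = 1 then jointAmp m t κ ^ 2 else 0 := by
      intro i s
      split_ifs <;> positivity
    split_ifs with h
    · exact Finset.sum_nonneg fun i _ => Finset.sum_nonneg fun s _ => hnn i s
    · by_cases h0 : jointAmp m t κ = 0
      · simp [h0]
      · obtain ⟨i, hi⟩ := Function.ne_iff.mp h
        have hti := ht i
        cases hℓ : ℓ i with
        | true =>
          rw [hℓ] at hi hti
          simp only [if_true] at hti
          obtain ⟨s, hs, hper⟩ := hti
          refine absurd ?_ hi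
          simp only [pattern, decide_eq_true_eq]
          refine ⟨s, hs, fun j => chi_eq_one_of_amp_ne_zero hper (p := κ (i, j)) ?_⟩
          exact Finset.prod_ne_zero_iff.mp h0 (i, j) (Finset.mem_univ _)
        | false =>
          rw [hℓ] at hi
          simp only [pattern, Bool.not_eq_false, decide_eq_true_eq] at hi
          obtain ⟨s, hs, hj⟩ := hi
          calc jointAmp m t κ ^ 2 =
              if ℓ i = false ∧ s ≠ 0 ∧ ∀ j, chi (κ (i, j)).1 s = 1 then
                jointAmp m t κ ^ 2 else 0 := by rw [if_pos ⟨hℓ, hs, hj⟩]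
            _ ≤ ∑ s : Vec k, if ℓ i = false ∧ s ≠ 0 ∧ ∀ j, chi (κ (i, j)).1 s = 1 then
                jointAmp m t κ ^ 2 else 0 :=
              Finset.single_le_sum (f := fun s => if ℓ i = false ∧ s ≠ 0 ∧
                ∀ j, chi (κ (i, j)).1 s = 1 then jointAmp m t κ ^ 2 else 0)
                (fun s _ => hnn i s) (Finset.mem_univ s)
            _ ≤ _ := Finset.single_le_sum (f := fun i => ∑ s : Vec k, if ℓ i = false ∧ s ≠ 0 ∧
                ∀ j, chi (κ (i, j)).1 s = 1 then jointAmp m t κ ^ 2 else 0)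
                (fun i _ => Finset.sum_nonneg fun s _ => hnn i s) (Finset.mem_univ i)
  have h2 : ∀ (i : Fin c) (s : Vec k), (∑ κ : Fin c × Fin m → Vec k × Vec k,
      if ℓ i = false ∧ s ≠ 0 ∧ ∀ j, chi (κ (i, j)).1 s = 1 then jointAmp m t κ ^ 2 else 0) ≤
      (1 / 2) ^ m := by
    intro i s
    by_cases h : ℓ i = false ∧ s ≠ 0
    · have hti := ht i
      rw [h.1] at hti
      simp only [Bool.false_eq_true, if_false] at hti
      rw [← sum_jointAmp_sq_orthogonal hti h.2]
      refine le_of_eq (Finset.sum_congr rfl fun κ _ => ?_)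
      simp only [h.1, h.2, ne_eq, not_false_eq_true, true_and]
    · rw [Finset.sum_eq_zero]
      · positivity
      · intro κ _
        rw [if_neg]
        exact fun h3 => h ⟨h3.1, h3.2.1⟩
  calc _ ≤ ∑ κ : Fin c × Fin m → Vec k × Vec k, ∑ i : Fin c, ∑ s : Vec k,
        (if ℓ i = false ∧ s ≠ 0 ∧ ∀ j, chi (κ (i, j)).1 s = 1 then jointAmp m t κ ^ 2 else 0) :=
        Finset.sum_le_sum fun κ _ => h1 κ
    _ = ∑ i : Fin c, ∑ s : Vec k, ∑ κ : Fin c × Fin m → Vec k × Vec k,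
        (if ℓ i = false ∧ s ≠ 0 ∧ ∀ j, chi (κ (i, j)).1 s = 1 then jointAmp m t κ ^ 2 else 0) := by
        rw [Finset.sum_comm]
        refine Finset.sum_congr rfl fun i _ => Finset.sum_comm
    _ ≤ ∑ i : Fin c, ∑ s : Vec k, (1 / 2 : ℝ) ^ m :=
        Finset.sum_le_sum fun i _ => Finset.sum_le_sum fun s _ => h2 i s
    _ = c * (2 ^ k * (1 / 2) ^ m) := by
        simp

end Simon
end QC

namespace QC

/-! ### The function -/

/-- The And-Or gadgets: one for each bit of each entry of each of the `3 * k` tables. -/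
abbrev Gad (k : ℕ) := Fin (3 * k) × Vec k × Fin k

/-- The query positions: the And-Or matrices of the gadgets; the cells, indexed by patterns, each
holding for every gadget a claimed value, a row pointer and one column pointer per row; and `k`
parity bits. -/
abbrev Idx (k : ℕ) := (Gad k × Vec k × Vec k) ⊕
  ((Fin (3 * k) → Bool) × Gad k × Option (Option (Vec k) × Fin k)) ⊕ Fin k

section Function

variable {k : ℕ}

open Classical in
/-- The value of the And-Or gadget `g`. -/
noncomputable def andOr (z : Idx k → Fin 2) (g : Gad k) : Fin 2 :=
  if ∀ j, ∃ l, z (.inl (g, j, l)) = 1 then 1 else 0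

/-- The tables encoded by the gadgets. -/
noncomputable def tab (z : Idx k → Fin 2) (i : Fin (3 * k)) (y : Vec k) : Vec k :=
  fun β => andOr z (i, y, β)

/-- The tables claimed in the cell `ℓ`. -/
def certTab (z : Idx k → Fin 2) (ℓ : Fin (3 * k) → Bool) (i : Fin (3 * k)) (y : Vec k) : Vec k :=
  fun β => z (.inr (.inl (ℓ, (i, y, β), none)))

/-- The pointers of the cell `ℓ`. -/
def ptr (z : Idx k → Fin 2) (ℓ : Fin (3 * k) → Bool) (g : Gad k) (o : Option (Vec k)) : Vec k :=
  fun β => z (.inr (.inl (ℓ, g, some (o, β))))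

/-- The cell `ℓ` passes the test `(g, j)`: if it claims `1` for `g`, then its column pointer for
row `j` points to a `1`, and if it claims `0`, then column `j` of the row it points to is `0`. -/
def CertOK (z : Idx k → Fin 2) (ℓ : Fin (3 * k) → Bool) (g : Gad k) (j : Vec k) : Prop :=
  if z (.inr (.inl (ℓ, g, none))) = 1 then z (.inl (g, j, ptr z ℓ g (some j))) = 1
  else z (.inl (g, ptr z ℓ g none, j)) = 0

/-- The parity of the parity bits is even. -/
def ParOK (z : Idx k → Fin 2) : Prop := ∑ h, z (.inr (.inr h)) = 0

/-- The cell `ℓ` certifies that the tables follow the pattern `ℓ`. -/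
def Valid (z : Idx k → Fin 2) (ℓ : Fin (3 * k) → Bool) : Prop :=
  ParOK z ∧ TabOK ℓ (certTab z ℓ) ∧ ∀ p : Gad k × Vec k, CertOK z ℓ p.1 p.2

/-- Some cell is valid. -/
def Acc (z : Idx k → Fin 2) : Prop := ∃ ℓ, Valid z ℓ

lemma fin_two_ne_one {b : Fin 2} : b ≠ 1 ↔ b = 0 := by revert b; decide

lemma certTab_eq_tab {z : Idx k → Fin 2} {ℓ : Fin (3 * k) → Bool}
    (h : ∀ p : Gad k × Vec k, CertOK z ℓ p.1 p.2) : certTab z ℓ = tab z := by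
  ext i y β : 3
  simp only [certTab, tab, andOr]
  by_cases h1 : z (.inr (.inl (ℓ, (i, y, β), none))) = 1
  · rw [h1, if_pos]
    intro j
    have h2 := h ((i, y, β), j)
    simp only [CertOK, h1, if_true] at h2
    exact ⟨_, h2⟩
  · rw [fin_two_ne_one.mp h1, if_neg]
    intro h2
    obtain ⟨l, hl⟩ := h2 (ptr z ℓ (i, y, β) none)
    have h3 := h ((i, y, β), l)
    simp only [CertOK, h1, if_false] at h3
    rw [h3] at hl
    exact absurd hl (by decide)

end Function

section Kernel

variable {k : ℕ}

lemma GammaLe.neK_and {ι : Type} [Fintype ι] {P R : (ι → Fin 2) → Prop} {W W' : ℝ}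
    (hP : GammaLe (neK P) W) (hR : GammaLe (neK R) W') :
    GammaLe (neK fun z => P z ∧ R z) (W + W') := by
  refine (hP.neK_dep (g := fun _ => R) (fun _ => hR) hR.nonneg).of_determined _ ?_
  intro z z' h
  obtain ⟨h1, h2⟩ := Prod.ext_iff.mp h
  simp only at h1 h2
  rw [h1, h2]

lemma gammaLe_andOr (g : Gad k) : GammaLe (neK fun z => andOr z g) (2 ^ k) := by
  have h := GammaLe.neK_forall (E := Vec k) (W := √(Fintype.card (Vec k)) * 1)
    (P := fun j (z : Idx k → Fin 2) => ∃ l, z (.inl (g, j, l)) = 1) fun j =>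
      GammaLe.neK_exists fun l => (gammaLe_neK_bit (.inl (g, j, l))).of_determined _
        fun z z' hz => by simp only [hz]
  rw [mul_one, Real.mul_self_sqrt (by positivity), card_vec] at h
  rw [neK_congr (h' := fun z : Idx k → Fin 2 => ∀ j, ∃ l, z (.inl (g, j, l)) = 1)]
  · simpa using h
  · intro z z'
    simp only [andOr, eq_iff_iff]
    split_ifs with h1 h2 h2 <;> simp [h1, h2]

lemma gammaLe_tab (i : Fin (3 * k)) (y : Vec k) :
    GammaLe (neK fun z => tab z i y) (k * 2 ^ k) := by
  have h := GammaLe.neK_pi fun β => gammaLe_andOr (i, y, β)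
  rw [Fintype.card_fin] at h
  exact h

/-- The sampling kernel of a single table. -/
lemma gammaLe_amp (i : Fin (3 * k)) : GammaLe (fun z z' : Idx k → Fin 2 =>
    1 - ∑ p, amp (tab z i) p * amp (tab z' i) p) (k * 2 ^ k) := by
  have hN : √((2 ^ k : ℝ)⁻¹) ^ 2 = (2 ^ k)⁻¹ := Real.sq_sqrt (by positivity)
  have h := GammaLe.sum_gram (E := Vec k) (D := Unit) (A := 1) (by positivity)
    (fun y => gammaLe_tab i y) (fun _ _ _ => √((2 ^ k : ℝ)⁻¹)) (fun _ _ _ => √((2 ^ k : ℝ)⁻¹))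
    (by simp) (by simp)
  rw [one_mul] at h
  convert h using 1
  ext z z'
  simp only [Finset.univ_unique, Finset.sum_const, Finset.card_singleton, one_smul, ← pow_two, hN,
    sum_amp_mul_amp, ← Finset.mul_sum]
  have h1 : ∀ y, neK (fun z => tab z i y) z z' = 1 - if tab z i y = tab z' i y then 1 else 0 := by
    intro y
    simp only [neK]
    split_ifs <;> simp
  simp only [h1, Finset.sum_sub_distrib, Finset.sum_const, Finset.card_univ, card_vec]
  rw [mul_sub]
  congr 1
  simp

lemma gramLe_amp (i : Fin (3 * k)) : GramLe (fun z z' : Idx k → Fin 2 =>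
    ∑ p, amp (tab z i) p * amp (tab z' i) p) 1 :=
  ⟨_, inferInstance, fun z => amp (tab z i), fun z => amp (tab z i), fun _ _ => rfl,
    fun _ => (sum_amp_sq _).le, fun _ => (sum_amp_sq _).le⟩

lemma gammaLe_jointAmp (m : ℕ) : GammaLe (fun z z' : Idx k → Fin 2 =>
    1 - ∑ κ, jointAmp m (tab z) κ * jointAmp m (tab z') κ) (3 * k * m * (k * 2 ^ k)) := by
  have h := GammaLe.one_sub_prod (Finset.univ : Finset (Fin (3 * k) × Fin m))
    (fun e => gammaLe_amp e.1) (fun e => gramLe_amp e.1)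
  simpa only [sum_jointAmp_mul, Finset.card_univ, Fintype.card_prod, Fintype.card_fin,
    Nat.cast_mul, Nat.cast_ofNat] using h

lemma gammaLe_certOK (ℓ : Fin (3 * k) → Bool) (p : Gad k × Vec k) :
    GammaLe (neK fun z : Idx k → Fin 2 => CertOK z ℓ p.1 p.2) (2 * k + 2) := by
  obtain ⟨g, j⟩ := p
  have h1 := GammaLe.neK_pi (E := Option (Bool × Fin k)) fun q => gammaLe_neK_bit (ι := Idx k)
    (.inr (.inl (ℓ, g, q.map fun p => (if p.1 then some j else none, p.2))))
  have h2 := h1.neK_dep (g := fun a z => z (if a none = 1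
    then .inl (g, j, fun β => a (some (true, β)))
    else .inl (g, fun β => a (some (false, β)), j))) (fun a => gammaLe_neK_bit _) zero_le_one
  refine (h2.of_determined _ ?_).mono ?_
  · intro z z' hz
    obtain ⟨h3, h4⟩ := Prod.ext_iff.mp hz
    simp only at h3
    rw [← h3] at h4
    have h5 : ∀ q : Option (Bool × Fin k), _ := fun q => congrFun h3 q
    have h6 := h5 none
    have h7 : ptr z ℓ g (some j) = ptr z' ℓ g (some j) := funext fun β => h5 (some (true, β))
    have h8 : ptr z ℓ g none = ptr z' ℓ g none := funext fun β => h5 (some (false, β))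
    simp only [Option.map_none] at h4 h6
    simp only [CertOK, ← h6, ← h7, ← h8]
    split_ifs with h9
    · simp only [h9, if_true, Option.map_some] at h4
      exact iff_of_eq (congrArg (· = 1) h4)
    · simp only [h9, if_false, Option.map_some] at h4
      exact iff_of_eq (congrArg (· = 0) h4)
  · simp
    linarith

lemma gammaLe_valid (hk : 1 ≤ k) (ℓ : Fin (3 * k) → Bool) :
    GammaLe (neK fun z : Idx k → Fin 2 => Valid z ℓ) (12 * k ^ 2 * 2 ^ k) := by
  have : NeZero k := ⟨by lia⟩
  have hk' : (1 : ℝ) ≤ k := by exact_mod_cast hk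
  have h1 : GammaLe (neK fun z : Idx k → Fin 2 => ParOK z) (k * 1) := by
    have := GammaLe.neK_pi fun h => gammaLe_neK_bit (ι := Idx k) (.inr (.inr h))
    rw [Fintype.card_fin] at this
    refine this.of_determined _ fun z z' hz => ?_
    have h2 : ∀ h, z (.inr (.inr h)) = z' (.inr (.inr h)) := fun h => congrFun hz h
    simp only [ParOK, h2]
  have h2 : GammaLe (neK fun z : Idx k → Fin 2 => TabOK ℓ (certTab z ℓ))
      (3 * k ^ 2 * 2 ^ k) := by
    have := GammaLe.neK_pi fun g => gammaLe_neK_bit (ι := Idx k) (.inr (.inl (ℓ, g, none)))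
    refine (this.of_determined _ fun z z' hz => ?_).mono ?_
    · have h3 : certTab z ℓ = certTab z' ℓ := by
        ext i y β : 3
        exact congrFun hz (i, y, β)
      rw [h3]
    · simp
      apply le_of_eq
      ring
  have h3 := GammaLe.neK_forall (fun p => gammaLe_certOK ℓ p)
  have h4 : √(Fintype.card (Gad k × Vec k)) ≤ 2 * k * 2 ^ k := by
    rw [Real.sqrt_le_left (by positivity)]
    simp
    nlinarith [show (0 : ℝ) ≤ k ^ 2 * (2 ^ k) ^ 2 by positivity]
  refine (h1.neK_and (h2.neK_and h3)).mono ?_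
  have h5 : (1 : ℝ) ≤ 2 ^ k := one_le_pow₀ (by norm_num)
  have h6 : (k : ℝ) ≤ k ^ 2 := by nlinarith
  have h7 : (k : ℝ) ≤ k ^ 2 * 2 ^ k := by nlinarith
  have h8 : (k : ℝ) * 2 ^ k ≤ k ^ 2 * 2 ^ k := by gcongr
  have h9 : √(Fintype.card (Gad k × Vec k)) * (2 * k + 2) ≤ 2 * k * 2 ^ k * (2 * k + 2) := by
    gcongr
  nlinarith

lemma error_bound (k : ℕ) :
    100 * (((3 * k : ℕ) : ℝ) * (2 ^ k * (1 / 2) ^ (3 * k + 10))) ≤ 1 / 10 := by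
  have h1 : (2 : ℝ) ^ k * (1 / 2) ^ (3 * k + 10) = (1 / 4 ^ k) / 1024 := by
    rw [pow_add, pow_mul, ← mul_assoc, ← mul_pow]
    rw [show (2 : ℝ) * (1 / 2) ^ 3 = 1 / 4 by norm_num, div_pow, one_pow]
    norm_num
    ring
  have h2 : (3 * k : ℝ) ≤ 4 ^ k := by
    have := one_add_mul_le_pow (a := (3 : ℝ)) (by norm_num) k
    norm_num at this
    linarith
  rw [h1]
  push_cast
  rw [show (100 : ℝ) * (3 * k * (1 / 4 ^ k / 1024)) = (3 * k / 4 ^ k) * (100 / 1024) by ring]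
  have h3 : (3 * k : ℝ) / 4 ^ k ≤ 1 := by
    rw [div_le_one (by positivity)]
    exact h2
  linarith

open Classical in
/-- The quantum upper bound. -/
theorem exists_qAlg_acc (hk : 1 ≤ k) {n : ℕ} (hn : 0 < n) (e : Idx k → Fin n)
    (f : PartialFn (Fin n) fun _ => 2) (hf : ∀ z, f z = some (decide (Acc (z ∘ e)))) :
    ∃ A : QAlg (Fin n) (fun _ => 2), A.T ≤ 5101 * (k ^ 3 * 2 ^ k) ∧
      ∀ x b, f x = some b → (2 : ℝ) / 3 ≤ A.outProb x (some b) := by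
  have hk' : (1 : ℝ) ≤ k := by exact_mod_cast hk
  set m := 3 * k + 10 with hm
  let φ : (Idx k → Fin 2) → (Fin (3 * k) × Fin m → Vec k × Vec k) → ℝ := fun z => jointAmp m (tab z)
  have hφ : ∀ z, ∑ κ, φ z κ ^ 2 = 1 := fun z => sum_jointAmp_sq _
  have hK1 := gammaLe_jointAmp (k := k) m
  have hK2 := GammaLe.sum_gram (D := Unit) (A := 1) (by positivity)
    (fun κ => gammaLe_valid hk (pattern κ)) (fun κ z _ => φ z κ) (fun κ z _ => φ z κ)
    (by simp [hφ]) (by simp [hφ])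
  have hW : (3 * k * m * (k * 2 ^ k) + 1 * (12 * k ^ 2 * 2 ^ k) : ℝ) ≤ 51 * (k ^ 3 * 2 ^ k) := by
    have h5 : (k : ℝ) ^ 2 * 2 ^ k ≤ k ^ 3 * 2 ^ k := by gcongr; norm_num
    rw [hm]
    push_cast
    nlinarith
  have hK := ((hK1.add hK2).mono hW).comap e
  have h2k : (1 : ℝ) ≤ k ^ 3 * 2 ^ k := one_le_mul_of_one_le_of_one_le (one_le_pow₀ hk')
    (one_le_pow₀ (by norm_num))
  suffices h : ∃ A : QAlg (Fin n) (fun _ => 2), A.T ≤ ⌈100 * (51 * (k ^ 3 * 2 ^ k : ℝ))⌉₊ + 1 ∧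
      ∀ x b, f x = some b → (2 : ℝ) / 3 ≤ A.outProb x (some b) by
    obtain ⟨A, hA, hA'⟩ := h
    refine ⟨A, hA.trans ?_, hA'⟩
    rw [show (100 * (51 * (k ^ 3 * 2 ^ k)) : ℝ) = ((5100 * (k ^ 3 * 2 ^ k) : ℕ) : ℝ) by
      push_cast; ring, Nat.ceil_natCast]
    have : 1 ≤ k ^ 3 * 2 ^ k := by exact_mod_cast h2k
    lia
  refine exists_qAlg_of_gammaLe hn f (by linarith) hK
    (fun z κ => φ (z ∘ e) κ / 10)
    (fun z κ => if Acc (z ∘ e) ∧ ¬ Valid (z ∘ e) (pattern κ) then 10 * φ (z ∘ e) κ else 0) ?_ ?_ ?_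
  · intro x y hx hy
    rw [hf, Option.some_inj] at hx hy
    have hx' : ¬ Acc (x ∘ e) := of_decide_eq_false hx
    have hy' : Acc (y ∘ e) := of_decide_eq_true hy
    have h1 : ∀ ℓ, ¬ Valid (x ∘ e) ℓ := fun ℓ h => hx' ⟨ℓ, h⟩
    simp only [Finset.univ_unique, Finset.sum_singleton]
    rw [add_assoc, ← Finset.sum_add_distrib, sub_add_eq_add_sub, sub_eq_iff_eq_add, add_right_inj]
    refine Finset.sum_congr rfl fun κ _ => ?_
    simp only [neK, h1, hy', true_and, eq_iff_iff, false_iff]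
    by_cases h2 : Valid (y ∘ e) (pattern κ)
    · simp [h2, φ]
    · simp only [h2, not_false_eq_true, if_true, mul_zero, zero_add, φ]
      ring
  · intro x
    simp only [div_pow, ← Finset.sum_div, hφ]
    norm_num
  · intro y
    by_cases hy : Acc (y ∘ e)
    · obtain ⟨ℓ, hℓ⟩ := hy
      have ht : TabOK ℓ (tab (y ∘ e)) := by
        rw [← certTab_eq_tab hℓ.2.2]
        exact hℓ.2.1
      refine le_trans ?_ (error_bound k)
      refine le_trans ?_ (mul_le_mul_of_nonneg_left (sum_jointAmp_sq_pattern_ne (m := m) ht)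
        (by norm_num))
      rw [Finset.mul_sum]
      refine Finset.sum_le_sum fun κ _ => ?_
      by_cases h1 : pattern κ = ℓ
      · simp [h1, hℓ]
      · rw [if_neg h1]
        split_ifs
        · rw [mul_pow]
          norm_num [φ]
        · rw [zero_pow two_ne_zero]
          positivity
    · simp [hy]

end Kernel
end QC

namespace QC

/-! ### Queries of a decision tree -/

section Queries

variable {ι : Type} {α : ι → ℕ} {L : Type}

open Classical in
/-- The positions queried by a decision tree on a given input. -/
noncomputable def DTree.queried : DTree ι α L → Input ι α → Finset ι
  | .leaf _, _ => ∅
  | .node i child, x => insert i (DTree.queried (child (x i)) x)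

open Classical in
/-- The number of queries in the set `D`, on a given input. -/
noncomputable def DTree.costOn (D : Set ι) : DTree ι α L → Input ι α → ℕ
  | .leaf _, _ => 0
  | .node i child, x => DTree.costOn D (child (x i)) x + if i ∈ D then 1 else 0

lemma DTree.depth_child_lt (i : ι) (child : Fin (α i) → DTree ι α L) (a : Fin (α i)) :
    (child a).depth + 1 ≤ (DTree.node i child).depth := by
  simp only [DTree.depth, add_le_add_iff_right]
  exact Finset.le_sup (f := fun a => (child a).depth) (Finset.mem_univ a)

lemma DTree.card_queried_le (T : DTree ι α L) (x : Input ι α) : (T.queried x).card ≤ T.depth := by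
  classical
  induction T with
  | leaf => simp [DTree.queried]
  | node i child ih =>
    simp only [DTree.queried]
    refine (Finset.card_insert_le _ _).trans ?_
    exact (Nat.add_le_add_right (ih (x i)) 1).trans (DTree.depth_child_lt i child (x i))

lemma DTree.sum_costOn_le {E : Type} [Fintype E] {D : E → Set ι}
    (hD : ∀ i e e', i ∈ D e → i ∈ D e' → e = e') (T : DTree ι α L) (x : Input ι α) :
    ∑ e, T.costOn (D e) x ≤ T.depth := by
  classical
  induction T with
  | leaf => simp [DTree.costOn]
  | node i child ih =>
    simp only [DTree.costOn, Finset.sum_add_distrib]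
    refine le_trans (Nat.add_le_add (ih (x i)) ?_) (DTree.depth_child_lt i child (x i))
    rw [Finset.sum_boole, Nat.cast_id, Finset.card_le_one]
    intro e he e' he'
    exact hD i e e' (Finset.mem_filter.mp he).2 (Finset.mem_filter.mp he').2

lemma DTree.queried_congr {T : DTree ι α L} {x x' : Input ι α} (h : ∀ i ∈ T.queried x, x i = x' i) :
    T.queried x' = T.queried x ∧ T.eval x' = T.eval x := by
  induction T with
  | leaf => simp [DTree.queried, DTree.eval]
  | node i child ih =>
    simp only [DTree.queried, Finset.mem_insert, forall_eq_or_imp] at h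
    simp only [DTree.queried, DTree.eval, ← h.1]
    exact ⟨by rw [(ih (x i) h.2).1], (ih (x i) h.2).2⟩

end Queries

/-! ### Searching for the critical position of an And-Or gadget -/

section Gadget

variable {V : Type}

/-- The matrix entry `(j, l)` of the hard And-Or gadget with value `v`: every row `j` has at most a
single `1`, in column `ω.2 j`, and the critical row is `ω.1`. -/
def gadVal [DecidableEq V] (v : Fin 2) (ω : V × (V → V)) (j l : V) : Fin 2 :=
  if l = ω.2 j then (if j = ω.1 then v else 1) else 0

variable [Fintype V]

/-- The potential of a box of hard gadgets. -/
noncomputable def gadPot (A : Finset V) (B : V → Finset V) : ℝ :=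
  2 / Fintype.card V * (Fintype.card V - A.card) +
    16 / Fintype.card V ^ 2 * ∑ j ∈ A, (Fintype.card V - (B j).card : ℝ)

lemma gadPot_step {N a b φ : ℝ} (ha : 1 ≤ a) (ha' : a ≤ N) (hb : 1 ≤ b) (hb' : b ≤ N)
    (hφ : 2 / N * (N - a) + 16 / N ^ 2 * (N - b) ≤ φ) :
    1 + (a - 1) * (φ + 2 / N - 16 / N ^ 2 * (N - b)) + a * (b - 1) * (φ + 16 / N ^ 2) ≤
      (24 / N ^ 2 + φ) * (a * b) := by
  have hN : 0 < N := by linarith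
  obtain ⟨u, hu⟩ : ∃ u, u = 1 / N := ⟨_, rfl⟩
  have huN : u * N = 1 := by rw [hu]; field_simp
  have hu0 : 0 < u := by rw [hu]; positivity
  rw [show 2 / N * (N - a) + 16 / N ^ 2 * (N - b) = 2 * (1 - a * u) + 16 * u * (1 - b * u) by
    rw [hu]; field_simp] at hφ
  rw [show 2 / N = 2 * u by rw [hu]; ring, show 16 / N ^ 2 * (N - b) = 16 * u * (1 - b * u) by
    rw [hu]; field_simp, show 16 / N ^ 2 = 16 * u ^ 2 by rw [hu]; ring,
    show 24 / N ^ 2 = 24 * u ^ 2 by rw [hu]; ring]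
  have hau : 0 < a * u := by positivity
  have hbu : 0 < b * u := by positivity
  have hau' : a * u ≤ 1 := by nlinarith
  have hbu' : b * u ≤ 1 := by nlinarith
  suffices h : 1 - φ + (a - 1) * (2 * u - 16 * u * (1 - b * u)) ≤ 8 * (a * u) * (b * u) by
    nlinarith [mul_nonneg (mul_nonneg hau.le hu0.le) (show (0 : ℝ) ≤ 1 by norm_num)]
  rcases le_total (b * u) (1 / 2) with h | h
  · nlinarith [mul_nonneg (sub_nonneg.mpr ha) (mul_nonneg hu0.le (sub_nonneg.mpr h)),
      mul_pos hau hbu, mul_nonneg hu0.le (sub_nonneg.mpr h)]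
  · have h1 : (a - 1) * (2 * u - 16 * u * (1 - b * u)) ≤ 2 * (a * u) := by
      nlinarith [mul_nonneg (sub_nonneg.mpr ha) (mul_nonneg hu0.le (sub_nonneg.mpr hbu'))]
    have h2 : 4 * (a * u) ≤ 8 * (a * u) * (b * u) := by nlinarith
    have h3 : 0 ≤ u * (1 - b * u) := mul_nonneg hu0.le (sub_nonneg.mpr hbu')
    rcases le_total (a * u) (1 / 2) with h' | h'
    · linarith
    · nlinarith

lemma gadPot_nonneg (A : Finset V) (B : V → Finset V) : 0 ≤ gadPot A B := by
  have h : ∀ s : Finset V, (0 : ℝ) ≤ Fintype.card V - s.card := fun s => by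
    rw [sub_nonneg]
    exact_mod_cast Finset.card_le_univ s
  exact add_nonneg (mul_nonneg (by positivity) (h A))
    (mul_nonneg (by positivity) (Finset.sum_nonneg fun j _ => h (B j)))

lemma le_gadPot {A : Finset V} (B : V → Finset V) {j : V} (hj : j ∈ A) :
    2 / Fintype.card V * (Fintype.card V - A.card : ℝ) +
      16 / Fintype.card V ^ 2 * (Fintype.card V - (B j).card) ≤ gadPot A B := by
  rw [gadPot]
  gcongr
  refine Finset.single_le_sum (f := fun j => (Fintype.card V - (B j).card : ℝ)) (fun i _ => ?_) hj
  rw [sub_nonneg]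
  exact_mod_cast Finset.card_le_univ (B i)

variable [DecidableEq V]

/-- The box of hard gadgets with critical row in `A` and columns in `B`. -/
def gadBox (A : Finset V) (B : V → Finset V) : Finset (V × (V → V)) :=
  A ×ˢ Fintype.piFinset B

lemma gadBox_filter_snd (A : Finset V) (B : V → Finset V) (j : V) (P : V → Prop)
    [DecidablePred P] :
    (gadBox A B).filter (fun ω => P (ω.2 j)) =
      gadBox A (Function.update B j ((B j).filter P)) := by
  ext ω
  simp only [gadBox, Finset.mem_filter, Finset.mem_product, Fintype.mem_piFinset, and_assoc,
    and_congr_right_iff]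
  intro _
  constructor
  · rintro ⟨h1, h2⟩ j'
    by_cases hj : j' = j
    · subst hj
      simp [h1, h2]
    · simpa [hj] using h1 j'
  · intro h
    have hj := h j
    simp only [Function.update_self, Finset.mem_filter] at hj
    refine ⟨fun j' => ?_, hj.2⟩
    by_cases hj' : j' = j
    · subst hj'
      exact hj.1
    · simpa [hj'] using h j'

lemma gadBox_filter_fst (A : Finset V) (B : V → Finset V) (P : V → Prop)
    [DecidablePred P] :
    (gadBox A B).filter (fun ω => P ω.1) = gadBox (A.filter P) B := by
  ext ω
  simp only [gadBox, Finset.mem_filter, Finset.mem_product]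
  tauto

lemma card_gadBox_update (A : Finset V) (B : V → Finset V) (j : V) (C : Finset V) :
    ((gadBox A (Function.update B j C)).card : ℝ) =
      A.card * C.card * ∏ i ∈ Finset.univ \ {j}, ((B i).card : ℝ) := by
  rw [gadBox, Finset.card_product, Fintype.card_piFinset]
  have h : ∀ i, (Function.update B j C i).card =
      Function.update (fun i => (B i).card) j C.card i := fun i =>
    Function.apply_update (fun _ (s : Finset V) => s.card) B j C i
  simp only [h, Finset.prod_update_of_mem (Finset.mem_univ j)]
  push_cast
  ring

lemma gadPot_update_erase {A : Finset V} (B : V → Finset V) {j l : V} (hj : j ∈ A)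
    (hl : l ∈ B j) : gadPot A (Function.update B j ((B j).filter (· ≠ l))) =
      gadPot A B + 16 / Fintype.card V ^ 2 := by
  have h1 : ∑ i ∈ A.erase j, (Fintype.card V -
      (Function.update B j ((B j).filter (· ≠ l)) i).card : ℝ) =
      ∑ i ∈ A.erase j, (Fintype.card V - (B i).card : ℝ) :=
    Finset.sum_congr rfl fun i hi => by rw [Function.update_of_ne (Finset.ne_of_mem_erase hi)]
  rw [gadPot, gadPot, ← Finset.add_sum_erase A _ hj, h1, ← Finset.add_sum_erase A _ hj,
    Function.update_self, Finset.filter_ne', Finset.card_erase_of_mem hl,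
    Nat.cast_pred (Finset.card_pos.mpr ⟨l, hl⟩)]
  ring

lemma gadPot_erase_update {A : Finset V} (B : V → Finset V) {j : V} (hj : j ∈ A) (C : Finset V) :
    gadPot (A.filter (· ≠ j)) (Function.update B j C) = gadPot A B + 2 / Fintype.card V -
      16 / Fintype.card V ^ 2 * (Fintype.card V - (B j).card) := by
  rw [Finset.filter_ne']
  have h1 : ∑ i ∈ A.erase j, (Fintype.card V - (Function.update B j C i).card : ℝ) =
      ∑ i ∈ A.erase j, (Fintype.card V - (B i).card : ℝ) :=
    Finset.sum_congr rfl fun i hi => by rw [Function.update_of_ne (Finset.ne_of_mem_erase hi)]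
  rw [gadPot, gadPot, h1, ← Finset.add_sum_erase A _ hj, Finset.card_erase_of_mem hj,
    Nat.cast_pred (Finset.card_pos.mpr ⟨j, hj⟩)]
  ring

lemma sum_gadBox_split (A : Finset V) (B : V → Finset V) (j l : V) (F : V × (V → V) → ℝ) :
    ∑ ω ∈ gadBox A B, F ω =
      ∑ ω ∈ gadBox A (Function.update B j ((B j).filter (· ≠ l))), F ω +
      (∑ ω ∈ gadBox (A.filter (· ≠ j)) (Function.update B j ((B j).filter (· = l))), F ω +
      ∑ ω ∈ gadBox (A.filter (· = j)) (Function.update B j ((B j).filter (· = l))), F ω) := by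
  rw [← gadBox_filter_fst A _ (· ≠ j), ← gadBox_filter_fst A _ (· = j),
    ← gadBox_filter_snd A B j (· ≠ l), ← gadBox_filter_snd A B j (· = l)]
  have h3 := Finset.sum_filter_add_sum_filter_not (gadBox A B) (fun ω => ω.2 j = l) F
  have h4 := Finset.sum_filter_add_sum_filter_not
    ((gadBox A B).filter fun ω => ω.2 j = l) (fun ω => ω.1 = j) F
  linarith

/-- A query to the entry `(j, l)` increases the expected potential by at most `24 / N ^ 2`. -/
lemma gadPot_split (A : Finset V) (B : V → Finset V) (j l : V) :
    ((gadBox A (Function.update B j ((B j).filter (· ≠ l)))).card : ℝ) *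
      (gadPot A (Function.update B j ((B j).filter (· ≠ l))) - 24 / Fintype.card V ^ 2) +
      ((gadBox (A.filter (· ≠ j)) (Function.update B j ((B j).filter (· = l)))).card *
      (gadPot (A.filter (· ≠ j)) (Function.update B j ((B j).filter (· = l))) -
        24 / Fintype.card V ^ 2) +
      (gadBox (A.filter (· = j)) (Function.update B j ((B j).filter (· = l)))).card *
      (1 - 24 / Fintype.card V ^ 2)) ≤ (gadBox A B).card * gadPot A B := by
  have hsplit := sum_gadBox_split A B j l
  have hbox := card_gadBox_update A B j (B j)
  rw [Function.update_eq_self] at hbox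
  set c : ℝ := 24 / Fintype.card V ^ 2 with hc
  have hc0 : 0 ≤ c := by positivity
  by_cases hl : l ∈ B j
  · by_cases hj : j ∈ A
    · rw [card_gadBox_update, card_gadBox_update, card_gadBox_update, hbox,
        gadPot_update_erase B hj hl, gadPot_erase_update B hj]
      simp only [Finset.filter_ne', Finset.filter_eq', hl, hj, if_true, Finset.card_singleton,
        Finset.card_erase_of_mem, Nat.cast_pred (Finset.card_pos.mpr ⟨l, hl⟩),
        Nat.cast_pred (Finset.card_pos.mpr ⟨j, hj⟩)]
      have hA1 : (1 : ℝ) ≤ A.card := by exact_mod_cast Finset.card_pos.mpr ⟨j, hj⟩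
      have hB1 : (1 : ℝ) ≤ (B j).card := by exact_mod_cast Finset.card_pos.mpr ⟨l, hl⟩
      have hA2 : (A.card : ℝ) ≤ Fintype.card V := by exact_mod_cast Finset.card_le_univ A
      have hB2 : ((B j).card : ℝ) ≤ Fintype.card V := by
        exact_mod_cast Finset.card_le_univ (B j)
      have h3 := gadPot_step hA1 hA2 hB1 hB2 (le_gadPot B hj)
      have h4 : 0 ≤ ∏ i ∈ Finset.univ \ {j}, ((B i).card : ℝ) :=
        Finset.prod_nonneg fun i _ => Nat.cast_nonneg _
      have h5 := mul_le_mul_of_nonneg_right h3 h4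
      rw [← hc] at h5
      nlinarith
    · have h3 : gadBox (A.filter (· = j)) (Function.update B j ((B j).filter (· = l))) = ∅ := by
        simp [gadBox, Finset.filter_eq', hj]
      have h4 : A.filter (· ≠ j) = A := by simp [Finset.filter_ne', hj]
      have h5 : ∀ C, gadPot A (Function.update B j C) = gadPot A B := by
        intro C
        simp only [gadPot]
        congr 2
        refine Finset.sum_congr rfl fun i hi => ?_
        rw [Function.update_of_ne fun h : i = j => hj (h ▸ hi)]
      rw [h3, h4, h5, h5]
      have h6 := hsplit fun _ => 1
      rw [h3, h4] at h6
      simp only [Finset.sum_const, nsmul_eq_mul, mul_one, Finset.card_empty, Nat.cast_zero,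
        add_zero] at h6
      rw [h6]
      simp only [Finset.card_empty, Nat.cast_zero, zero_mul, add_zero]
      rw [← add_mul]
      gcongr
      linarith
  · have h3 : (B j).filter (· = l) = ∅ := by simp [Finset.filter_eq', hl]
    have h4 : (B j).filter (· ≠ l) = B j := by simp [Finset.filter_ne', hl]
    rw [h4, Function.update_eq_self, h3, card_gadBox_update, card_gadBox_update]
    simp only [Finset.card_empty, Nat.cast_zero, zero_mul, mul_zero, add_zero]
    gcongr
    linarith

variable {ι L : Type}

open Classical in
lemma sum_touch_box {ins : V → V → ι} (hins : ∀ j l j' l', ins j l = ins j' l' → j = j' ∧ l = l')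
    {v : Fin 2} {H : V × (V → V) → ι → Fin 2}
    (hH : ∀ ω j l, H ω (ins j l) = gadVal v ω j l)
    (hH' : ∀ i, (∀ j l, i ≠ ins j l) → ∀ ω ω', H ω i = H ω' i)
    (T : DTree ι (fun _ => 2) L) (A : Finset V) (B : V → Finset V) :
    (∑ ω ∈ gadBox A B, if ins ω.1 (ω.2 ω.1) ∈ T.queried (H ω) then (1 : ℝ) else 0) ≤
      ∑ ω ∈ gadBox A B,
        (24 / Fintype.card V ^ 2 * T.costOn {i | ∃ j l, i = ins j l} (H ω) + gadPot A B) := by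
  induction T generalizing A B with
  | leaf =>
    simp only [DTree.queried, Finset.notMem_empty, if_false, Finset.sum_const_zero]
    exact Finset.sum_nonneg fun ω _ => add_nonneg (by positivity) (gadPot_nonneg A B)
  | node i child ih =>
    set c : ℝ := 24 / Fintype.card V ^ 2 with hc
    have hc0 : 0 ≤ c := by positivity
    by_cases hi : ∀ j l, i ≠ ins j l
    · rcases (gadBox A B).eq_empty_or_nonempty with h0 | ⟨ω₀, -⟩
      · simp [h0]
      have h1 : ∀ ω : V × (V → V), ins ω.1 (ω.2 ω.1) ≠ i := fun ω => (hi _ _).symm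
      have h2 : i ∉ {i | ∃ j l, i = ins j l} := by
        rintro ⟨j, l, h⟩
        exact hi j l h
      simp only [DTree.queried, DTree.costOn, Finset.mem_insert, h1, false_or, h2, if_false,
        add_zero, hH' i hi _ ω₀]
      exact ih _ A B
    · push Not at hi
      obtain ⟨j, l, rfl⟩ := hi
      have h2 : ins j l ∈ {i | ∃ j l, i = ins j l} := ⟨j, l, rfl⟩
      have hcrit : ∀ ω : V × (V → V), ins ω.1 (ω.2 ω.1) = ins j l → ω.2 j = l ∧ ω.1 = j := by
        intro ω h
        obtain ⟨h3, h4⟩ := hins _ _ _ _ h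
        rw [h3] at h4
        exact ⟨h4, h3⟩
      set t : V × (V → V) → ℝ := fun ω =>
        if ins ω.1 (ω.2 ω.1) ∈ (DTree.node (ins j l) child).queried (H ω) then (1 : ℝ) else 0
        with ht
      set K : V × (V → V) → ℝ := fun ω =>
        c * ((DTree.node (ins j l) child).costOn {i | ∃ j l, i = ins j l} (H ω) : ℕ) with hK
      have hstep : ∀ (a : Fin 2) (A' : Finset V) (B' : V → Finset V),
          (∀ ω ∈ gadBox A' B', H ω (ins j l) = a ∧ ins ω.1 (ω.2 ω.1) ≠ ins j l) →
          ∑ ω ∈ gadBox A' B', t ω ≤ ∑ ω ∈ gadBox A' B', K ω +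
            (gadBox A' B').card * (gadPot A' B' - c) := by
        intro a A' B' h
        have h3 := ih a A' B'
        rw [← nsmul_eq_mul, ← Finset.sum_const, ← Finset.sum_add_distrib]
        refine le_of_eq_of_le ?_ (h3.trans (le_of_eq ?_))
        · refine Finset.sum_congr rfl fun ω hω => ?_
          simp only [ht, DTree.queried, Finset.mem_insert, (h ω hω).2, false_or, (h ω hω).1]
        · refine Finset.sum_congr rfl fun ω hω => ?_
          simp only [hK, DTree.costOn, (h ω hω).1, if_pos h2]
          push_cast
          ring
      have hS3 : ∀ s : Finset (V × (V → V)), ∑ ω ∈ s, t ω ≤ ∑ ω ∈ s, K ω + s.card * (1 - c) := by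
        intro s
        rw [← nsmul_eq_mul, ← Finset.sum_const, ← Finset.sum_add_distrib]
        refine Finset.sum_le_sum fun ω _ => ?_
        have h3 : t ω ≤ 1 := by
          simp only [ht]
          split_ifs <;> norm_num
        have h4 : c ≤ K ω := by
          simp only [hK, DTree.costOn, if_pos h2]
          push_cast
          nlinarith [mul_nonneg hc0 (Nat.cast_nonneg (α := ℝ)
            ((child (H ω (ins j l))).costOn {i | ∃ j l, i = ins j l} (H ω)))]
        linarith
      have hsplit := sum_gadBox_split A B j l
      have hS1 := hstep 0 A (Function.update B j ((B j).filter (· ≠ l))) <| by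
        intro ω hω
        rw [← gadBox_filter_snd A B j (· ≠ l), Finset.mem_filter] at hω
        refine ⟨?_, fun h => hω.2 (hcrit ω h).1⟩
        rw [hH, gadVal, if_neg (Ne.symm hω.2)]
      have hS2 := hstep 1 (A.filter (· ≠ j)) (Function.update B j ((B j).filter (· = l))) <| by
        intro ω hω
        rw [← gadBox_filter_fst A _ (· ≠ j), Finset.mem_filter,
          ← gadBox_filter_snd A B j (· = l), Finset.mem_filter] at hω
        refine ⟨?_, fun h => hω.2 (hcrit ω h).2⟩
        rw [hH, gadVal, if_pos hω.1.2.symm, if_neg (Ne.symm hω.2)]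
      have hS3' := hS3 (gadBox (A.filter (· = j)) (Function.update B j ((B j).filter (· = l))))
      rw [hsplit t, Finset.sum_add_distrib, hsplit K, Finset.sum_const, nsmul_eq_mul]
      refine (add_le_add hS1 (add_le_add hS2 hS3')).trans ?_
      have h := gadPot_split A B j l
      linarith

end Gadget
end QC

namespace QC

/-! ### Hard inputs -/

section HardInputs

variable {k : ℕ}

/-- The randomness hidden in the And-Or gadgets. -/
abbrev Hidden (k : ℕ) := Gad k → Vec k × (Vec k → Vec k)

/-- The hard input with tables `x` and empty cells. -/
def hardIn (x : Fin (3 * k) → Vec k → Vec k) (ω : Hidden k) : Idx k → Fin 2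
  | .inl p => gadVal (x p.1.1 p.1.2.1 p.1.2.2) (ω p.1) p.2.1 p.2.2
  | .inr _ => 0

/-- The hard input with tables `x`, a correct certificate in the cell `b`, and parity bits `w`. -/
def certIn (x : Fin (3 * k) → Vec k → Vec k) (ω : Hidden k) (b : Fin (3 * k) → Bool) (w : Vec k) :
    Idx k → Fin 2
  | .inl p => gadVal (x p.1.1 p.1.2.1 p.1.2.2) (ω p.1) p.2.1 p.2.2
  | .inr (.inl (ℓ, g, o)) => if ℓ = b then
      (match o with
        | none => x g.1 g.2.1 g.2.2
        | some (none, β) => (ω g).1 β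
        | some (some j, β) => (ω g).2 j β)
      else 0
  | .inr (.inr h) => w h

/-- The critical position of the gadget `g`. -/
def crit (ω : Hidden k) (g : Gad k) : Idx k := .inl (g, (ω g).1, (ω g).2 (ω g).1)

lemma tab_hardIn (x : Fin (3 * k) → Vec k → Vec k) (ω : Hidden k) : tab (hardIn x ω) = x := by
  ext i y β : 3
  simp only [tab, andOr]
  by_cases h : x i y β = 1
  · rw [h, if_pos]
    exact fun j => ⟨(ω (i, y, β)).2 j, by simp [hardIn, gadVal, h]⟩
  · rw [fin_two_ne_one.mp h, if_neg]
    push Not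
    refine ⟨(ω (i, y, β)).1, fun l => ?_⟩
    simp [hardIn, gadVal, fin_two_ne_one.mp h]

lemma certOK_certIn (x : Fin (3 * k) → Vec k → Vec k) (ω : Hidden k) (b : Fin (3 * k) → Bool)
    (w : Vec k) (g : Gad k) (j : Vec k) : CertOK (certIn x ω b w) b g j := by
  have h1 : ptr (certIn x ω b w) b g none = (ω g).1 := by
    ext β : 1
    simp [ptr, certIn]
  have h2 : ptr (certIn x ω b w) b g (some j) = (ω g).2 j := by
    ext β : 1
    simp [ptr, certIn]
  rw [CertOK, h1, h2]
  simp only [certIn, if_true]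
  split_ifs with h
  · simp [gadVal, h]
  · simp [gadVal, fin_two_ne_one.mp h]

lemma acc_certIn {x : Fin (3 * k) → Vec k → Vec k} (ω : Hidden k) {b : Fin (3 * k) → Bool}
    (hx : TabOK b x) (w : Vec k) : Acc (certIn x ω b w) ↔ ∑ h, w h = 0 := by
  constructor
  · rintro ⟨ℓ, h, -⟩
    exact h
  · intro h
    refine ⟨b, h, ?_, fun p => certOK_certIn x ω b w p.1 p.2⟩
    convert hx using 1
    ext i y β : 3
    simp [certTab, certIn]

lemma not_acc_hardIn {x : Fin (3 * k) → Vec k → Vec k} (ω : Hidden k) (hx : x ≠ 0) :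
    ¬ Acc (hardIn x ω) := by
  rintro ⟨ℓ, -, -, h⟩
  have h1 := certTab_eq_tab h
  rw [tab_hardIn] at h1
  refine hx (h1.symm.trans ?_)
  rfl

lemma sum_funSplitAt {G W : Type} [Fintype G] [DecidableEq G] [Fintype W] (g : G)
    (F : (G → W) → ℝ) :
    ∑ ω, F ω = ∑ r : {g' // g' ≠ g} → W, ∑ y, F ((Equiv.funSplitAt g W).symm (y, r)) := by
  rw [← Equiv.sum_comp (Equiv.funSplitAt g _).symm, Fintype.sum_prod_type_right]

open Classical in
/-- The expected number of critical positions that are queried. -/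
lemma sum_card_crit_le {L : Type} (x : Fin (3 * k) → Vec k → Vec k)
    (T : DTree (Idx k) (fun _ => 2) L) :
    (∑ ω : Hidden k, ((Finset.univ.filter fun g => crit ω g ∈ T.queried (hardIn x ω)).card : ℝ)) ≤
      24 / (2 ^ k) ^ 2 * T.depth * Fintype.card (Hidden k) := by
  have h1 : ∀ g : Gad k,
      (∑ ω : Hidden k, if crit ω g ∈ T.queried (hardIn x ω) then (1 : ℝ) else 0) ≤
      ∑ ω : Hidden k, 24 / (2 ^ k) ^ 2 *
        (T.costOn {i | ∃ j l, i = .inl (g, j, l)} (hardIn x ω) : ℝ) := by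
    intro g
    rw [sum_funSplitAt g, sum_funSplitAt g]
    refine Finset.sum_le_sum fun r _ => ?_
    have h2 := sum_touch_box (ins := fun j l => (.inl (g, j, l) : Idx k)) (by simp)
      (v := x g.1 g.2.1 g.2.2)
      (H := fun y => hardIn x ((Equiv.funSplitAt g _).symm (y, r)))
      (by intro ω j l; simp [hardIn, Equiv.funSplitAt])
      (by
        rintro (p | p) hp y y'
        · have hpg : p.1 ≠ g := by
            rintro rfl
            exact hp p.2.1 p.2.2 rfl
          simp [hardIn, Equiv.funSplitAt, hpg]
        · simp [hardIn])
      T Finset.univ fun _ => Finset.univ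
    have h3 : gadBox (Finset.univ : Finset (Vec k)) (fun _ => Finset.univ) = Finset.univ := by
      simp [gadBox]
    have h4 : gadPot (Finset.univ : Finset (Vec k)) (fun _ => Finset.univ) = 0 := by
      simp [gadPot]
    rw [h3, h4] at h2
    simp only [add_zero, card_vec, Nat.cast_pow, Nat.cast_ofNat] at h2
    refine le_of_eq_of_le (Finset.sum_congr rfl fun y _ => ?_) h2
    congr 2
    simp [crit, Equiv.funSplitAt]
  calc _ = ∑ g : Gad k, ∑ ω : Hidden k,
        if crit ω g ∈ T.queried (hardIn x ω) then (1 : ℝ) else 0 := by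
        rw [Finset.sum_comm]
        simp
    _ ≤ ∑ g : Gad k, ∑ ω : Hidden k, 24 / (2 ^ k) ^ 2 *
        (T.costOn {i | ∃ j l, i = .inl (g, j, l)} (hardIn x ω) : ℝ) :=
        Finset.sum_le_sum fun g _ => h1 g
    _ ≤ ∑ ω : Hidden k, 24 / (2 ^ k) ^ 2 * (T.depth : ℝ) := by
        rw [Finset.sum_comm]
        refine Finset.sum_le_sum fun ω _ => ?_
        rw [← Finset.mul_sum]
        gcongr
        have h2 := T.sum_costOn_le (D := fun g : Gad k => {i | ∃ j l, i = .inl (g, j, l)})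
          (by
            rintro i g g' ⟨j, l, rfl⟩ ⟨j', l', h⟩
            simp only [Sum.inl.injEq, Prod.mk.injEq] at h
            simp [h]) (hardIn x ω)
        exact_mod_cast h2
    _ = _ := by
        rw [Finset.sum_const, Finset.card_univ, nsmul_eq_mul]
        ring

end HardInputs
end QC

namespace QC

/-! ### Folding permutations into periodic tables -/

section Folding

variable {k : ℕ}

/-- The nonzero shifts. -/
abbrev NZ (k : ℕ) := {s : Vec k // s ≠ 0}

lemma NZ.exists_eq_one (s : NZ k) : ∃ h, s.1 h = 1 := by
  by_contra! h
  exact s.2 (funext fun i => fin_two_ne_one.mp (h i))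

/-- A coordinate where the shift `s` is `1`. -/
noncomputable def NZ.pivot (s : NZ k) : Fin k := s.exists_eq_one.choose

lemma NZ.apply_pivot (s : NZ k) : s.1 s.pivot = 1 := s.exists_eq_one.choose_spec

lemma NZ.add_pivot (s : NZ k) (y : Vec k) : (y + s.1) s.pivot = 1 ↔ y s.pivot ≠ 1 := by
  rw [Pi.add_apply, s.apply_pivot]
  generalize y s.pivot = b
  revert b
  decide

lemma vec_add_add (y s : Vec k) : y + s + s = y := by rw [add_assoc, vec_add_self, add_zero]

/-- The representative of `{y, y + s}` that is `0` at the pivot of `s`. -/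
noncomputable def rep (s : NZ k) (y : Vec k) : Vec k := if y s.pivot = 1 then y + s else y

lemma rep_add (s : NZ k) (y : Vec k) : rep s (y + s) = rep s y := by
  by_cases h : y s.pivot = 1
  · have h' : ¬ (y + s.1) s.pivot = 1 := by rw [s.add_pivot]; simpa using h
    rw [rep, rep, if_pos h, if_neg h']
  · rw [rep, rep, if_neg h, if_pos (s.add_pivot y |>.mpr h), vec_add_add]

/-- The two elements `y` and `y + s` are swapped when one of them lies in `Y` and is `1` at the
pivot. -/
def Swapped (s : NZ k) (Y : Set (Vec k)) (y : Vec k) : Prop :=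
  (y ∈ Y ∧ y s.pivot = 1) ∨ (y + s ∈ Y ∧ (y + s.1) s.pivot = 1)

lemma swapped_add {s : NZ k} {Y : Set (Vec k)} {y : Vec k} :
    Swapped s Y (y + s) ↔ Swapped s Y y := by
  rw [Swapped, Swapped, vec_add_add, or_comm]

open Classical in
/-- The involution swapping `y` and `y + s` for the pairs selected by `Y`. -/
noncomputable def swapPerm (s : NZ k) (Y : Set (Vec k)) : Equiv.Perm (Vec k) :=
  Function.Involutive.toPerm (fun y => if Swapped s Y y then y + s else y) (by
    intro y
    by_cases h : Swapped s Y y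
    · simp only [h, if_true, swapped_add, vec_add_add]
    · simp only [h, if_false])

open Classical in
lemma swapPerm_apply (s : NZ k) (Y : Set (Vec k)) (y : Vec k) :
    swapPerm s Y y = if Swapped s Y y then y + s else y := rfl

lemma swapPerm_mul_self (s : NZ k) (Y : Set (Vec k)) : swapPerm s Y * swapPerm s Y = 1 := by
  ext y : 1
  exact Function.Involutive.toPerm_involutive _ y

lemma swapPerm_of_mem {s : NZ k} {Y : Set (Vec k)} {y : Vec k} (hy : y ∈ Y) (hys : y + s ∉ Y) :
    swapPerm s Y y = rep s y := by
  have h : Swapped s Y y ↔ y s.pivot = 1 := by simp [Swapped, hy, hys]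
  simp only [swapPerm_apply, h, rep]

variable {I : Type}

/-- The tables of the permutations `σ`, made periodic on the pattern `b` with shifts `s`. -/
noncomputable def foldTab (σ : I → Equiv.Perm (Vec k)) (s : I → NZ k) (b : I → Bool) (i : I)
    (y : Vec k) : Vec k :=
  σ i (if b i then rep (s i) y else y)

/-- No pair of elements of `Y` is identified by the shifts `s`. -/
def Free (s : I → NZ k) (Y : Finset (I × Vec k)) : Prop :=
  ∀ i y, (i, y) ∈ Y → (i, y + s i) ∉ Y

/-- The permutations `σ` with the pairs selected by `Y` swapped, on the pattern `b`. -/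
noncomputable def swapFam (s : I → NZ k) (b : I → Bool) (Y : Finset (I × Vec k))
    (σ : I → Equiv.Perm (Vec k)) (i : I) : Equiv.Perm (Vec k) :=
  if b i then σ i * swapPerm (s i) {y | (i, y) ∈ Y} else σ i

lemma swapFam_swapFam (s : I → NZ k) (b : I → Bool) (Y : Finset (I × Vec k))
    (σ : I → Equiv.Perm (Vec k)) : swapFam s b Y (swapFam s b Y σ) = σ := by
  ext i : 1
  by_cases h : b i
  · simp [swapFam, h, mul_assoc, swapPerm_mul_self]
  · simp [swapFam, h]

lemma swapFam_apply {s : I → NZ k} {Y : Finset (I × Vec k)} (hY : Free s Y) (b : I → Bool)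
    (σ : I → Equiv.Perm (Vec k)) {i : I} {y : Vec k} (h : (i, y) ∈ Y) :
    swapFam s b Y σ i y = foldTab σ s b i y := by
  by_cases hb : b i
  · simp [swapFam, foldTab, hb, swapPerm_of_mem (Y := {y | (i, y) ∈ Y}) h (hY i y h)]
  · simp [swapFam, foldTab, hb]

lemma foldTab_swapFam {s : I → NZ k} {Y : Finset (I × Vec k)} (hY : Free s Y) (b : I → Bool)
    (σ : I → Equiv.Perm (Vec k)) {i : I} {y : Vec k} (h : (i, y) ∈ Y) :
    foldTab (swapFam s b Y σ) s b i y = σ i y := by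
  rw [← swapFam_apply hY b _ h, swapFam_swapFam]

variable [Fintype I] [DecidableEq I]

open Classical in
/-- An adaptive procedure that reads the entries `S x` of the tables `x` cannot distinguish the
tables of random permutations from folded tables unless `S x` has a collision. -/
lemma card_free_fold_eq {S : (I → Vec k → Vec k) → Finset (I × Vec k)}
    {P : (I → Vec k → Vec k) → Prop}
    (hS : ∀ x x', (∀ i y, (i, y) ∈ S x → x i y = x' i y) → S x' = S x ∧ (P x' ↔ P x))
    (s : I → NZ k) (b : I → Bool) :
    (Finset.univ.filter fun σ : I → Equiv.Perm (Vec k) =>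
      Free s (S (foldTab σ s b)) ∧ P (foldTab σ s b)).card =
    (Finset.univ.filter fun σ : I → Equiv.Perm (Vec k) =>
      Free s (S fun i => σ i) ∧ P fun i => σ i).card := by
  have h1 : ∀ σ : I → Equiv.Perm (Vec k), Free s (S (foldTab σ s b)) →
      S (fun i => swapFam s b (S (foldTab σ s b)) σ i) = S (foldTab σ s b) ∧
      (P (fun i => swapFam s b (S (foldTab σ s b)) σ i) ↔ P (foldTab σ s b)) :=
    fun σ hσ => hS _ _ fun i y h => (swapFam_apply hσ b σ h).symm
  have h2 : ∀ σ : I → Equiv.Perm (Vec k), Free s (S fun i => σ i) →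
      S (foldTab (swapFam s b (S fun i => σ i) σ) s b) = S (fun i => σ i) ∧
      (P (foldTab (swapFam s b (S fun i => σ i) σ) s b) ↔ P fun i => σ i) :=
    fun σ hσ => hS _ _ fun i y h => (foldTab_swapFam hσ b σ h).symm
  refine Finset.card_nbij' (fun σ => swapFam s b (S (foldTab σ s b)) σ)
    (fun σ => swapFam s b (S fun i => σ i) σ) ?_ ?_ ?_ ?_
  · intro σ hσ
    simp only [Finset.coe_filter, Finset.mem_univ, true_and, Set.mem_ofPred_eq] at hσ ⊢
    obtain ⟨h3, h4⟩ := h1 σ hσ.1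
    exact ⟨by rw [h3]; exact hσ.1, h4.mpr hσ.2⟩
  · intro σ hσ
    simp only [Finset.coe_filter, Finset.mem_univ, true_and, Set.mem_ofPred_eq] at hσ ⊢
    obtain ⟨h3, h4⟩ := h2 σ hσ.1
    exact ⟨by rw [h3]; exact hσ.1, h4.mpr hσ.2⟩
  · intro σ hσ
    simp only [Finset.coe_filter, Finset.mem_univ, true_and, Set.mem_ofPred_eq] at hσ
    simp only [(h1 σ hσ.1).1, swapFam_swapFam]
  · intro σ hσ
    simp only [Finset.coe_filter, Finset.mem_univ, true_and, Set.mem_ofPred_eq] at hσ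
    simp only [(h2 σ hσ.1).1, swapFam_swapFam]

open Classical in
lemma card_fold_le {S : (I → Vec k → Vec k) → Finset (I × Vec k)}
    {P : (I → Vec k → Vec k) → Prop}
    (hS : ∀ x x', (∀ i y, (i, y) ∈ S x → x i y = x' i y) → S x' = S x ∧ (P x' ↔ P x))
    (s : I → NZ k) (b : I → Bool) :
    (Finset.univ.filter fun σ : I → Equiv.Perm (Vec k) => P (foldTab σ s b)).card ≤
    (Finset.univ.filter fun σ : I → Equiv.Perm (Vec k) => ¬ Free s (S fun i => σ i)).card +
    (Finset.univ.filter fun σ : I → Equiv.Perm (Vec k) => P fun i => σ i).card := by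
  have h1 := card_free_fold_eq hS s b
  have h2 := card_free_fold_eq (P := fun _ => True) (fun x x' h => ⟨(hS x x' h).1, Iff.rfl⟩) s b
  simp only [and_true] at h2
  have h3 := Finset.card_filter_add_card_filter_not (s := Finset.univ)
    fun σ : I → Equiv.Perm (Vec k) => Free s (S (foldTab σ s b))
  have h4 := Finset.card_filter_add_card_filter_not (s := Finset.univ)
    fun σ : I → Equiv.Perm (Vec k) => Free s (S fun i => σ i)
  have h5 : (Finset.univ.filter fun σ : I → Equiv.Perm (Vec k) => P (foldTab σ s b)).card ≤
      (Finset.univ.filter fun σ : I → Equiv.Perm (Vec k) => ¬ Free s (S (foldTab σ s b))).card +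
      (Finset.univ.filter fun σ : I → Equiv.Perm (Vec k) =>
        Free s (S (foldTab σ s b)) ∧ P (foldTab σ s b)).card := by
    refine (Finset.card_le_card fun σ hσ => ?_).trans (Finset.card_union_le _ _)
    simp only [Finset.mem_union, Finset.mem_filter, Finset.mem_univ, true_and] at hσ ⊢
    tauto
  have h6 : (Finset.univ.filter fun σ : I → Equiv.Perm (Vec k) =>
      Free s (S fun i => σ i) ∧ P fun i => σ i).card ≤
      (Finset.univ.filter fun σ : I → Equiv.Perm (Vec k) => P fun i => σ i).card :=
    Finset.card_le_card fun σ hσ => by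
      simp only [Finset.mem_filter, Finset.mem_univ, true_and] at hσ ⊢
      exact hσ.2
  omega

lemma card_nz (k : ℕ) : Fintype.card (NZ k) = 2 ^ k - 1 := by
  rw [Fintype.card_subtype_compl, card_vec, Fintype.card_subtype_eq]

open Classical in
lemma card_apply_eq_mul (i : I) (c : NZ k) :
    ((Finset.univ.filter fun s : I → NZ k => s i = c).card : ℝ) * Fintype.card (NZ k) =
      Fintype.card (I → NZ k) := by
  have h1 : ((Finset.univ.filter fun s : I → NZ k => s i = c).card : ℝ) =
      Fintype.card ({i' // i' ≠ i} → NZ k) := by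
    rw [← Finset.sum_boole, sum_funSplitAt i]
    simp [Equiv.funSplitAt]
  have h2 : ∑ s : I → NZ k, (1 : ℝ) = Fintype.card ({i' // i' ≠ i} → NZ k) *
      Fintype.card (NZ k) := by
    rw [sum_funSplitAt i]
    simp only [Finset.sum_const, Finset.card_univ, nsmul_eq_mul, mul_one]
  rw [h1, ← h2]
  simp

open Classical in
/-- Random shifts create a collision in `Y` with probability at most `|Y|² / (2 ^ k - 1)`. -/
lemma card_not_free_le (Y : Finset (I × Vec k)) :
    ((Finset.univ.filter fun s : I → NZ k => ¬ Free s Y).card : ℝ) * Fintype.card (NZ k) ≤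
      (Y.card : ℝ) ^ 2 * Fintype.card (I → NZ k) := by
  have h1 : ((Finset.univ.filter fun s : I → NZ k => ¬ Free s Y).card : ℝ) ≤
      ∑ p ∈ Y ×ˢ Y, ((Finset.univ.filter fun s : I → NZ k =>
        (s p.1.1).1 = p.1.2 + p.2.2).card : ℝ) := by
    have h2 : (Finset.univ.filter fun s : I → NZ k => ¬ Free s Y) ⊆
        (Y ×ˢ Y).biUnion fun p => Finset.univ.filter fun s : I → NZ k =>
          (s p.1.1).1 = p.1.2 + p.2.2 := by
      intro s hs
      simp only [Free, Finset.mem_filter, Finset.mem_univ, true_and, not_forall, not_not,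
        exists_prop] at hs
      obtain ⟨i, y, h3, h4⟩ := hs
      simp only [Finset.mem_biUnion, Finset.mem_filter, Finset.mem_univ, true_and]
      refine ⟨((i, y), (i, y + s i)), Finset.mk_mem_product h3 h4, ?_⟩
      rw [← add_assoc, vec_add_self, zero_add]
    exact_mod_cast (Finset.card_le_card h2).trans Finset.card_biUnion_le
  calc _ ≤ (∑ p ∈ Y ×ˢ Y, ((Finset.univ.filter fun s : I → NZ k =>
        (s p.1.1).1 = p.1.2 + p.2.2).card : ℝ)) * Fintype.card (NZ k) := by gcongr
    _ ≤ ∑ p ∈ Y ×ˢ Y, (Fintype.card (I → NZ k) : ℝ) := by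
        rw [Finset.sum_mul]
        refine Finset.sum_le_sum fun p _ => ?_
        by_cases h : p.1.2 + p.2.2 = 0
        · rw [h, Finset.filter_false_of_mem fun s _ => (s p.1.1).2]
          rw [Finset.card_empty, Nat.cast_zero, zero_mul]
          positivity
        · rw [← card_apply_eq_mul p.1.1 ⟨p.1.2 + p.2.2, h⟩]
          simp only [Subtype.ext_iff, le_refl]
    _ = _ := by
        rw [Finset.sum_const, Finset.card_product, nsmul_eq_mul]
        push_cast
        ring

open Classical in
lemma card_not_free_le_sqrt (hk : 1 ≤ k) (Y : Finset (I × Vec k)) :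
    ((Finset.univ.filter fun s : I → NZ k => ¬ Free s Y).card : ℝ) ≤
      Y.card / √(2 ^ k - 1) * Fintype.card (I → NZ k) := by
  have h2 : (2 : ℝ) ≤ 2 ^ k := by simpa using pow_le_pow_right₀ (one_le_two (α := ℝ)) hk
  have hc : (Fintype.card (NZ k) : ℝ) = 2 ^ k - 1 := by
    rw [card_nz, Nat.cast_sub Nat.one_le_two_pow]
    simp
  have h1 := card_not_free_le Y
  rw [hc] at h1
  set r := √((2 : ℝ) ^ k - 1) with hr
  have hr2 : r ^ 2 = 2 ^ k - 1 := Real.sq_sqrt (by linarith)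
  have hr0 : 0 < r := Real.sqrt_pos.mpr (by linarith)
  rw [← hr2] at h1
  rw [div_mul_eq_mul_div, le_div_iff₀ hr0]
  rcases le_total (Y.card : ℝ) r with h | h
  · have h3 : ((Finset.univ.filter fun s : I → NZ k => ¬ Free s Y).card : ℝ) * r * r ≤
        Y.card * Fintype.card (I → NZ k) * r := by
      calc _ ≤ (Y.card : ℝ) ^ 2 * Fintype.card (I → NZ k) := by linarith
        _ = Y.card * Fintype.card (I → NZ k) * Y.card := by ring
        _ ≤ _ := by gcongr
    exact le_of_mul_le_mul_right h3 hr0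
  · rw [mul_comm]
    gcongr
    exact Finset.card_le_univ _

end Folding
end QC

namespace QC

/-! ### The randomized lower bound -/

section Reindex

variable {ι ι' L : Type} {a : ℕ}

/-- Reindex the query positions of a decision tree. -/
def DTree.reindex (d : ι → ι') : DTree ι (fun _ => a) L → DTree ι' (fun _ => a) L
  | .leaf b => .leaf b
  | .node i child => .node (d i) fun v => DTree.reindex d (child v)

lemma DTree.eval_reindex (d : ι → ι') (T : DTree ι (fun _ => a) L) (z : ι' → Fin a) :
    (T.reindex d).eval z = T.eval (z ∘ d) := by
  induction T with
  | leaf => rfl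
  | node i child ih => exact ih (z (d i))

lemma DTree.depth_reindex (d : ι → ι') (T : DTree ι (fun _ => a) L) :
    (T.reindex d).depth = T.depth := by
  induction T with
  | leaf => rfl
  | node i child ih => simp only [DTree.reindex, DTree.depth, ih]

end Reindex

section Averaging

open Classical in
/-- If every test `j` succeeds with probability at least `2 / 3`, then some outcome passes at least
two thirds of the tests. -/
lemma exists_mem_support_card_le {Ω J : Type} [Fintype J] (μ : PMF Ω) (P : Ω → J → Prop)
    (h : ∀ j, 2 / 3 ≤ μ.toOuterMeasure {T | P T j}) :
    ∃ T ∈ μ.support, 2 * Fintype.card J ≤ 3 * (Finset.univ.filter fun j => P T j).card := by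
  by_contra! hT
  have h1 : (2 * Fintype.card J : ℝ≥0∞) ≤ ∑' T, μ T *
      ((3 * (Finset.univ.filter fun j => P T j).card : ℕ) : ℝ≥0∞) := by
    calc (2 * Fintype.card J : ℝ≥0∞) = 3 * ∑ j : J, (2 / 3 : ℝ≥0∞) := by
          rw [Finset.sum_const, Finset.card_univ, nsmul_eq_mul, mul_comm 3, mul_assoc,
            ENNReal.div_mul_cancel (by norm_num) (by norm_num), mul_comm]
      _ ≤ 3 * ∑ j : J, ∑' T, if P T j then μ T else 0 := by
          gcongr with j
          refine (h j).trans_eq ?_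
          rw [PMF.toOuterMeasure_apply]
          rfl
      _ = _ := by
          rw [← Summable.tsum_finsetSum fun _ _ => ENNReal.summable, ← ENNReal.tsum_mul_left]
          refine tsum_congr fun T => ?_
          rw [← Finset.sum_filter, Finset.sum_const, nsmul_eq_mul]
          push_cast
          ring
  have h2 : (∑' T, μ T * ((3 * (Finset.univ.filter fun j => P T j).card + 1 : ℕ) : ℝ≥0∞)) ≤
      2 * Fintype.card J := by
    calc _ ≤ ∑' T, μ T * ((2 * Fintype.card J : ℕ) : ℝ≥0∞) := by
          refine ENNReal.tsum_le_tsum fun T => ?_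
          by_cases hm : T ∈ μ.support
          · gcongr
            exact hT T hm
          · rw [PMF.mem_support_iff, not_not] at hm
            simp [hm]
      _ = _ := by
          rw [ENNReal.tsum_mul_right, μ.tsum_coe, one_mul]
          push_cast
          rfl
  have h3 : (∑' T, μ T * ((3 * (Finset.univ.filter fun j => P T j).card + 1 : ℕ) : ℝ≥0∞)) =
      (∑' T, μ T * ((3 * (Finset.univ.filter fun j => P T j).card : ℕ) : ℝ≥0∞)) + 1 := by
    rw [← μ.tsum_coe, ← ENNReal.tsum_add]
    refine tsum_congr fun T => ?_
    push_cast
    ring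
  rw [h3] at h2
  have h4 : (2 * Fintype.card J : ℝ≥0∞) ≠ ∞ := by finiteness
  exact absurd ((add_le_add_left h1 1).trans h2) (not_le.mpr (ENNReal.lt_add_right h4 one_ne_zero))

end Averaging

section LowerBound

variable {k : ℕ}

lemma tabOK_foldTab (σ : Fin (3 * k) → Equiv.Perm (Vec k)) (s : Fin (3 * k) → NZ k)
    (b : Fin (3 * k) → Bool) : TabOK b (foldTab σ s b) := by
  intro i
  split_ifs with h
  · refine ⟨(s i).1, (s i).2, fun y => ?_⟩
    simp [foldTab, h, rep_add]
  · intro y y' hy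
    simpa [foldTab, h] using hy

lemma foldTab_ne_zero (hk : 2 ≤ k) (σ : Fin (3 * k) → Equiv.Perm (Vec k)) (s : Fin (3 * k) → NZ k)
    (b : Fin (3 * k) → Bool) : foldTab σ s b ≠ 0 := by
  intro h
  let i : Fin (3 * k) := ⟨0, by omega⟩
  have h1 : ∀ y, (if b i then rep (s i) y else y) = (σ i).symm 0 := by
    intro y
    rw [Equiv.eq_symm_apply]
    exact congrFun (congrFun h i) y
  have h2 : (Finset.univ : Finset (Vec k)) ⊆ {(σ i).symm 0, (σ i).symm 0 + (s i).1} := by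
    intro y _
    rw [Finset.mem_insert, Finset.mem_singleton, ← h1 y]
    split_ifs
    · rw [rep]
      split_ifs
      · exact Or.inr (vec_add_add _ _).symm
      · exact Or.inl rfl
    · exact Or.inl rfl
  have h3 := (Finset.card_le_card h2).trans Finset.card_le_two
  rw [Finset.card_univ, card_vec] at h3
  have h4 := Nat.pow_le_pow_right (n := 2) (by norm_num) hk
  omega

variable {L : Type}

open Classical in
/-- The table entries whose critical positions are queried. -/
noncomputable def seen (T : DTree (Idx k) (fun _ => 2) L) (ω : Hidden k)
    (x : Fin (3 * k) → Vec k → Vec k) : Finset (Fin (3 * k) × Vec k) :=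
  Finset.univ.filter fun p => ∃ β, crit ω (p.1, p.2, β) ∈ T.queried (hardIn x ω)

/-- The cell `b` is queried on the hard input. -/
def Touches (T : DTree (Idx k) (fun _ => 2) L) (ω : Hidden k) (b : Fin (3 * k) → Bool)
    (x : Fin (3 * k) → Vec k → Vec k) : Prop :=
  ∃ q, (.inr (.inl (b, q)) : Idx k) ∈ T.queried (hardIn x ω)

open Classical in
lemma card_seen_le (T : DTree (Idx k) (fun _ => 2) L) (ω : Hidden k)
    (x : Fin (3 * k) → Vec k → Vec k) :
    (seen T ω x).card ≤
      (Finset.univ.filter fun g => crit ω g ∈ T.queried (hardIn x ω)).card := by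
  have h : seen T ω x ⊆ (Finset.univ.filter fun g =>
      crit ω g ∈ T.queried (hardIn x ω)).image fun g => (g.1, g.2.1) := by
    intro p hp
    simp only [seen, Finset.mem_filter, Finset.mem_univ, true_and] at hp
    obtain ⟨β, hβ⟩ := hp
    simp only [Finset.mem_image, Finset.mem_filter, Finset.mem_univ, true_and]
    exact ⟨(p.1, p.2, β), hβ, rfl⟩
  exact (Finset.card_le_card h).trans Finset.card_image_le

lemma queried_hardIn_congr {T : DTree (Idx k) (fun _ => 2) L} {ω : Hidden k}
    {x x' : Fin (3 * k) → Vec k → Vec k} (h : ∀ i y, (i, y) ∈ seen T ω x → x i y = x' i y) :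
    T.queried (hardIn x' ω) = T.queried (hardIn x ω) := by
  refine (DTree.queried_congr ?_).1
  rintro (⟨g, j, l⟩ | p) hq
  · by_cases hc : l = (ω g).2 j ∧ j = (ω g).1
    · obtain ⟨rfl, rfl⟩ := hc
      have h1 : (g.1, g.2.1) ∈ seen T ω x := by
        simp only [seen, Finset.mem_filter, Finset.mem_univ, true_and]
        exact ⟨g.2.2, hq⟩
      simp only [hardIn, h _ _ h1]
    · simp only [hardIn, gadVal]
      split_ifs with h1 h2
      · exact absurd ⟨h1, h2⟩ hc
      · rfl
      · rfl
  · rfl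

lemma seen_congr {T : DTree (Idx k) (fun _ => 2) L} {ω : Hidden k} (b : Fin (3 * k) → Bool)
    (x x' : Fin (3 * k) → Vec k → Vec k) (h : ∀ i y, (i, y) ∈ seen T ω x → x i y = x' i y) :
    seen T ω x' = seen T ω x ∧ (Touches T ω b x' ↔ Touches T ω b x) := by
  have h1 := queried_hardIn_congr h
  refine ⟨?_, by simp only [Touches, h1]⟩
  ext p
  simp only [seen, Finset.mem_filter, h1]

lemma eval_certIn_eq {T : DTree (Idx k) (fun _ => 2) L} {ω : Hidden k} {b : Fin (3 * k) → Bool}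
    {x : Fin (3 * k) → Vec k → Vec k} (h : ¬ Touches T ω b x) :
    T.eval (certIn x ω b 0) = T.eval (hardIn x ω) := by
  refine (DTree.queried_congr ?_).2
  rintro (p | ⟨ℓ, g, o⟩ | p) hq
  · rfl
  · have h1 : ℓ ≠ b := by
      rintro rfl
      exact h ⟨_, hq⟩
    simp [hardIn, certIn, h1]
  · rfl

open Classical in
lemma sum_touches_le (T : DTree (Idx k) (fun _ => 2) L) (ω : Hidden k)
    (x : Fin (3 * k) → Vec k → Vec k) :
    (Finset.univ.filter fun b => Touches T ω b x).card ≤ T.depth := by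
  have h : (Finset.univ.filter fun b => Touches T ω b x).image some ⊆
      (T.queried (hardIn x ω)).image fun i : Idx k =>
        match i with
        | .inr (.inl (b, _)) => some b
        | _ => none := by
    intro o ho
    simp only [Finset.mem_image, Finset.mem_filter, Finset.mem_univ, true_and] at ho ⊢
    obtain ⟨b, ⟨q, hq⟩, rfl⟩ := ho
    exact ⟨_, hq, rfl⟩
  rw [← Finset.card_image_of_injective _ (Option.some_injective _)]
  exact (Finset.card_le_card h).trans (Finset.card_image_le.trans (T.card_queried_le _))

/-- The parameters of the hard distribution. -/
abbrev Param (k : ℕ) := Hidden k × (Fin (3 * k) → Equiv.Perm (Vec k)) × (Fin (3 * k) → NZ k) ×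
  (Fin (3 * k) → Bool)

noncomputable instance (k : ℕ) : Fintype (Param k) := instFintypeProd _ _

lemma card_pattern (k : ℕ) : (Fintype.card (Fin (3 * k) → Bool) : ℝ) = (2 ^ k) ^ 3 := by
  rw [Fintype.card_fun, Fintype.card_bool, Fintype.card_fin, ← pow_mul, mul_comm k]
  push_cast
  rfl

lemma card_param (k : ℕ) : (Fintype.card (Param k) : ℝ) = Fintype.card (Hidden k) *
    (Fintype.card (Fin (3 * k) → Equiv.Perm (Vec k)) * (Fintype.card (Fin (3 * k) → NZ k) *
      (2 ^ k) ^ 3)) := by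
  rw [Fintype.card_prod, Fintype.card_prod, Fintype.card_prod, ← card_pattern]
  push_cast
  rfl

open Classical in
lemma sum_not_free_le (hk : 1 ≤ k) (T : DTree (Idx k) (fun _ => 2) L)
    (x : Fin (3 * k) → Vec k → Vec k) :
    (∑ ω : Hidden k, ((Finset.univ.filter fun s : Fin (3 * k) → NZ k =>
      ¬ Free s (seen T ω x)).card : ℝ)) ≤
      24 / ((2 ^ k) ^ 2 * √(2 ^ k - 1)) * T.depth *
        (Fintype.card (Hidden k) * Fintype.card (Fin (3 * k) → NZ k)) := by
  have h1 : ∀ ω : Hidden k, ((Finset.univ.filter fun s : Fin (3 * k) → NZ k =>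
      ¬ Free s (seen T ω x)).card : ℝ) ≤ 1 / √(2 ^ k - 1) * Fintype.card (Fin (3 * k) → NZ k) *
        ((Finset.univ.filter fun g => crit ω g ∈ T.queried (hardIn x ω)).card : ℝ) := by
    intro ω
    have h2 : ((seen T ω x).card : ℝ) ≤
        ((Finset.univ.filter fun g => crit ω g ∈ T.queried (hardIn x ω)).card : ℝ) := by
      exact Nat.cast_le.mpr (card_seen_le T ω x)
    refine (card_not_free_le_sqrt hk _).trans (le_trans (le_of_eq ?_)
      (mul_le_mul_of_nonneg_left h2 (by positivity)))
    rw [div_eq_mul_one_div, mul_comm, mul_comm _ (1 / _), ← mul_assoc, mul_comm (1 / _)]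
  refine (Finset.sum_le_sum fun ω _ => h1 ω).trans ?_
  rw [← Finset.mul_sum]
  refine (mul_le_mul_of_nonneg_left (sum_card_crit_le x T) (by positivity)).trans_eq ?_
  rw [← div_div]
  ring

open Classical in
/-- A shallow tree rarely queries the cell of the folded pattern. -/
lemma card_touches_le (hk : 1 ≤ k) (T : DTree (Idx k) (fun _ => 2) L) :
    ((Finset.univ.filter fun u : Param k =>
      Touches T u.1 u.2.2.2 (foldTab u.2.1 u.2.2.1 u.2.2.2)).card : ℝ) ≤
    (24 / ((2 ^ k) ^ 2 * √(2 ^ k - 1)) + 1 / (2 ^ k) ^ 3) * T.depth * Fintype.card (Param k) := by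
  have hfree : (∑ ω : Hidden k, ∑ s : Fin (3 * k) → NZ k, ∑ _b : Fin (3 * k) → Bool,
      ∑ σ : Fin (3 * k) → Equiv.Perm (Vec k),
        if ¬ Free s (seen T ω fun i => σ i) then (1 : ℝ) else 0) ≤
      24 / ((2 ^ k) ^ 2 * √(2 ^ k - 1)) * T.depth * Fintype.card (Param k) := by
    calc _ = ∑ σ : Fin (3 * k) → Equiv.Perm (Vec k), (2 ^ k) ^ 3 * ∑ ω : Hidden k,
          ((Finset.univ.filter fun s : Fin (3 * k) → NZ k =>
            ¬ Free s (seen T ω fun i => σ i)).card : ℝ) := by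
          simp_rw [Finset.mul_sum]
          rw [Finset.sum_comm (s := (Finset.univ : Finset (Fin (3 * k) → Equiv.Perm (Vec k))))]
          refine Finset.sum_congr rfl fun ω _ => ?_
          simp_rw [← Finset.sum_boole, Finset.sum_const, Finset.card_univ, nsmul_eq_mul,
            card_pattern, ← Finset.mul_sum]
          rw [Finset.sum_comm]
      _ ≤ ∑ σ : Fin (3 * k) → Equiv.Perm (Vec k), (2 ^ k) ^ 3 *
          (24 / ((2 ^ k) ^ 2 * √(2 ^ k - 1)) * T.depth *
            (Fintype.card (Hidden k) * Fintype.card (Fin (3 * k) → NZ k))) :=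
          Finset.sum_le_sum fun σ _ =>
            mul_le_mul_of_nonneg_left (sum_not_free_le hk T _) (by positivity)
      _ = _ := by
          rw [Finset.sum_const, Finset.card_univ, nsmul_eq_mul, card_param]
          ring
  have htouch : (∑ ω : Hidden k, ∑ _s : Fin (3 * k) → NZ k, ∑ b : Fin (3 * k) → Bool,
      ∑ σ : Fin (3 * k) → Equiv.Perm (Vec k),
        if Touches T ω b fun i => σ i then (1 : ℝ) else 0) ≤
      1 / (2 ^ k) ^ 3 * T.depth * Fintype.card (Param k) := by
    calc _ ≤ ∑ ω : Hidden k, ∑ _s : Fin (3 * k) → NZ k,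
          ∑ σ : Fin (3 * k) → Equiv.Perm (Vec k), (T.depth : ℝ) := by
          refine Finset.sum_le_sum fun ω _ => Finset.sum_le_sum fun s _ => ?_
          rw [Finset.sum_comm]
          refine Finset.sum_le_sum fun σ _ => ?_
          rw [Finset.sum_boole]
          exact_mod_cast sum_touches_le T ω _
      _ = _ := by
          simp_rw [Finset.sum_const, Finset.card_univ, nsmul_eq_mul]
          rw [card_param]
          field_simp
  calc _ = ∑ ω : Hidden k, ∑ s : Fin (3 * k) → NZ k, ∑ b : Fin (3 * k) → Bool,
        ((Finset.univ.filter fun σ : Fin (3 * k) → Equiv.Perm (Vec k) =>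
          Touches T ω b (foldTab σ s b)).card : ℝ) := by
        rw [← Finset.sum_boole, Fintype.sum_prod_type]
        refine Finset.sum_congr rfl fun ω _ => ?_
        simp_rw [← Finset.sum_boole]
        rw [Fintype.sum_prod_type, Finset.sum_comm, Fintype.sum_prod_type]
    _ ≤ ∑ ω : Hidden k, ∑ s : Fin (3 * k) → NZ k, ∑ b : Fin (3 * k) → Bool,
        ((∑ σ : Fin (3 * k) → Equiv.Perm (Vec k),
          if ¬ Free s (seen T ω fun i => σ i) then (1 : ℝ) else 0) +
        ∑ σ : Fin (3 * k) → Equiv.Perm (Vec k),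
          if Touches T ω b fun i => σ i then (1 : ℝ) else 0) := by
        refine Finset.sum_le_sum fun ω _ => Finset.sum_le_sum fun s _ =>
          Finset.sum_le_sum fun b _ => ?_
        rw [Finset.sum_boole, Finset.sum_boole]
        exact_mod_cast card_fold_le (seen_congr b) s b
    _ ≤ _ := by
        simp_rw [Finset.sum_add_distrib]
        rw [add_mul, add_mul]
        exact add_le_add hfree htouch

/-- A pair of hard inputs with opposite function values. -/
noncomputable def hardPair (u : Param k) (c : Bool) : Idx k → Fin 2 :=
  if c then certIn (foldTab u.2.1 u.2.2.1 u.2.2.2) u.1 u.2.2.2 0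
  else hardIn (foldTab u.2.1 u.2.2.1 u.2.2.2) u.1

lemma acc_hardPair (hk : 2 ≤ k) (u : Param k) (c : Bool) : Acc (hardPair u c) ↔ c = true := by
  cases c
  · simpa [hardPair] using not_acc_hardIn u.1 (foldTab_ne_zero hk _ _ _)
  · simp [hardPair, acc_certIn u.1 (tabOK_foldTab u.2.1 u.2.2.1 u.2.2.2)]

open Classical in
/-- A tree that is correct on two thirds of the hard inputs queries the cell of the folded pattern
often. -/
lemma card_param_le (T : DTree (Idx k) (fun _ => 2) (Option Bool))
    (hT : 2 * Fintype.card (Param k × Bool) ≤ 3 * (Finset.univ.filter fun j : Param k × Bool =>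
      T.eval (hardPair j.1 j.2) = some j.2).card) :
    Fintype.card (Param k) ≤ 3 * (Finset.univ.filter fun u : Param k =>
      Touches T u.1 u.2.2.2 (foldTab u.2.1 u.2.2.1 u.2.2.2)).card := by
  have h1 : (Finset.univ.filter fun j : Param k × Bool =>
      T.eval (hardPair j.1 j.2) = some j.2).card ≤
      Fintype.card (Param k) + (Finset.univ.filter fun u : Param k =>
      Touches T u.1 u.2.2.2 (foldTab u.2.1 u.2.2.1 u.2.2.2)).card := by
    rw [Finset.card_filter, Fintype.sum_prod_type, Finset.card_filter, ← Finset.card_univ,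
      Finset.card_eq_sum_ones, ← Finset.sum_add_distrib]
    refine Finset.sum_le_sum fun u _ => ?_
    rw [Fintype.sum_bool]
    by_cases h : Touches T u.1 u.2.2.2 (foldTab u.2.1 u.2.2.1 u.2.2.2)
    · rw [if_pos h]
      split_ifs <;> omega
    · have h2 : T.eval (hardPair u true) = T.eval (hardPair u false) := eval_certIn_eq h
      rw [if_neg h]
      dsimp only
      rw [h2]
      generalize T.eval (hardPair u false) = o
      rcases o with _ | _ | _ <;> simp
  rw [Fintype.card_prod, Fintype.card_bool] at hT
  omega

/-- The randomized lower bound for trees on the positions `Idx k`. -/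
lemma one_le_mul_depth (hk : 2 ≤ k) (T : DTree (Idx k) (fun _ => 2) (Option Bool))
    (hT : 2 * Fintype.card (Param k × Bool) ≤ 3 * (Finset.univ.filter fun j : Param k × Bool =>
      T.eval (hardPair j.1 j.2) = some j.2).card) :
    1 ≤ 3 * (24 / ((2 ^ k) ^ 2 * √(2 ^ k - 1)) + 1 / (2 ^ k) ^ 3) * (T.depth : ℝ) := by
  classical
  have h1 : (Fintype.card (Param k) : ℝ) ≤ 3 * ((Finset.univ.filter fun u : Param k =>
      Touches T u.1 u.2.2.2 (foldTab u.2.1 u.2.2.1 u.2.2.2)).card : ℝ) := by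
    exact_mod_cast card_param_le T (by convert hT)
  have h2 := card_touches_le (by omega) T
  have hne : Nonempty (NZ k) := ⟨⟨fun _ => 1, fun h => one_ne_zero (congrFun h ⟨0, by omega⟩)⟩⟩
  have hpos : (0 : ℝ) < Fintype.card (Param k) := by
    rw [card_param]
    positivity
  nlinarith

lemma pow_le_mul_of_one_le (hk : 1 ≤ k) {q : ℝ} (hq : 0 ≤ q)
    (h : 1 ≤ 3 * (24 / ((2 ^ k) ^ 2 * √(2 ^ k - 1)) + 1 / (2 ^ k) ^ 3) * q) :
    ((2 : ℝ) ^ k) ^ ((5 : ℝ) / 2) ≤ 147 * q := by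
  set N : ℝ := 2 ^ k
  have hN : 2 ≤ N := by simpa using pow_le_pow_right₀ (one_le_two (α := ℝ)) hk
  have hN0 : 0 < N := by linarith
  have h1 : N ^ ((5 : ℝ) / 2) = N ^ 2 * √N := by
    rw [Real.sqrt_eq_rpow, ← Real.rpow_natCast, ← Real.rpow_add hN0]
    norm_num
  have h2 : √N ≤ 2 * √(N - 1) := by
    rw [show (2 : ℝ) * √(N - 1) = √(4 * (N - 1)) by
      rw [Real.sqrt_mul (by norm_num), show (4 : ℝ) = 2 ^ 2 by norm_num,
        Real.sqrt_sq (by norm_num)]]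
    exact Real.sqrt_le_sqrt (by linarith)
  have h3 : 0 < √N := Real.sqrt_pos.mpr hN0
  have h3' : 0 < √(N - 1) := Real.sqrt_pos.mpr (by linarith)
  have h4 : √N ≤ N := by
    nlinarith [Real.sq_sqrt hN0.le]
  rw [h1]
  calc N ^ 2 * √N ≤ N ^ 2 * √N * (3 * (24 / (N ^ 2 * √(N - 1)) + 1 / N ^ 3) * q) :=
        le_mul_of_one_le_right (by positivity) h
    _ = (72 * (√N / √(N - 1)) + 3 * (√N / N)) * q := by
        field_simp
        ring
    _ ≤ (72 * 2 + 3 * 1) * q := by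
        gcongr
        · rwa [div_le_iff₀ h3']
        · rwa [div_le_one hN0]
    _ = 147 * q := by norm_num

open Classical in
/-- A randomized algorithm for the function needs many queries. -/
theorem pow_le_mul_of_randomized (hk : 2 ≤ k) {n : ℕ} {e : Idx k → Fin n}
    (he : Function.Injective e) {f : PartialFn (Fin n) fun _ => 2}
    (hf : ∀ z, f z = some (decide (Acc (z ∘ e))))
    {μ : PMF (DTree (Fin n) (fun _ => 2) (Option Bool))} {q : ℕ} (hq : ∀ T ∈ μ.support, T.depth ≤ q)
    (hμ : ∀ x b, f x = some b → 2 / 3 ≤ μ.toOuterMeasure {T | T.eval x = some b}) :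
    ((2 : ℝ) ^ k) ^ ((5 : ℝ) / 2) ≤ 147 * q := by
  have : Nonempty (Idx k) := ⟨.inr (.inr ⟨0, by omega⟩)⟩
  let d : Fin n → Idx k := Function.invFun e
  have hde : d ∘ e = id := Function.invFun_comp he
  obtain ⟨T, hT, hcard⟩ := exists_mem_support_card_le μ
    (fun T (j : Param k × Bool) => T.eval (hardPair j.1 j.2 ∘ d) = some j.2) (by
      intro j
      refine hμ _ _ ?_
      rw [hf, Function.comp_assoc, hde, Function.comp_id]
      simp [acc_hardPair hk])
  simp_rw [← DTree.eval_reindex] at hcard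
  have h1 := one_le_mul_depth hk (T.reindex d) (by convert hcard)
  rw [DTree.depth_reindex] at h1
  refine (pow_le_mul_of_one_le (by omega) (Nat.cast_nonneg _) h1).trans ?_
  have := hq T hT
  gcongr

end LowerBound
end QC

namespace QC

/-! ### Quantum algorithms cannot compute parity with few queries -/

section Junta

variable {k : ℕ}

/-- The linear combinations of functions of `t` of the `k` bits. -/
def junta (k t : ℕ) : Submodule ℂ (Vec k → ℂ) :=
  Submodule.span ℂ {F | ∃ S : Finset (Fin k), S.card ≤ t ∧
    ∀ w w' : Vec k, (∀ h ∈ S, w h = w' h) → F w = F w'}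

lemma const_mem_junta (c : ℂ) (t : ℕ) : (fun _ => c) ∈ junta k t :=
  Submodule.subset_span ⟨∅, by simp, fun _ _ _ => rfl⟩

lemma mul_mem_junta {s t : ℕ} {F G : Vec k → ℂ} (hF : F ∈ junta k s) (hG : G ∈ junta k t) :
    (fun w => F w * G w) ∈ junta k (s + t) := by
  induction hF using Submodule.span_induction with
  | mem F hF =>
    obtain ⟨S, hS, hF⟩ := hF
    induction hG using Submodule.span_induction with
    | mem G hG =>
      obtain ⟨S', hS', hG⟩ := hG
      refine Submodule.subset_span ⟨S ∪ S', (Finset.card_union_le _ _).trans (by omega), ?_⟩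
      intro w w' h
      beta_reduce
      rw [hF w w' fun i hi => h i (Finset.mem_union_left _ hi),
        hG w w' fun i hi => h i (Finset.mem_union_right _ hi)]
    | zero => simpa using const_mem_junta 0 _
    | add G G' _ _ h h' =>
      convert Submodule.add_mem _ h h' using 2
      simp [mul_add]
    | smul c G _ h =>
      convert Submodule.smul_mem _ c h using 2
      simp [mul_left_comm]
  | zero => simpa using const_mem_junta 0 _
  | add F F' _ _ h h' =>
    convert Submodule.add_mem _ h h' using 2
    simp [add_mul]
  | smul c F _ h =>
    convert Submodule.smul_mem _ c h using 2
    simp [mul_assoc]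

lemma conj_mem_junta {t : ℕ} {F : Vec k → ℂ} (hF : F ∈ junta k t) :
    (fun w => (starRingEnd ℂ) (F w)) ∈ junta k t := by
  induction hF using Submodule.span_induction with
  | mem F hF =>
    obtain ⟨S, hS, hF⟩ := hF
    exact Submodule.subset_span ⟨S, hS, fun w w' h => by beta_reduce; rw [hF w w' h]⟩
  | zero => simpa using const_mem_junta 0 _
  | add F F' _ _ h h' =>
    convert Submodule.add_mem _ h h' using 2
    simp
  | smul c F _ h =>
    convert Submodule.smul_mem _ ((starRingEnd ℂ) c) h using 2
    simp

/-- The sign of the parity of the bits. -/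
def paritySign (w : Vec k) : ℂ := if ∑ h, w h = 0 then 1 else -1

lemma paritySign_flip (w : Vec k) (h : Fin k) :
    paritySign (w + Pi.single h 1) = - paritySign w := by
  simp only [paritySign, Pi.add_apply, Finset.sum_add_distrib, Finset.sum_pi_single',
    Finset.mem_univ, if_true]
  generalize ∑ h, w h = b
  revert b
  rw [Fin.forall_fin_two]
  simp

lemma sum_paritySign_mul {t : ℕ} (ht : t < k) {F : Vec k → ℂ} (hF : F ∈ junta k t) :
    ∑ w, paritySign w * F w = 0 := by
  induction hF using Submodule.span_induction with
  | mem F hF =>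
    obtain ⟨S, hS, hF⟩ := hF
    obtain ⟨h, hh⟩ : ∃ h, h ∉ S := by
      by_contra! hall
      have := Finset.card_le_card fun h (_ : h ∈ (Finset.univ : Finset (Fin k))) => hall h
      rw [Finset.card_univ, Fintype.card_fin] at this
      omega
    have h1 : ∑ w, paritySign w * F w = - ∑ w, paritySign w * F w := by
      conv_lhs => rw [← Equiv.sum_comp (Equiv.addRight (Pi.single h (1 : Fin 2) : Vec k))]
      rw [← Finset.sum_neg_distrib]
      refine Finset.sum_congr rfl fun w _ => ?_
      rw [Equiv.coe_addRight, paritySign_flip, hF (w + Pi.single h 1) w, neg_mul]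
      intro i hi
      have : i ≠ h := fun hih => hh (hih ▸ hi)
      simp [this]
    exact self_eq_neg.mp h1
  | zero => simp
  | add F F' _ _ h h' =>
    simp only [Pi.add_apply, mul_add, Finset.sum_add_distrib, h, h', add_zero]
  | smul c F _ h =>
    simp only [Pi.smul_apply, smul_eq_mul, mul_left_comm _ c, ← Finset.mul_sum, h, mul_zero]

end Junta

section QuantumStates

variable {ι : Type} [Fintype ι] [DecidableEq ι]

lemma oracleMatrix_mulVec {W : ℕ} (x : Input ι fun _ => 2) (v : QIdx ι (fun _ => 2) W → ℂ)
    (j : QIdx ι (fun _ => 2) W) :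
    (oracleMatrix W x).mulVec v j = v (⟨j.1.1, j.1.2 + x j.1.1⟩, j.2) := by
  obtain ⟨⟨i, a⟩, c⟩ := j
  have hadd : ∀ a b : Fin 2, a + b + b = a := by decide
  rw [Matrix.mulVec, dotProduct, Finset.sum_eq_single (⟨i, a + x i⟩, c)]
  · simp [oracleMatrix, hadd]
  · rintro ⟨⟨i', a'⟩, c'⟩ - hne
    simp only [oracleMatrix, Matrix.of_apply]
    rw [if_neg, zero_mul]
    rintro ⟨h1, h2⟩
    obtain ⟨rfl, h2⟩ := Sigma.mk.inj h2
    subst h1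
    rw [heq_iff_eq.mp h2, hadd] at hne
    exact hne rfl
  · simp

lemma sum_norm_sq_oracle {W : ℕ} (x : Input ι fun _ => 2) (v : QIdx ι (fun _ => 2) W → ℂ) :
    ∑ j, ‖(oracleMatrix W x).mulVec v j‖ ^ 2 = ∑ j, ‖v j‖ ^ 2 := by
  have hadd : ∀ a b : Fin 2, a + b + b = a := by decide
  let e : QIdx ι (fun _ => 2) W ≃ QIdx ι (fun _ => 2) W :=
    Function.Involutive.toPerm (fun j => (⟨j.1.1, j.1.2 + x j.1.1⟩, j.2)) fun j => by simp [hadd]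
  simp_rw [oracleMatrix_mulVec]
  exact Equiv.sum_comp e fun j => ‖v j‖ ^ 2

lemma sum_norm_sq_unitary {τ : Type} [Fintype τ] [DecidableEq τ] {U : Matrix τ τ ℂ}
    (hU : U ∈ Matrix.unitaryGroup τ ℂ) (v : τ → ℂ) :
    ∑ j, ‖U.mulVec v j‖ ^ 2 = ∑ j, ‖v j‖ ^ 2 := by
  have h1 : ∀ v : τ → ℂ, ((∑ j, ‖v j‖ ^ 2 : ℝ) : ℂ) = star v ⬝ᵥ v := by
    intro v
    push_cast
    exact Finset.sum_congr rfl fun j _ => (Complex.conj_mul' _).symm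
  have h2 : ((∑ j, ‖U.mulVec v j‖ ^ 2 : ℝ) : ℂ) = ((∑ j, ‖v j‖ ^ 2 : ℝ) : ℂ) := by
    rw [h1, h1, Matrix.star_mulVec, Matrix.dotProduct_mulVec, Matrix.vecMul_vecMul,
      ← Matrix.star_eq_conjTranspose, Matrix.mem_unitaryGroup_iff'.mp hU, Matrix.vecMul_one]
  exact_mod_cast h2

lemma sum_norm_sq_qProd (A : QAlg ι fun _ => 2) (x : Input ι fun _ => 2) (t : ℕ) :
    ∑ j, ‖(qProd A.U (oracleMatrix A.W x) t).mulVec A.init j‖ ^ 2 = 1 := by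
  induction t with
  | zero => rw [qProd, sum_norm_sq_unitary (A.unitary 0), A.init_norm]
  | succ t ih =>
    rw [qProd, ← Matrix.mulVec_mulVec, ← Matrix.mulVec_mulVec, sum_norm_sq_unitary (A.unitary _),
      sum_norm_sq_oracle, ih]

lemma QAlg.outProb_add_le (A : QAlg ι fun _ => 2) (x : Input ι fun _ => 2) :
    A.outProb x (some true) + A.outProb x (some false) ≤ 1 := by
  rw [← sum_norm_sq_qProd A x A.T, QAlg.outProb, QAlg.outProb, ← Finset.sum_add_distrib]
  refine Finset.sum_le_sum fun j _ => ?_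
  rcases A.out j with _ | _ | _
  · simp
  · simp [QAlg.finalState]
  · simp [QAlg.finalState]

variable {k : ℕ} {X : Vec k → Input ι fun _ => 2}

lemma qProd_mem_junta (hX : ∀ i, ∃ h, ∀ w w' : Vec k, w h = w' h → X w i = X w' i)
    (A : QAlg ι fun _ => 2) (t : ℕ) (j : QIdx ι (fun _ => 2) A.W) :
    (fun w => (qProd A.U (oracleMatrix A.W (X w)) t).mulVec A.init j) ∈ junta k t := by
  induction t generalizing j with
  | zero => exact const_mem_junta ((A.U 0).mulVec A.init j) _
  | succ t ih =>
    have h1 : ∀ j, (fun w => (oracleMatrix A.W (X w)).mulVec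
        ((qProd A.U (oracleMatrix A.W (X w)) t).mulVec A.init) j) ∈ junta k (t + 1) := by
      intro j
      have h2 : ∀ c : Fin 2, (fun w => if X w j.1.1 = c then (1 : ℂ) else 0) ∈ junta k 1 := by
        intro c
        obtain ⟨h, hh⟩ := hX j.1.1
        refine Submodule.subset_span ⟨{h}, by simp, fun w w' hw => ?_⟩
        beta_reduce
        rw [hh w w' (hw h (Finset.mem_singleton_self h))]
      have h3 : (fun w => (oracleMatrix A.W (X w)).mulVec
          ((qProd A.U (oracleMatrix A.W (X w)) t).mulVec A.init) j) =
          ∑ c : Fin 2, fun w => (qProd A.U (oracleMatrix A.W (X w)) t).mulVec A.init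
            (⟨j.1.1, j.1.2 + c⟩, j.2) * if X w j.1.1 = c then (1 : ℂ) else 0 := by
        ext w
        simp [oracleMatrix_mulVec]
      rw [h3]
      exact Submodule.sum_mem _ fun c _ => mul_mem_junta (ih _) (h2 c)
    have h4 : (fun w => (qProd A.U (oracleMatrix A.W (X w)) (t + 1)).mulVec A.init j) =
        ∑ j', A.U (t + 1) j j' • fun w => (oracleMatrix A.W (X w)).mulVec
          ((qProd A.U (oracleMatrix A.W (X w)) t).mulVec A.init) j' := by
      ext w
      rw [qProd, ← Matrix.mulVec_mulVec, ← Matrix.mulVec_mulVec, Matrix.mulVec, dotProduct,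
        Finset.sum_apply]
      rfl
    rw [h4]
    exact Submodule.sum_mem _ fun j' _ => Submodule.smul_mem _ _ (h1 j')

lemma outProb_mem_junta (hX : ∀ i, ∃ h, ∀ w w' : Vec k, w h = w' h → X w i = X w' i)
    (A : QAlg ι fun _ => 2) (v : Option Bool) :
    (fun w => (A.outProb (X w) v : ℂ)) ∈ junta k (A.T + A.T) := by
  have h1 : (fun w => (A.outProb (X w) v : ℂ)) = ∑ j, fun w =>
      if A.out j = v then (starRingEnd ℂ) (A.finalState (X w) j) * A.finalState (X w) j else 0 := by
    ext w
    rw [QAlg.outProb, Finset.sum_apply]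
    push_cast
    refine Finset.sum_congr rfl fun j _ => ?_
    split_ifs
    · rw [Complex.conj_mul']
      push_cast
      rfl
    · simp
  rw [h1]
  refine Submodule.sum_mem _ fun j _ => ?_
  split_ifs
  · exact mul_mem_junta (conj_mem_junta (qProd_mem_junta hX A A.T j)) (qProd_mem_junta hX A A.T j)
  · exact const_mem_junta _ _

/-- A quantum algorithm for parity needs at least half as many queries as there are bits. -/
lemma le_two_mul_of_parity (hX : ∀ i, ∃ h, ∀ w w' : Vec k, w h = w' h → X w i = X w' i)
    (A : QAlg ι fun _ => 2)
    (hA : ∀ w, 2 / 3 ≤ A.outProb (X w) (some (decide (∑ h, w h = 0)))) : k ≤ 2 * A.T := by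
  by_contra! hk
  have h1 : (fun w => (A.outProb (X w) (some true) : ℂ) - 1 / 2) ∈ junta k (A.T + A.T) :=
    Submodule.sub_mem _ (outProb_mem_junta hX A _) (const_mem_junta (1 / 2) _)
  have h2 := sum_paritySign_mul (by omega) h1
  have h3 : ∑ w : Vec k, (if ∑ h, w h = 0 then (1 : ℝ) else -1) *
      (A.outProb (X w) (some true) - 1 / 2) = 0 := by
    rw [← Complex.ofReal_eq_zero, ← h2]
    push_cast
    refine Finset.sum_congr rfl fun w _ => ?_
    rw [paritySign]
    split_ifs <;> norm_num
  refine absurd h3 (ne_of_gt (Finset.sum_pos (fun w _ => ?_) Finset.univ_nonempty))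
  have h4 := hA w
  have h5 := A.outProb_add_le (X w)
  by_cases hw : ∑ h, w h = 0
  · simp only [hw, decide_true, if_true] at h4 ⊢
    linarith
  · simp only [hw, decide_false, if_false] at h4 ⊢
    linarith

end QuantumStates

section FunctionLowerBound

variable {k : ℕ}

open Classical in
/-- A quantum algorithm for the function needs at least `k / 2` queries. -/
theorem le_two_mul_of_qAlg (hk : 2 ≤ k) {n : ℕ} {e : Idx k → Fin n}
    (he : Function.Injective e) {f : PartialFn (Fin n) fun _ => 2}
    (hf : ∀ z, f z = some (decide (Acc (z ∘ e)))) {A : QAlg (Fin n) fun _ => 2}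
    (hA : ∀ x b, f x = some b → 2 / 3 ≤ A.outProb x (some b)) : k ≤ 2 * A.T := by
  have : Nonempty (Idx k) := ⟨.inr (.inr ⟨0, by omega⟩)⟩
  let d : Fin n → Idx k := Function.invFun e
  have hde : d ∘ e = id := Function.invFun_comp he
  have hne : Nonempty (NZ k) := ⟨⟨fun _ => 1, fun h => one_ne_zero (congrFun h ⟨0, by omega⟩)⟩⟩
  let b : Fin (3 * k) → Bool := fun _ => false
  let x := foldTab (fun _ => 1) (fun _ => hne.some) b
  let ω : Hidden k := fun _ => (0, fun _ => 0)
  refine le_two_mul_of_parity (X := fun w => certIn x ω b w ∘ d) (fun i => ?_) A fun w => hA _ _ ?_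
  · rcases hd : d i with p | p | h
    · exact ⟨⟨0, by omega⟩, fun w w' _ => by simp [hd, certIn]⟩
    · exact ⟨⟨0, by omega⟩, fun w w' _ => by simp [hd, certIn]⟩
    · exact ⟨h, fun w w' hw => by simp [hd, certIn, hw]⟩
  · rw [hf, Function.comp_assoc, hde, Function.comp_id]
    simpa using acc_certIn ω (tabOK_foldTab _ _ b) w

end FunctionLowerBound
end QC

namespace QC

/-! ### The family of functions -/

section Family

lemma DTree.exists_eval_eq {n : ℕ} (f : PartialFn (Fin n) fun _ => 2) :
    ∃ T : DTree (Fin n) (fun _ => 2) (Option Bool), ∀ x, T.eval x = f x := by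
  suffices h : ∀ (S : Finset (Fin n)) (g : PartialFn (Fin n) fun _ => 2),
      (∀ x y, (∀ i ∈ S, x i = y i) → g x = g y) →
      ∃ T : DTree (Fin n) (fun _ => 2) (Option Bool), ∀ x, T.eval x = g x from
    h Finset.univ f fun x y hxy => congrArg f (funext fun i => hxy i (Finset.mem_univ i))
  intro S
  induction S using Finset.induction_on with
  | empty => exact fun g hg => ⟨.leaf (g fun _ => 0), fun x => hg _ _ (by simp)⟩
  | insert i S hi ih =>
    intro g hg
    choose T hT using fun a : Fin 2 => ih (fun x => g (Function.update x i a)) fun x y hxy =>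
      hg _ _ fun j hj => by
        by_cases hji : j = i
        · subst hji
          simp
        · simpa [hji] using hxy j ((Finset.mem_insert.mp hj).resolve_left hji)
    exact ⟨.node i T, fun x => by rw [DTree.eval, hT, Function.update_eq_self]⟩

lemma exists_randomized {n : ℕ} (f : PartialFn (Fin n) fun _ => 2) :
    ∃ μ : PMF (DTree (Fin n) (fun _ => 2) (Option Bool)), (∀ T ∈ μ.support, T.depth ≤ Rq f) ∧
      ∀ x b, f x = some b → 2 / 3 ≤ μ.toOuterMeasure {T | T.eval x = some b} := by
  refine Nat.sInf_mem (s := {d | ∃ μ : PMF (DTree (Fin n) (fun _ => 2) (Option Bool)),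
    (∀ T ∈ μ.support, T.depth ≤ d) ∧
    ∀ x b, f x = some b → 2 / 3 ≤ μ.toOuterMeasure {T | T.eval x = some b}}) ?_
  obtain ⟨T, hT⟩ := DTree.exists_eval_eq f
  refine ⟨T.depth, PMF.pure T, by simp, fun x b hb => ?_⟩
  rw [PMF.toOuterMeasure_pure_apply, if_pos (show T ∈ {T | T.eval x = some b} from (hT x).trans hb)]
  exact ENNReal.div_le_of_le_mul (by norm_num)

lemma Qq_const {n : ℕ} (hn : 0 < n) (b : Bool) :
    Qq (fun _ => some b : PartialFn (Fin n) fun _ => 2) = 0 := by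
  refine Nat.le_zero.mp (Nat.sInf_le ?_)
  let j : QIdx (Fin n) (fun _ => 2) 1 := (⟨⟨0, hn⟩, 0⟩, 0)
  refine ⟨⟨0, 1, fun _ => 1, fun _ => Submonoid.one_mem _, Pi.single j 1, ?_, fun _ => some b⟩,
    le_rfl, ?_⟩
  · rw [Finset.sum_eq_single j] <;> simp +contextual
  · rintro x b' ⟨⟩
    have h : ∑ i, ‖(Pi.single j 1 : QIdx (Fin n) (fun _ => 2) 1 → ℂ) i‖ ^ 2 = 1 := by
      rw [Finset.sum_eq_single j] <;> simp +contextual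
    simp only [QAlg.outProb, QAlg.finalState, qProd, Matrix.one_mulVec, if_true]
    rw [h]
    norm_num

lemma two_pow_le_card_idx {k : ℕ} (hk : 1 ≤ k) : 2 ^ k ≤ Fintype.card (Idx k) := by
  rw [← card_vec k]
  let p : Gad k × Vec k := ((⟨0, by omega⟩, 0, ⟨0, by omega⟩), 0)
  exact Fintype.card_le_of_injective (fun v => (.inl (p.1, p.2, v) : Idx k)) fun v v' h => by
    simpa using h

/-- The largest parameter for which the function fits into `n` bits. -/
def level (n : ℕ) : ℕ := Nat.findGreatest (fun k => Fintype.card (Idx k) ≤ n) n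

lemma card_idx_level {n : ℕ} (h : level n ≠ 0) : Fintype.card (Idx (level n)) ≤ n :=
  Nat.findGreatest_of_ne_zero (P := fun k => Fintype.card (Idx k) ≤ n) rfl h

lemma le_level {k n : ℕ} (hk : 1 ≤ k) (h : Fintype.card (Idx k) ≤ n) : k ≤ level n :=
  Nat.le_findGreatest ((Nat.lt_two_pow_self.le.trans (two_pow_le_card_idx hk)).trans h) h

open Classical in
/-- The function on `n` bits: the acceptance predicate of the largest parameter that fits. -/
noncomputable def sepFn (n : ℕ) : PartialFn (Fin n) fun _ => 2 := fun z => some <|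
  if h : 2 ≤ level n then
    decide (Acc (z ∘ Fin.castLE (card_idx_level (by omega)) ∘ Fintype.equivFin (Idx (level n))))
  else false

open Classical in
lemma sepFn_eq {n : ℕ} (h : 2 ≤ level n) : ∃ e : Idx (level n) → Fin n, Function.Injective e ∧
    ∀ z, sepFn n z = some (decide (Acc (z ∘ e))) :=
  ⟨_, (Fin.castLE_injective _).comp (Fintype.equivFin _).injective, fun z => by
    rw [sepFn, dif_pos h]⟩

lemma pos_of_two_le_level {n : ℕ} (h : 2 ≤ level n) : 0 < n := by
  have := two_pow_le_card_idx (k := level n) (by omega)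
  have := card_idx_level (n := n) (by omega)
  have := Nat.lt_two_pow_self (n := level n)
  omega

lemma Qq_sepFn_le {n : ℕ} (h : 2 ≤ level n) :
    Qq (sepFn n) ≤ 5101 * (level n ^ 3 * 2 ^ level n) := by
  obtain ⟨e, -, hf⟩ := sepFn_eq h
  exact Nat.sInf_le (exists_qAlg_acc (by omega) (pos_of_two_le_level h) e _ hf)

lemma level_le_Qq_sepFn {n : ℕ} (h : 2 ≤ level n) : level n ≤ 2 * Qq (sepFn n) := by
  obtain ⟨e, he, hf⟩ := sepFn_eq h
  obtain ⟨A, hA, hAf⟩ := Nat.sInf_mem (s := {d | ∃ A : QAlg (Fin n) fun _ => 2, A.T ≤ d ∧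
    ∀ x b, sepFn n x = some b → (2 : ℝ) / 3 ≤ A.outProb x (some b)})
    ⟨_, exists_qAlg_acc (by omega) (pos_of_two_le_level h) e _ hf⟩
  exact (le_two_mul_of_qAlg h he hf hAf).trans (Nat.mul_le_mul_left 2 hA)

lemma two_pow_le_Rq_sepFn {n : ℕ} (h : 2 ≤ level n) :
    ((2 : ℝ) ^ level n) ^ ((5 : ℝ) / 2) ≤ 147 * Rq (sepFn n) := by
  obtain ⟨e, he, hf⟩ := sepFn_eq h
  obtain ⟨μ, hμ, hμf⟩ := exists_randomized (sepFn n)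
  exact pow_le_mul_of_randomized h he hf hμ hμf

lemma level_le_log {n : ℕ} (h : 2 ≤ level n) : (level n : ℝ) ≤ 2 * Real.log n := by
  have h1 : (2 : ℝ) ^ level n ≤ n := by
    exact_mod_cast (two_pow_le_card_idx (by omega)).trans (card_idx_level (by omega))
  have h2 := Real.log_le_log (by positivity) h1
  rw [Real.log_pow] at h2
  have h3 := Real.log_two_gt_d9
  have h4 : (0 : ℝ) ≤ level n := by positivity
  nlinarith

lemma Qq_sepFn_rpow_le {n : ℕ} (h : 2 ≤ level n) : (Qq (sepFn n) : ℝ) ^ ((5 : ℝ) / 2) ≤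
    5101 ^ ((5 : ℝ) / 2) * 2 ^ 8 * 147 * Real.log n ^ 8 * Rq (sepFn n) := by
  have hk : (1 : ℝ) ≤ level n := by exact_mod_cast (by omega : 1 ≤ level n)
  have h1 : (Qq (sepFn n) : ℝ) ≤ 5101 * ((level n : ℝ) ^ 3 * 2 ^ level n) := by
    exact_mod_cast Qq_sepFn_le h
  have h2 : ((level n : ℝ) ^ 3) ^ ((5 : ℝ) / 2) ≤ 2 ^ 8 * Real.log n ^ 8 := by
    rw [← Real.rpow_natCast, ← Real.rpow_mul (by positivity)]
    calc (level n : ℝ) ^ (((3 : ℕ) : ℝ) * (5 / 2)) ≤ (level n : ℝ) ^ ((8 : ℕ) : ℝ) :=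
          Real.rpow_le_rpow_of_exponent_le hk (by norm_num)
      _ ≤ (2 * Real.log n) ^ 8 := by
          rw [Real.rpow_natCast]
          exact pow_le_pow_left₀ (by positivity) (level_le_log h) 8
      _ = 2 ^ 8 * Real.log n ^ 8 := mul_pow _ _ _
  calc (Qq (sepFn n) : ℝ) ^ ((5 : ℝ) / 2)
      ≤ (5101 * ((level n : ℝ) ^ 3 * 2 ^ level n)) ^ ((5 : ℝ) / 2) :=
        Real.rpow_le_rpow (by positivity) h1 (by norm_num)
    _ = 5101 ^ ((5 : ℝ) / 2) * (((level n : ℝ) ^ 3) ^ ((5 : ℝ) / 2) *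
          ((2 : ℝ) ^ level n) ^ ((5 : ℝ) / 2)) := by
        rw [Real.mul_rpow (by positivity) (by positivity),
          Real.mul_rpow (by positivity) (by positivity)]
    _ ≤ 5101 ^ ((5 : ℝ) / 2) * ((2 ^ 8 * Real.log n ^ 8) * (147 * Rq (sepFn n))) := by
        gcongr
        exact two_pow_le_Rq_sepFn h
    _ = _ := by ring

end Family
end QC

/-- There is a family of total Boolean functions with
`R(f) = Ω̃(Q(f)^{2.5})`. -/
theorem randomized_vs_quantum_power_two_point_five :
    ∃ f : ∀ n : ℕ, QC.PartialFn (Fin n) (fun _ => 2),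
      (∀ n, QC.TotalFn (f n)) ∧
      Filter.Tendsto (fun n => QC.Qq (f n)) Filter.atTop Filter.atTop ∧
      ∃ (C : ℝ) (e : ℕ), 0 < C ∧ ∀ n : ℕ, 2 ≤ n →
        (QC.Qq (f n) : ℝ) ^ ((5 : ℝ) / 2) ≤ C * (Real.log n) ^ e * (QC.Rq (f n) : ℝ) := by
  refine ⟨QC.sepFn, fun n x => Option.some_ne_none _, ?_,
    5101 ^ ((5 : ℝ) / 2) * 2 ^ 8 * 147, 8, by positivity, fun n hn => ?_⟩
  · refine Filter.tendsto_atTop.mpr fun m => ?_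
    filter_upwards [Filter.eventually_ge_atTop (Fintype.card (QC.Idx (2 * m + 2)))] with n hn
    have h1 := QC.le_level (by omega) hn
    have h2 := QC.level_le_Qq_sepFn (n := n) (by omega)
    omega
  · by_cases h : 2 ≤ QC.level n
    · exact QC.Qq_sepFn_rpow_le h
    · have h1 : QC.sepFn n = fun _ => some false := funext fun z => by rw [QC.sepFn, dif_neg h]
      rw [h1, QC.Qq_const (by omega), Nat.cast_zero, Real.zero_rpow (by norm_num)]
      have := Real.log_nonneg (show (1 : ℝ) ≤ n by exact_mod_cast (by omega : 1 ≤ n))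
      positivity
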